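/- Let n ≥ 2 and 1 < m < n. There exists a constant C > 0 such that for all ζ ∈ ℂ∖ℝ and all Schwartz functions f, g on ℝⁿ, |( ⟨D_x⟩^{m-1} (ζ − p(D_x))^{-1} f , g )_{L²(ℝⁿ)}| ≤ C ‖⟨x⟩^{m/2} f‖_{L²(ℝⁿ)} ‖⟨x⟩^{m/2} g‖_{L²(ℝⁿ)}; in particular the supremum over ζ ∈ ℂ∖ℝ of the left-hand side is finite and bounded by the right-hand side. -/

import Mathlib

open MeasureTheory Real Complex RealInnerProductSpace

noncomputable section

/-- Fourier transform with convention `(2π)^(-n/2) ∫ e^(-ix·ξ) f(x) dx`. -/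
def FT (n : ℕ) (f : EuclideanSpace ℝ (Fin n) → ℂ) (ξ : EuclideanSpace ℝ (Fin n)) : ℂ :=
  ((2 * π) ^ (-(n : ℝ) / 2) : ℝ) •
    ∫ x : EuclideanSpace ℝ (Fin n), Complex.exp (-Complex.I * ((⟪x, ξ⟫ : ℝ) : ℂ)) * f x

/-- Inverse Fourier transform. -/
def IFT (n : ℕ) (F : EuclideanSpace ℝ (Fin n) → ℂ) (x : EuclideanSpace ℝ (Fin n)) : ℂ :=
  ((2 * π) ^ (-(n : ℝ) / 2) : ℝ) •
    ∫ ξ : EuclideanSpace ℝ (Fin n), Complex.exp (Complex.I * ((⟪x, ξ⟫ : ℝ) : ℂ)) * F ξ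

/-- Fourier multiplier with symbol `q`: `q(D_x) f = IFT (q · FT f)`. -/
def mult (n : ℕ) (q : EuclideanSpace ℝ (Fin n) → ℂ) (f : EuclideanSpace ℝ (Fin n) → ℂ) :
    EuclideanSpace ℝ (Fin n) → ℂ :=
  IFT n fun ξ => q ξ * FT n f ξ

/-- The scale-`μ` Sobolev energy on `[1/2, 3/2]` of a function together with its derivative. -/
def energy (μ : ℝ) (u u' : ℝ → ℂ) : ℝ :=
  ∫ t in (1 / 2 : ℝ)..(3 / 2), (μ * ‖u t‖ ^ 2 + μ⁻¹ * ‖u' t‖ ^ 2)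

lemma energy_intervalIntegrable {μ : ℝ} {u u' : ℝ → ℂ} {a b : ℝ}
    (hu : ContinuousOn u (Set.Icc (1 / 2) (3 / 2)))
    (hu' : ContinuousOn u' (Set.Icc (1 / 2) (3 / 2)))
    (ha : a ∈ Set.Icc (1 / 2 : ℝ) (3 / 2)) (hb : b ∈ Set.Icc (1 / 2 : ℝ) (3 / 2)) :
    IntervalIntegrable (fun t => μ * ‖u t‖ ^ 2 + μ⁻¹ * ‖u' t‖ ^ 2) volume a b := by
  have hs : Set.uIcc a b ⊆ Set.Icc (1 / 2) (3 / 2) := Set.uIcc_subset_Icc ha hb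
  apply ContinuousOn.intervalIntegrable
  exact (continuousOn_const.mul ((hu.mono hs).norm.pow 2)).add
    (continuousOn_const.mul ((hu'.mono hs).norm.pow 2))

lemma abs_integral_le_energy {μ : ℝ} (hμ : 0 < μ) {u u' : ℝ → ℂ} {a b : ℝ}
    (hu : ContinuousOn u (Set.Icc (1 / 2) (3 / 2)))
    (hu' : ContinuousOn u' (Set.Icc (1 / 2) (3 / 2)))
    (ha : a ∈ Set.Icc (1 / 2 : ℝ) (3 / 2)) (hb : b ∈ Set.Icc (1 / 2 : ℝ) (3 / 2)) :
    |∫ t in a..b, (μ * ‖u t‖ ^ 2 + μ⁻¹ * ‖u' t‖ ^ 2)| ≤ energy μ u u' := by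
  have h : Set.uIoc a b ⊆ Set.uIoc (1 / 2 : ℝ) (3 / 2) := by
    rw [Set.uIoc_of_le (by norm_num : (1 / 2 : ℝ) ≤ 3 / 2)]
    intro t ht
    rw [Set.mem_uIoc] at ht
    rcases ht with ht | ht
    · exact ⟨ha.1.trans_lt ht.1, ht.2.trans hb.2⟩
    · exact ⟨hb.1.trans_lt ht.1, ht.2.trans ha.2⟩
  have := intervalIntegral.abs_integral_mono_interval (μ := volume)
    (f := fun t => μ * ‖u t‖ ^ 2 + μ⁻¹ * ‖u' t‖ ^ 2) h
    (Filter.Eventually.of_forall fun t => by positivity)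
    (energy_intervalIntegrable hu hu' (by norm_num) (by norm_num))
  refine this.trans (le_of_eq (abs_of_nonneg ?_))
  exact intervalIntegral.integral_nonneg (by norm_num) fun t _ => by positivity

lemma energy_nonneg {μ : ℝ} (hμ : 0 < μ) (u u' : ℝ → ℂ) : 0 ≤ energy μ u u' :=
  intervalIntegral.integral_nonneg (by norm_num) fun t _ => by positivity

/-- One-dimensional Sobolev bound for the supremum. -/
lemma norm_sq_le_energy {μ : ℝ} (hμ : 1 ≤ μ) {u u' : ℝ → ℂ}
    (hd : ∀ t ∈ Set.Icc (1 / 2 : ℝ) (3 / 2), HasDerivAt u (u' t) t)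
    (hu' : ContinuousOn u' (Set.Icc (1 / 2) (3 / 2)))
    {t : ℝ} (ht : t ∈ Set.Icc (1 / 2 : ℝ) (3 / 2)) :
    ‖u t‖ ^ 2 ≤ 2 * energy μ u u' := by
  have hμ0 : 0 < μ := by linarith
  have hu : ContinuousOn u (Set.Icc (1 / 2) (3 / 2)) :=
    fun x hx => (hd x hx).continuousAt.continuousWithinAt
  have hcmp : ∀ r ∈ Set.Icc (1 / 2 : ℝ) (3 / 2), ‖u t‖ ^ 2 ≤ ‖u r‖ ^ 2 + energy μ u u' := by
    intro r hr
    have hs : Set.uIcc r t ⊆ Set.Icc (1 / 2) (3 / 2) := Set.uIcc_subset_Icc hr ht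
    have hftc : ∫ x in r..t, 2 * ⟪u x, u' x⟫ = ‖u t‖ ^ 2 - ‖u r‖ ^ 2 := by
      apply intervalIntegral.integral_eq_sub_of_hasDerivAt
        (f := fun x => ‖u x‖ ^ 2)
      · intro x hx
        exact (hd x (hs hx)).norm_sq
      · apply ContinuousOn.intervalIntegrable
        exact continuousOn_const.mul ((hu.mono hs).inner (hu'.mono hs))
    have hle : |∫ x in r..t, 2 * ⟪u x, u' x⟫| ≤ energy μ u u' := by
      refine le_trans ?_ (abs_integral_le_energy hμ0 hu hu' hr ht)
      rw [← Real.norm_eq_abs]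
      apply intervalIntegral.norm_integral_le_abs_of_norm_le
      · refine Filter.Eventually.of_forall fun x => ?_
        have h1 := abs_real_inner_le_norm (u x) (u' x)
        rw [Real.norm_eq_abs, abs_mul, abs_two]
        have h2 : 2 * (‖u x‖ * ‖u' x‖) ≤ μ * ‖u x‖ ^ 2 + μ⁻¹ * ‖u' x‖ ^ 2 := by
          have := mul_nonneg (inv_pos.2 hμ0).le (sq_nonneg (μ * ‖u x‖ - ‖u' x‖))
          have e : μ⁻¹ * (μ * ‖u x‖ - ‖u' x‖) ^ 2 =
            μ * ‖u x‖ ^ 2 + μ⁻¹ * ‖u' x‖ ^ 2 - 2 * (‖u x‖ * ‖u' x‖) := by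
            field_simp; ring
          linarith
        linarith
      · exact energy_intervalIntegrable hu hu' hr ht
    have := abs_le.1 hle
    linarith [this.2]
  have hI : ∫ r in (1 / 2 : ℝ)..(3 / 2), ‖u t‖ ^ 2 ≤
      ∫ r in (1 / 2 : ℝ)..(3 / 2), (‖u r‖ ^ 2 + energy μ u u') := by
    apply intervalIntegral.integral_mono_on (by norm_num)
    · simp
    · apply ContinuousOn.intervalIntegrable
      rw [Set.uIcc_of_le (by norm_num)]
      exact (hu.norm.pow 2).add continuousOn_const
    · exact fun r hr => hcmp r hr
  have hui : IntervalIntegrable (fun r => ‖u r‖ ^ 2) volume (1 / 2) (3 / 2) := by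
    apply ContinuousOn.intervalIntegrable
    rw [Set.uIcc_of_le (by norm_num)]
    exact hu.norm.pow 2
  rw [intervalIntegral.integral_add hui (by simp)] at hI
  have h3 : ∫ r in (1 / 2 : ℝ)..(3 / 2), ‖u r‖ ^ 2 ≤ energy μ u u' := by
    apply intervalIntegral.integral_mono_on (by norm_num) hui
    · exact energy_intervalIntegrable hu hu' (by norm_num) (by norm_num)
    · intro r _
      have : 0 ≤ μ⁻¹ * ‖u' r‖ ^ 2 := by positivity
      nlinarith [sq_nonneg ‖u r‖]
  simp only [intervalIntegral.integral_const, smul_eq_mul] at hI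
  norm_num at hI
  linarith

lemma sq_le_mul_of_forall_le {x A B : ℝ} (hx : 0 ≤ x) (hA : 0 ≤ A) (hB : 0 ≤ B)
    (h : ∀ τ : ℝ, 0 < τ → 2 * x ≤ τ * A + τ⁻¹ * B) : x ^ 2 ≤ A * B := by
  rcases hA.eq_or_lt with rfl | hA
  · rcases hx.eq_or_lt with rfl | hx
    · simp
    · have := h ((B + 1) / x) (by positivity)
      rw [inv_div, mul_zero, zero_add, div_mul_eq_mul_div, le_div_iff₀ (by positivity)] at this
      nlinarith
  · rcases hx.eq_or_lt with rfl | hx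
    · simpa using mul_nonneg hA.le hB
    · have := h (x / A) (by positivity)
      rw [inv_div, div_mul_cancel₀ _ hA.ne'] at this
      have h2 : x ≤ A / x * B := by linarith
      rw [div_mul_eq_mul_div, le_div_iff₀ hx] at h2
      nlinarith

/-- Hölder continuity of exponent one half from the energy. -/
lemma norm_sub_sq_le_energy {μ : ℝ} (hμ : 1 ≤ μ) {u u' : ℝ → ℂ}
    (hd : ∀ t ∈ Set.Icc (1 / 2 : ℝ) (3 / 2), HasDerivAt u (u' t) t)
    (hu' : ContinuousOn u' (Set.Icc (1 / 2) (3 / 2)))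
    {t : ℝ} (ht : t ∈ Set.Icc (1 / 2 : ℝ) (3 / 2)) :
    ‖u t - u 1‖ ^ 2 ≤ energy μ u u' * (μ * |t - 1|) := by
  have hμ0 : 0 < μ := by linarith
  have hu : ContinuousOn u (Set.Icc (1 / 2) (3 / 2)) :=
    fun x hx => (hd x hx).continuousAt.continuousWithinAt
  have h1 : (1 : ℝ) ∈ Set.Icc (1 / 2 : ℝ) (3 / 2) := by norm_num
  have hs : Set.uIcc 1 t ⊆ Set.Icc (1 / 2) (3 / 2) := Set.uIcc_subset_Icc h1 ht
  refine sq_le_mul_of_forall_le (norm_nonneg _) (energy_nonneg hμ0 u u') (by positivity) ?_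
  intro τ hτ
  have hftc : ∫ x in (1 : ℝ)..t, u' x = u t - u 1 :=
    intervalIntegral.integral_eq_sub_of_hasDerivAt (fun x hx => hd x (hs hx))
      (hu'.mono hs).intervalIntegrable
  have hb : ‖∫ x in (1 : ℝ)..t, u' x‖ ≤
      |∫ x in (1 : ℝ)..t, (τ / 2 * (μ * ‖u x‖ ^ 2 + μ⁻¹ * ‖u' x‖ ^ 2) + τ⁻¹ * μ / 2)| := by
    apply intervalIntegral.norm_integral_le_abs_of_norm_le
    · refine Filter.Eventually.of_forall fun x => ?_
      have e : τ / 2 * (μ * ‖u x‖ ^ 2 + μ⁻¹ * ‖u' x‖ ^ 2) + τ⁻¹ * μ / 2 - ‖u' x‖ =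
        τ / 2 * (μ * ‖u x‖ ^ 2) + μ⁻¹ * τ⁻¹ / 2 * (τ * ‖u' x‖ - μ) ^ 2 := by
        field_simp; ring
      have : 0 ≤ τ / 2 * (μ * ‖u x‖ ^ 2) + μ⁻¹ * τ⁻¹ / 2 * (τ * ‖u' x‖ - μ) ^ 2 := by positivity
      linarith
    · exact ((energy_intervalIntegrable hu hu' h1 ht).const_mul _).add (by simp)
  rw [hftc, intervalIntegral.integral_add
    ((energy_intervalIntegrable hu hu' h1 ht).const_mul _) (by simp),
    intervalIntegral.integral_const_mul, intervalIntegral.integral_const, smul_eq_mul] at hb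
  have h2 := abs_add_le (τ / 2 * ∫ x in (1 : ℝ)..t, (μ * ‖u x‖ ^ 2 + μ⁻¹ * ‖u' x‖ ^ 2))
    ((t - 1) * (τ⁻¹ * μ / 2))
  have h3 := abs_integral_le_energy hμ0 hu hu' h1 ht
  rw [abs_mul, abs_mul, abs_of_pos (by positivity : 0 < τ / 2),
    abs_of_pos (by positivity : 0 < τ⁻¹ * μ / 2)] at h2
  have h4 := mul_le_mul_of_nonneg_left h3 (by positivity : 0 ≤ τ / 2)
  nlinarith

/-- Uniform bound for the truncated principal value integral. -/
lemma norm_integral_inv_sub_le {z : ℂ} (hz : z.re = 1) (hz' : z.im ≠ 0) (δ : ℝ) :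
    ‖∫ t in (1 - δ)..(1 + δ), (z - (t : ℂ))⁻¹‖ ≤ 2 * π := by
  have hslit : ∀ t : ℝ, z - (t : ℂ) ∈ Complex.slitPlane := fun t => by
    rw [Complex.mem_slitPlane_iff]; right; simpa using hz'
  have hftc : ∫ t in (1 - δ)..(1 + δ), (z - (t : ℂ))⁻¹ =
      -Complex.log (z - ((1 + δ : ℝ) : ℂ)) - -Complex.log (z - ((1 - δ : ℝ) : ℂ)) := by
    apply intervalIntegral.integral_eq_sub_of_hasDerivAt
      (f := fun t : ℝ => -Complex.log (z - (t : ℂ)))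
    · intro t _
      have h1 : HasDerivAt (fun t : ℝ => z - (t : ℂ)) (-1) t := by
        simpa using (Complex.ofRealCLM.hasDerivAt (x := t)).const_sub z
      have := (h1.clog_real (hslit t)).neg
      convert! this using 1
      rw [neg_div, neg_neg, one_div]
    · apply Continuous.intervalIntegrable
      apply Continuous.inv₀ (by fun_prop)
      intro t
      exact Complex.slitPlane_ne_zero (hslit t)
  have hn : ‖z - ((1 + δ : ℝ) : ℂ)‖ = ‖z - ((1 - δ : ℝ) : ℂ)‖ := by
    rw [← sq_eq_sq₀ (norm_nonneg _) (norm_nonneg _), Complex.sq_norm, Complex.sq_norm,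
      Complex.normSq_apply, Complex.normSq_apply]
    simp [hz]
  rw [hftc]
  have : -Complex.log (z - ((1 + δ : ℝ) : ℂ)) - -Complex.log (z - ((1 - δ : ℝ) : ℂ)) =
    ((Complex.arg (z - ((1 - δ : ℝ) : ℂ)) - Complex.arg (z - ((1 + δ : ℝ) : ℂ)) : ℝ) : ℂ) * I := by
    simp only [Complex.log, hn]
    push_cast
    ring
  rw [this, norm_mul, Complex.norm_I, mul_one, Complex.norm_real, Real.norm_eq_abs]
  have h1 := Complex.abs_arg_le_pi (z - ((1 - δ : ℝ) : ℂ))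
  have h2 := Complex.abs_arg_le_pi (z - ((1 + δ : ℝ) : ℂ))
  refine (abs_sub _ _).trans ?_
  linarith

lemma norm_inv_sub_ofReal_le {z : ℂ} (hz : z.re = 1) {t : ℝ} (ht : t ≠ 1) :
    ‖(z - (t : ℂ))⁻¹‖ ≤ |t - 1|⁻¹ := by
  rw [norm_inv]
  have h : |t - 1| ≤ ‖z - (t : ℂ)‖ := by
    have := Complex.abs_re_le_norm (z - (t : ℂ))
    simp only [Complex.sub_re, Complex.ofReal_re, hz] at this
    rwa [abs_sub_comm]
  exact inv_anti₀ (abs_pos.2 (sub_ne_zero.2 ht)) h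

lemma integral_inv_sq_left {δ : ℝ} (hδ : 0 < δ) (hδ' : δ ≤ 1 / 2) :
    IntervalIntegrable (fun t : ℝ => ((t - 1) ^ 2)⁻¹) volume (1 / 2) (1 - δ) ∧
    ∫ t in (1 / 2 : ℝ)..(1 - δ), ((t - 1) ^ 2)⁻¹ ≤ δ⁻¹ := by
  have hs : ∀ t ∈ Set.uIcc (1 / 2 : ℝ) (1 - δ), t - 1 ≠ 0 := by
    intro t ht
    rw [Set.uIcc_of_le (by linarith)] at ht
    linarith [ht.2]
  have hi : IntervalIntegrable (fun t : ℝ => ((t - 1) ^ 2)⁻¹) volume (1 / 2) (1 - δ) := by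
    apply ContinuousOn.intervalIntegrable
    exact ContinuousOn.inv₀ (by fun_prop) fun t ht => pow_ne_zero 2 (hs t ht)
  refine ⟨hi, ?_⟩
  rw [intervalIntegral.integral_eq_sub_of_hasDerivAt (f := fun t => -(t - 1)⁻¹) _ hi]
  · norm_num
  · intro t ht
    have := (((hasDerivAt_id t).sub_const 1).inv (hs t ht)).neg
    convert! this using 1
    simp [neg_div]

lemma integral_inv_sq_right {δ : ℝ} (hδ : 0 < δ) (hδ' : δ ≤ 1 / 2) :
    IntervalIntegrable (fun t : ℝ => ((t - 1) ^ 2)⁻¹) volume (1 + δ) (3 / 2) ∧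
    ∫ t in (1 + δ)..(3 / 2 : ℝ), ((t - 1) ^ 2)⁻¹ ≤ δ⁻¹ := by
  have hs : ∀ t ∈ Set.uIcc (1 + δ) (3 / 2 : ℝ), t - 1 ≠ 0 := by
    intro t ht
    rw [Set.uIcc_of_le (by linarith)] at ht
    linarith [ht.1]
  have hi : IntervalIntegrable (fun t : ℝ => ((t - 1) ^ 2)⁻¹) volume (1 + δ) (3 / 2) := by
    apply ContinuousOn.intervalIntegrable
    exact ContinuousOn.inv₀ (by fun_prop) fun t ht => pow_ne_zero 2 (hs t ht)
  refine ⟨hi, ?_⟩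
  rw [intervalIntegral.integral_eq_sub_of_hasDerivAt (f := fun t => -(t - 1)⁻¹) _ hi]
  · norm_num
  · intro t ht
    have := (((hasDerivAt_id t).sub_const 1).inv (hs t ht)).neg
    convert! this using 1
    simp [neg_div]

lemma integral_rpow_neg_half_right {δ : ℝ} (hδ : 0 < δ) :
    IntervalIntegrable (fun t : ℝ => |t - 1| ^ (-1 / 2 : ℝ)) volume 1 (1 + δ) ∧
    ∫ t in (1 : ℝ)..(1 + δ), |t - 1| ^ (-1 / 2 : ℝ) = 2 * √δ := by
  have h0 : IntervalIntegrable (fun t : ℝ => t ^ (-1 / 2 : ℝ)) volume 0 δ :=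
    intervalIntegral.intervalIntegrable_rpow' (by norm_num)
  have hE : Set.EqOn (fun t : ℝ => (t - 1) ^ (-1 / 2 : ℝ)) (fun t => |t - 1| ^ (-1 / 2 : ℝ))
      (Set.uIcc 1 (1 + δ)) := by
    intro t ht
    rw [Set.uIcc_of_le (by linarith)] at ht
    simp only
    rw [abs_of_nonneg (by linarith [ht.1])]
  have h1 := h0.comp_sub_right 1
  rw [zero_add, add_comm δ 1] at h1
  refine ⟨h1.congr (hE.mono Set.uIoc_subset_uIcc), ?_⟩
  rw [← intervalIntegral.integral_congr hE,
    intervalIntegral.integral_comp_sub_right (fun t => t ^ (-1 / 2 : ℝ)),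
    integral_rpow (Or.inl (by norm_num))]
  norm_num [Real.sqrt_eq_rpow]
  ring

lemma integral_rpow_neg_half_left {δ : ℝ} (hδ : 0 < δ) :
    IntervalIntegrable (fun t : ℝ => |t - 1| ^ (-1 / 2 : ℝ)) volume (1 - δ) 1 ∧
    ∫ t in (1 - δ)..(1 : ℝ), |t - 1| ^ (-1 / 2 : ℝ) = 2 * √δ := by
  have h := integral_rpow_neg_half_right hδ
  have e : (fun t : ℝ => |2 - t - 1| ^ (-1 / 2 : ℝ)) = fun t => |t - 1| ^ (-1 / 2 : ℝ) := by
    funext t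
    rw [show 2 - t - 1 = -(t - 1) by ring, abs_neg]
  constructor
  · have := (h.1.comp_sub_left 2).symm
    rw [e] at this
    convert! this using 1 <;> ring
  · have := intervalIntegral.integral_comp_sub_left (a := 1 - δ) (b := 1)
      (fun t => |t - 1| ^ (-1 / 2 : ℝ)) 2
    rw [e] at this
    rw [this, ← h.2]
    congr 1 <;> ring

/-- Uniform bound for the singular bilinear form on one ray, when the scale of the first function
is the finer one. -/
lemma norm_integral_inv_sub_mul_le_of_le {z : ℂ} (hz : z.re = 1) (hz' : z.im ≠ 0)
    {μ ν : ℝ} (hν : 1 ≤ ν) (hμν : ν ≤ μ) {u u' v v' : ℝ → ℂ}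
    (hu : ∀ t ∈ Set.Icc (1 / 2 : ℝ) (3 / 2), HasDerivAt u (u' t) t)
    (hu' : ContinuousOn u' (Set.Icc (1 / 2) (3 / 2)))
    (hv : ∀ t ∈ Set.Icc (1 / 2 : ℝ) (3 / 2), HasDerivAt v (v' t) t)
    (hv' : ContinuousOn v' (Set.Icc (1 / 2) (3 / 2))) :
    ‖∫ t in (1 / 2 : ℝ)..(3 / 2), (z - (t : ℂ))⁻¹ * (u t * (starRingEnd ℂ) (v t))‖ ≤
      (4 * π + 20) * (energy μ u u' + energy ν v v') := by
  have hμ : 1 ≤ μ := hν.trans hμν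
  have hμ0 : 0 < μ := by linarith
  have hν0 : 0 < ν := by linarith
  set Eu := energy μ u u' with hEu
  set Ev := energy ν v v' with hEv
  have hEu0 : 0 ≤ Eu := energy_nonneg hμ0 u u'
  have hEv0 : 0 ≤ Ev := energy_nonneg hν0 v v'
  set δ := 1 / (2 * μ) with hδdef
  have hδ : 0 < δ := by positivity
  have hδ' : δ ≤ 1 / 2 := by
    rw [hδdef, div_le_div_iff₀ (by positivity) (by norm_num)]; linarith
  have hδinv : δ⁻¹ = 2 * μ := by rw [hδdef, one_div, inv_inv]
  have huc : ContinuousOn u (Set.Icc (1 / 2) (3 / 2)) :=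
    fun x hx => (hu x hx).continuousAt.continuousWithinAt
  have hvc : ContinuousOn v (Set.Icc (1 / 2) (3 / 2)) :=
    fun x hx => (hv x hx).continuousAt.continuousWithinAt
  have hne : ∀ t : ℝ, z - (t : ℂ) ≠ 0 := fun t h => hz' (by
    have := congrArg Complex.im h; simpa using this)
  set K : ℝ → ℂ := fun t => (z - (t : ℂ))⁻¹ with hK
  have hKc : Continuous K := Continuous.inv₀ (by fun_prop) hne
  set Φ : ℝ → ℂ := fun t => u t * (starRingEnd ℂ) (v t) with hΦ
  have hΦc : ContinuousOn Φ (Set.Icc (1 / 2) (3 / 2)) :=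
    huc.mul (Complex.continuous_conj.comp_continuousOn hvc)
  have hint : ∀ {a b : ℝ}, a ∈ Set.Icc (1 / 2 : ℝ) (3 / 2) → b ∈ Set.Icc (1 / 2 : ℝ) (3 / 2) →
      IntervalIntegrable (fun t => K t * Φ t) volume a b := fun ha hb =>
    (hKc.continuousOn.mul (hΦc.mono (Set.uIcc_subset_Icc ha hb))).intervalIntegrable
  have m0 : (1 / 2 : ℝ) ∈ Set.Icc (1 / 2 : ℝ) (3 / 2) := by norm_num
  have m1 : 1 - δ ∈ Set.Icc (1 / 2 : ℝ) (3 / 2) := ⟨by linarith, by linarith⟩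
  have mc : (1 : ℝ) ∈ Set.Icc (1 / 2 : ℝ) (3 / 2) := by norm_num
  have m2 : 1 + δ ∈ Set.Icc (1 / 2 : ℝ) (3 / 2) := ⟨by linarith, by linarith⟩
  have m3 : (3 / 2 : ℝ) ∈ Set.Icc (1 / 2 : ℝ) (3 / 2) := by norm_num
  have hsplit : ∫ t in (1 / 2 : ℝ)..(3 / 2), K t * Φ t =
      (∫ t in (1 / 2 : ℝ)..(1 - δ), K t * Φ t) + (∫ t in (1 - δ)..(1 + δ), K t * Φ t)
        + ∫ t in (1 + δ)..(3 / 2 : ℝ), K t * Φ t := by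
    rw [intervalIntegral.integral_add_adjacent_intervals (hint m0 m1) (hint m1 m2),
      intervalIntegral.integral_add_adjacent_intervals (hint m0 m2) (hint m2 m3)]
  have hout : ∀ t ∈ Set.Icc (1 / 2 : ℝ) (3 / 2), t ≠ 1 → ‖K t * Φ t‖ ≤
      1 / 2 * (μ * ‖u t‖ ^ 2 + μ⁻¹ * ‖u' t‖ ^ 2) + μ⁻¹ * Ev * ((t - 1) ^ 2)⁻¹ := by
    intro t ht ht1
    have hv2 : ‖v t‖ ^ 2 ≤ 2 * Ev := norm_sq_le_energy hν hv hv' ht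
    have hk := norm_inv_sub_ofReal_le hz ht1
    set d := |t - 1|⁻¹ with hd
    have hd0 : 0 ≤ d := by positivity
    have hdd : ((t - 1) ^ 2)⁻¹ = d ^ 2 := by rw [hd, inv_pow, sq_abs]
    have h1 : ‖K t * Φ t‖ ≤ d * (‖u t‖ * ‖v t‖) := by
      rw [norm_mul, hΦ, norm_mul, RCLike.norm_conj]
      exact mul_le_mul_of_nonneg_right hk (by positivity)
    have h2 : d * (‖u t‖ * ‖v t‖) ≤ 1 / 2 * (μ * ‖u t‖ ^ 2) + 1 / 2 * (μ⁻¹ * d ^ 2 * ‖v t‖ ^ 2) := by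
      have e : 1 / 2 * (μ * ‖u t‖ ^ 2) + 1 / 2 * (μ⁻¹ * d ^ 2 * ‖v t‖ ^ 2) - d * (‖u t‖ * ‖v t‖) =
        1 / 2 * μ⁻¹ * (μ * ‖u t‖ - d * ‖v t‖) ^ 2 := by field_simp; ring
      have : 0 ≤ 1 / 2 * μ⁻¹ * (μ * ‖u t‖ - d * ‖v t‖) ^ 2 := by positivity
      linarith
    have h3 : μ⁻¹ * d ^ 2 * ‖v t‖ ^ 2 ≤ μ⁻¹ * d ^ 2 * (2 * Ev) :=
      mul_le_mul_of_nonneg_left hv2 (by positivity)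
    have h4 : 0 ≤ μ⁻¹ * ‖u' t‖ ^ 2 := by positivity
    rw [hdd]
    linarith
  have houtI : ∀ {a b : ℝ}, a ≤ b → a ∈ Set.Icc (1 / 2 : ℝ) (3 / 2) →
      b ∈ Set.Icc (1 / 2 : ℝ) (3 / 2) → (1 : ℝ) ∉ Set.Icc a b →
      (IntervalIntegrable (fun t : ℝ => ((t - 1) ^ 2)⁻¹) volume a b ∧
        ∫ t in a..b, ((t - 1) ^ 2)⁻¹ ≤ δ⁻¹) →
      ‖∫ t in a..b, K t * Φ t‖ ≤ 1 / 2 * Eu + 2 * Ev := by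
    intro a b hab ha hb h1 hI
    have hmem : ∀ t ∈ Set.Ioc a b, t ∈ Set.Icc (1 / 2 : ℝ) (3 / 2) := fun t ht =>
      ⟨ha.1.trans ht.1.le, ht.2.trans hb.2⟩
    have hi1 := (energy_intervalIntegrable (μ := μ) huc hu' ha hb).const_mul (1 / 2)
    have hi2 := hI.1.const_mul (μ⁻¹ * Ev)
    have h := intervalIntegral.norm_integral_le_of_norm_le hab
      (Filter.Eventually.of_forall fun t ht => hout t (hmem t ht) (fun h => h1 (by
        rw [← h]; exact ⟨ht.1.le, ht.2⟩))) (hi1.add hi2)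
    rw [intervalIntegral.integral_add hi1 hi2, intervalIntegral.integral_const_mul,
      intervalIntegral.integral_const_mul] at h
    have h5 := (abs_le.1 (abs_integral_le_energy hμ0 huc hu' ha hb)).2
    have h6 : μ⁻¹ * Ev * ∫ t in a..b, ((t - 1) ^ 2)⁻¹ ≤ μ⁻¹ * Ev * (2 * μ) :=
      mul_le_mul_of_nonneg_left (hδinv ▸ hI.2) (by positivity)
    have h7 : μ⁻¹ * Ev * (2 * μ) = 2 * Ev := by field_simp
    linarith
  have hA := houtI (by linarith) m0 m1 (fun h => by linarith [h.2])
    (integral_inv_sq_left hδ hδ')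
  have hC := houtI (by linarith) m2 m3 (fun h => by linarith [h.1])
    (integral_inv_sq_right hδ hδ')
  have hin : ∀ t ∈ Set.Icc (1 / 2 : ℝ) (3 / 2), t ≠ 1 → ‖K t * (Φ t - Φ 1)‖ ≤
      3 / 2 * √μ * (Eu + Ev) * |t - 1| ^ (-1 / 2 : ℝ) := by
    intro t ht ht1
    have hd : 0 < |t - 1| := abs_pos.2 (sub_ne_zero.2 ht1)
    have hk := norm_inv_sub_ofReal_le hz ht1
    set κ := √(μ * |t - 1|) with hκ
    have hκ0 : 0 < κ := Real.sqrt_pos.2 (by positivity)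
    have hκ2 : κ ^ 2 = μ * |t - 1| := Real.sq_sqrt (by positivity)
    have a1 : ‖u t - u 1‖ ^ 2 ≤ Eu * κ ^ 2 := hκ2 ▸ norm_sub_sq_le_energy hμ hu hu' ht
    have a2 : ‖v t - v 1‖ ^ 2 ≤ Ev * κ ^ 2 := by
      refine (norm_sub_sq_le_energy hν hv hv' ht).trans ?_
      rw [hκ2]
      gcongr
    have a3 : ‖u 1‖ ^ 2 ≤ 2 * Eu := norm_sq_le_energy hμ hu hu' mc
    have a4 : ‖v t‖ ^ 2 ≤ 2 * Ev := norm_sq_le_energy hν hv hv' ht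
    have amgm : ∀ {x y X Y : ℝ}, 0 ≤ x → 0 ≤ y → x ^ 2 ≤ X * κ ^ 2 → y ^ 2 ≤ 2 * Y →
        x * y ≤ κ * (X / 2 + Y) := by
      intro x y X Y hx hy h1 h2
      have e : κ * (x * y) ≤ (x ^ 2 + κ ^ 2 * y ^ 2) / 2 := by nlinarith [sq_nonneg (x - κ * y)]
      have : κ * (x * y) ≤ κ * (κ * (X / 2 + Y)) := by nlinarith [sq_nonneg κ]
      exact le_of_mul_le_mul_left this hκ0
    have hdiff : ‖Φ t - Φ 1‖ ≤ κ * (3 / 2 * (Eu + Ev)) := by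
      have e : Φ t - Φ 1 = (u t - u 1) * (starRingEnd ℂ) (v t) +
          u 1 * (starRingEnd ℂ) (v t - v 1) := by
        simp only [hΦ, map_sub]; ring
      rw [e]
      refine (norm_add_le _ _).trans ?_
      rw [norm_mul, norm_mul, RCLike.norm_conj, RCLike.norm_conj]
      have b1 := amgm (norm_nonneg (u t - u 1)) (norm_nonneg (v t)) a1 a4
      have b2 := amgm (norm_nonneg (v t - v 1)) (norm_nonneg (u 1)) a2 a3
      nlinarith
    rw [norm_mul]
    have hpow : |t - 1|⁻¹ * κ = √μ * |t - 1| ^ (-1 / 2 : ℝ) := by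
      rw [hκ, Real.sqrt_mul hμ0.le, Real.sqrt_eq_rpow |t - 1|, ← Real.rpow_neg_one,
        show (-1 / 2 : ℝ) = -1 + 1 / 2 by norm_num, Real.rpow_add hd]
      ring
    calc ‖K t‖ * ‖Φ t - Φ 1‖ ≤ |t - 1|⁻¹ * (κ * (3 / 2 * (Eu + Ev))) :=
          mul_le_mul hk hdiff (norm_nonneg _) (by positivity)
      _ = 3 / 2 * √μ * (Eu + Ev) * |t - 1| ^ (-1 / 2 : ℝ) := by
          rw [← mul_assoc, hpow]; ring
  have hintD : ∀ {a b : ℝ}, a ∈ Set.Icc (1 / 2 : ℝ) (3 / 2) → b ∈ Set.Icc (1 / 2 : ℝ) (3 / 2) →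
      IntervalIntegrable (fun t => K t * (Φ t - Φ 1)) volume a b := fun ha hb =>
    (hKc.continuousOn.mul ((hΦc.mono (Set.uIcc_subset_Icc ha hb)).sub
      continuousOn_const)).intervalIntegrable
  have hinI : ∀ {a b : ℝ}, a ≤ b → a ∈ Set.Icc (1 / 2 : ℝ) (3 / 2) →
      b ∈ Set.Icc (1 / 2 : ℝ) (3 / 2) →
      (IntervalIntegrable (fun t : ℝ => |t - 1| ^ (-1 / 2 : ℝ)) volume a b ∧
        ∫ t in a..b, |t - 1| ^ (-1 / 2 : ℝ) = 2 * √δ) →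
      ‖∫ t in a..b, K t * (Φ t - Φ 1)‖ ≤ 3 * (Eu + Ev) := by
    intro a b hab ha hb hI
    have hae : ∀ᵐ t : ℝ, t ∈ Set.Ioc a b →
        ‖K t * (Φ t - Φ 1)‖ ≤ 3 / 2 * √μ * (Eu + Ev) * |t - 1| ^ (-1 / 2 : ℝ) := by
      have : ∀ᵐ t : ℝ, t ≠ 1 := by simp [ae_iff]
      filter_upwards [this] with t ht1 ht
      exact hin t ⟨ha.1.trans ht.1.le, ht.2.trans hb.2⟩ ht1
    have h := intervalIntegral.norm_integral_le_of_norm_le hab hae (hI.1.const_mul _)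
    rw [intervalIntegral.integral_const_mul, hI.2] at h
    have h2 : √μ * √δ ≤ 1 := by
      rw [← Real.sqrt_mul hμ0.le, Real.sqrt_le_one, hδdef]
      field_simp; norm_num
    calc _ ≤ _ := h
      _ = 3 * (Eu + Ev) * (√μ * √δ) := by ring
      _ ≤ 3 * (Eu + Ev) * 1 := by gcongr
      _ = _ := by ring
  have hB : ‖∫ t in (1 - δ)..(1 + δ), K t * Φ t‖ ≤ (4 * π + 6) * (Eu + Ev) := by
    have e : ∫ t in (1 - δ)..(1 + δ), K t * Φ t =
        (∫ t in (1 - δ)..1, K t * (Φ t - Φ 1)) + (∫ t in (1 : ℝ)..(1 + δ), K t * (Φ t - Φ 1)) +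
          (∫ t in (1 - δ)..(1 + δ), K t) * Φ 1 := by
      rw [intervalIntegral.integral_add_adjacent_intervals (hintD m1 mc) (hintD mc m2),
        ← intervalIntegral.integral_mul_const, ← intervalIntegral.integral_add (hintD m1 m2)
          ((hKc.intervalIntegrable _ _).mul_const _)]
      congr 1; funext t; ring
    have b1 := hinI (by linarith) m1 mc (integral_rpow_neg_half_left hδ)
    have b2 := hinI (by linarith) mc m2 (integral_rpow_neg_half_right hδ)
    have b3 := norm_integral_inv_sub_le hz hz' δ
    have b4 : ‖Φ 1‖ ≤ 2 * (Eu + Ev) := by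
      have c1 : ‖u 1‖ ^ 2 ≤ 2 * Eu := norm_sq_le_energy hμ hu hu' mc
      have c2 : ‖v 1‖ ^ 2 ≤ 2 * Ev := norm_sq_le_energy hν hv hv' mc
      rw [hΦ]
      simp only [norm_mul, RCLike.norm_conj]
      nlinarith [sq_nonneg (‖u 1‖ - ‖v 1‖)]
    rw [e]
    refine (norm_add₃_le).trans ?_
    rw [norm_mul]
    have b5 : ‖∫ t in (1 - δ)..(1 + δ), K t‖ * ‖Φ 1‖ ≤ 2 * π * (2 * (Eu + Ev)) :=
      mul_le_mul b3 b4 (norm_nonneg _) (by positivity)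
    linarith
  change ‖∫ t in (1 / 2 : ℝ)..(3 / 2), K t * Φ t‖ ≤ _
  rw [hsplit]
  refine (norm_add₃_le).trans ?_
  linarith

/-- Uniform bound for the singular bilinear form on one ray. -/
lemma norm_integral_inv_sub_mul_le {z : ℂ} (hz : z.re = 1) (hz' : z.im ≠ 0)
    {μ ν : ℝ} (hμ : 1 ≤ μ) (hν : 1 ≤ ν) {u u' v v' : ℝ → ℂ}
    (hu : ∀ t ∈ Set.Icc (1 / 2 : ℝ) (3 / 2), HasDerivAt u (u' t) t)
    (hu' : ContinuousOn u' (Set.Icc (1 / 2) (3 / 2)))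
    (hv : ∀ t ∈ Set.Icc (1 / 2 : ℝ) (3 / 2), HasDerivAt v (v' t) t)
    (hv' : ContinuousOn v' (Set.Icc (1 / 2) (3 / 2))) :
    ‖∫ t in (1 / 2 : ℝ)..(3 / 2), (z - (t : ℂ))⁻¹ * (u t * (starRingEnd ℂ) (v t))‖ ≤
      (4 * π + 20) * (energy μ u u' + energy ν v v') := by
  rcases le_total ν μ with h | h
  · exact norm_integral_inv_sub_mul_le_of_le hz hz' hν h hu hu' hv hv'
  · have := norm_integral_inv_sub_mul_le_of_le (z := (starRingEnd ℂ) z) (by simpa using hz)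
      (by simpa using hz') hμ h hv hv' hu hu'
    rw [add_comm (energy μ u u'), ← RCLike.norm_conj, intervalIntegral.integral_of_le (by norm_num),
      ← integral_conj, ← intervalIntegral.integral_of_le (by norm_num)]
    convert! this using 4 with t
    simp only [map_mul, map_inv₀, map_sub, Complex.conj_conj, Complex.conj_ofReal]
    ring

open scoped FourierTransform ENNReal

section Plancherel

variable {V : Type*} [NormedAddCommGroup V] [InnerProductSpace ℝ V] [FiniteDimensional ℝ V]
  [MeasurableSpace V] [BorelSpace V]

theorem continuous_fourier_of_integrable {f : V → ℂ} (hf : Integrable f) : Continuous (𝓕 f) :=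
  VectorFourier.fourierIntegral_continuous Real.continuous_fourierChar
    (by exact continuous_inner) hf

/-- On `L¹ ∩ L²` the Fourier integral agrees almost everywhere with the `L²` Fourier transform. -/
theorem fourier_ae_eq_fourier_toLp {f : V → ℂ} (hf : Integrable f) (hf2 : MemLp f 2) :
    𝓕 f =ᵐ[volume] (𝓕 hf2.toLp : Lp ℂ 2 (volume : Measure V)) := by
  refine ae_eq_of_integral_contDiff_smul_eq
    (continuous_fourier_of_integrable hf).locallyIntegrable
    ((Lp.memLp (𝓕 hf2.toLp : Lp ℂ 2 (volume : Measure V))).locallyIntegrable (by norm_num)) fun g hg hgs => ?_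
  have hgs' : HasCompactSupport fun x => (g x : ℂ) := hgs.comp_left (g := Complex.ofReal) rfl
  have hg' : ContDiff ℝ (⊤ : ℕ∞) fun x => (g x : ℂ) := Complex.ofRealCLM.contDiff.comp hg
  let G : SchwartzMap V ℂ := hgs'.toSchwartzMap hg'
  have h1 : (Lp.toTemperedDistribution (𝓕 hf2.toLp : Lp ℂ 2 (volume : Measure V))) G
      = ∫ x, g x • (𝓕 hf2.toLp : Lp ℂ 2 (volume : Measure V)) x := by
    rw [Lp.toTemperedDistribution_apply]
    rfl
  rw [← h1, ← Lp.fourier_toTemperedDistribution_eq, TemperedDistribution.fourier_apply,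
    Lp.toTemperedDistribution_apply]
  have h2 : ∫ x, (𝓕 G) x • (hf2.toLp : Lp ℂ 2 (volume : Measure V)) x = ∫ x, 𝓕 (fun x => (g x : ℂ)) x • f x := by
    refine integral_congr_ae ?_
    filter_upwards [hf2.coeFn_toLp] with x hx
    rw [hx]
    rfl
  rw [h2]
  have hgi : Integrable fun x => (g x : ℂ) := G.integrable
  have h3 := VectorFourier.integral_fourierIntegral_smul_eq_flip (L := innerₗ V)
    (μ := (volume : Measure V)) (ν := (volume : Measure V))
    Real.continuous_fourierChar (by exact continuous_inner) hgi hf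
  refine Eq.symm (Eq.trans h3 ?_)
  have hflip : (innerₗ V).flip = innerₗ V := by
    ext x y
    simp
  rw [hflip]
  rfl

theorem eLpNorm_two_sq {α : Type*} [MeasurableSpace α] {μ : Measure α} (f : α → ℂ) :
    eLpNorm f 2 μ ^ 2 = ∫⁻ x, ‖f x‖ₑ ^ 2 ∂μ := by
  rw [eLpNorm_eq_lintegral_rpow_enorm_toReal two_ne_zero ENNReal.ofNat_ne_top,
    ← ENNReal.rpow_natCast, ← ENNReal.rpow_mul]
  norm_num

theorem lintegral_enorm_sq_fourier_eq {f : V → ℂ} (hf : Integrable f) (hf2 : MemLp f 2) :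
    ∫⁻ ξ, ‖𝓕 f ξ‖ₑ ^ 2 = ∫⁻ x, ‖f x‖ₑ ^ 2 := by
  have key : eLpNorm (𝓕 f) 2 volume = eLpNorm f 2 volume := by
    rw [eLpNorm_congr_ae (fourier_ae_eq_fourier_toLp hf hf2), ← eLpNorm_congr_ae hf2.coeFn_toLp,
      ← Lp.enorm_def, ← Lp.enorm_def, ← ofReal_norm, ← ofReal_norm, Lp.norm_fourier_eq]
  rw [← eLpNorm_two_sq, ← eLpNorm_two_sq, key]

end Plancherel

section FTFacts

variable {n : ℕ}

theorem FT_eq_fourier (f : EuclideanSpace ℝ (Fin n) → ℂ) (ξ : EuclideanSpace ℝ (Fin n)) :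
    FT n f ξ = ((2 * π) ^ (-(n : ℝ) / 2) : ℝ) • 𝓕 f ((2 * π)⁻¹ • ξ) := by
  rw [FT, Real.fourier_eq']
  congr 2
  ext x
  rw [smul_eq_mul, inner_smul_right]
  congr 2
  push_cast
  field_simp

theorem two_pi_rpow_le_one : (2 * π) ^ (-(n : ℝ) / 2) ≤ 1 := by
  apply Real.rpow_le_one_of_one_le_of_nonpos
  · linarith [Real.pi_gt_three]
  · have : (0:ℝ) ≤ n := n.cast_nonneg
    linarith

theorem FT_continuous {f : EuclideanSpace ℝ (Fin n) → ℂ} (hf : Integrable f) :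
    Continuous (FT n f) := by
  have : FT n f = fun ξ => ((2 * π) ^ (-(n : ℝ) / 2) : ℝ) • 𝓕 f ((2 * π)⁻¹ • ξ) :=
    funext (FT_eq_fourier f)
  rw [this]
  have := continuous_fourier_of_integrable hf
  fun_prop

theorem norm_FT_le (f : EuclideanSpace ℝ (Fin n) → ℂ) (ξ : EuclideanSpace ℝ (Fin n)) :
    ‖FT n f ξ‖ ≤ ∫ x, ‖f x‖ := by
  rw [FT, norm_smul, Real.norm_of_nonneg (by positivity)]
  calc _ ≤ 1 * ∫ x, ‖Complex.exp (-Complex.I * ((⟪x, ξ⟫ : ℝ) : ℂ)) * f x‖ := by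
        gcongr
        · exact two_pi_rpow_le_one
        · exact norm_integral_le_integral_norm _
    _ = _ := by
        rw [one_mul]
        congr 1
        ext x
        rw [norm_mul, Complex.norm_exp]
        simp

theorem enorm_FT_le (f : EuclideanSpace ℝ (Fin n) → ℂ) (ξ : EuclideanSpace ℝ (Fin n)) :
    ‖FT n f ξ‖ₑ ≤ ∫⁻ x, ‖f x‖ₑ := by
  rw [FT, enorm_smul]
  calc _ ≤ 1 * ∫⁻ x, ‖Complex.exp (-Complex.I * ((⟪x, ξ⟫ : ℝ) : ℂ)) * f x‖ₑ := by
        gcongr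
        · rw [Real.enorm_of_nonneg (by positivity), ← ENNReal.ofReal_one]
          exact ENNReal.ofReal_le_ofReal two_pi_rpow_le_one
        · exact enorm_integral_le_lintegral_enorm _
    _ = _ := by
        rw [one_mul]
        congr 1
        ext x
        rw [enorm_mul, ← ofReal_norm, Complex.norm_exp]
        simp

theorem integrable_exp_mul {f : EuclideanSpace ℝ (Fin n) → ℂ} (hf : Integrable f)
    (ξ : EuclideanSpace ℝ (Fin n)) :
    Integrable fun x => Complex.exp (-Complex.I * ((⟪x, ξ⟫ : ℝ) : ℂ)) * f x := by
  refine hf.bdd_mul (c := 1) (by fun_prop) (Filter.Eventually.of_forall fun x => ?_)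
  rw [Complex.norm_exp]
  simp

theorem FT_sum {ι : Type*} (s : Finset ι) {f : ι → EuclideanSpace ℝ (Fin n) → ℂ}
    (hf : ∀ i ∈ s, Integrable (f i)) (ξ : EuclideanSpace ℝ (Fin n)) :
    FT n (fun x => ∑ i ∈ s, f i x) ξ = ∑ i ∈ s, FT n (f i) ξ := by
  simp only [FT, Finset.mul_sum]
  rw [integral_finsetSum _ fun i hi => integrable_exp_mul (hf i hi) ξ, Finset.smul_sum]

theorem FT_const_mul (c : ℂ) (f : EuclideanSpace ℝ (Fin n) → ℂ) (ξ : EuclideanSpace ℝ (Fin n)) :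
    FT n (fun x => c * f x) ξ = c * FT n f ξ := by
  simp only [FT, mul_left_comm _ c, integral_const_mul, Complex.real_smul]

theorem lintegral_comp_smul (F : EuclideanSpace ℝ (Fin n) → ℝ≥0∞) {s : ℝ} (hs : 0 < s) :
    ∫⁻ ξ, F (s • ξ) = ENNReal.ofReal ((s ^ n)⁻¹) * ∫⁻ ξ, F ξ := by
  have h : MeasurableEmbedding fun ξ : EuclideanSpace ℝ (Fin n) => s • ξ :=
    (Homeomorph.smulOfNeZero s hs.ne').measurableEmbedding
  rw [← h.lintegral_map, Measure.map_addHaar_smul _ hs.ne', lintegral_smul_measure,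
    finrank_euclideanSpace_fin, abs_of_pos (by positivity), smul_eq_mul]

theorem lintegral_enorm_sq_FT_eq {f : EuclideanSpace ℝ (Fin n) → ℂ} (hf : Integrable f)
    (hf2 : MemLp f 2) : ∫⁻ ξ, ‖FT n f ξ‖ₑ ^ 2 = ∫⁻ x, ‖f x‖ₑ ^ 2 := by
  simp only [FT_eq_fourier, enorm_smul, mul_pow]
  have hp : (0:ℝ) < (2 * π) := by positivity
  rw [lintegral_const_mul' _ _ (by simp),
    lintegral_comp_smul (fun ξ => ‖𝓕 f ξ‖ₑ ^ 2) (inv_pos.2 hp), ← mul_assoc,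
    lintegral_enorm_sq_fourier_eq hf hf2, Real.enorm_of_nonneg (by positivity),
    ← ENNReal.ofReal_pow (by positivity), ← ENNReal.ofReal_mul (by positivity)]
  have : ((2 * π) ^ (-(n : ℝ) / 2)) ^ 2 * (((2 * π)⁻¹ ^ n)⁻¹) = 1 := by
    rw [inv_pow, inv_inv, ← Real.rpow_natCast, ← Real.rpow_mul hp.le, ← Real.rpow_natCast,
      ← Real.rpow_add hp]
    norm_num
  rw [this]
  simp

end FTFacts

section FTDeriv

variable {n : ℕ}

theorem integrable_coord_mul {f : EuclideanSpace ℝ (Fin n) → ℂ} (hf : Integrable f)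
    (hf1 : Integrable fun x => (‖x‖ : ℂ) * f x) (j : Fin n) :
    Integrable fun x => ((x j : ℝ) : ℂ) * f x := by
  refine hf1.mono (by have := hf.aestronglyMeasurable; fun_prop) ?_
  filter_upwards with x
  rw [norm_mul, norm_mul]
  gcongr
  simpa using PiLp.norm_apply_le x j

theorem integrable_inner_mul {f : EuclideanSpace ℝ (Fin n) → ℂ} (hf : Integrable f)
    (hf1 : Integrable fun x => (‖x‖ : ℂ) * f x) (η : EuclideanSpace ℝ (Fin n)) :
    Integrable fun x => ((⟪x, η⟫ : ℝ) : ℂ) * f x := by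
  refine (hf1.const_mul (‖η‖ : ℂ)).mono (by have := hf.aestronglyMeasurable; fun_prop) ?_
  filter_upwards with x
  rw [norm_mul, norm_mul, norm_mul, ← mul_assoc]
  gcongr
  simpa [mul_comm] using abs_real_inner_le_norm x η

theorem hasDerivAt_FT_smul {f : EuclideanSpace ℝ (Fin n) → ℂ} (hf : Integrable f)
    (hf1 : Integrable fun x => (‖x‖ : ℂ) * f x) (η : EuclideanSpace ℝ (Fin n)) (r : ℝ) :
    HasDerivAt (fun r : ℝ => FT n f (r • η))
      (-I * FT n (fun x => ((⟪x, η⟫ : ℝ) : ℂ) * f x) (r • η)) r := by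
  have hi := integrable_inner_mul hf hf1 η
  have hm := hf.aestronglyMeasurable
  have h := (hasDerivAt_integral_of_dominated_loc_of_deriv_le
    (F := fun (r : ℝ) x => Complex.exp (-I * ((⟪x, r • η⟫ : ℝ) : ℂ)) * f x)
    (F' := fun (r : ℝ) x => -I * (Complex.exp (-I * ((⟪x, r • η⟫ : ℝ) : ℂ)) *
      (((⟪x, η⟫ : ℝ) : ℂ) * f x)))
    (x₀ := r) (s := Set.univ) (bound := fun x => ‖((⟪x, η⟫ : ℝ) : ℂ) * f x‖) (μ := volume)
    Filter.univ_mem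
    (Filter.Eventually.of_forall fun r => (integrable_exp_mul hf (r • η)).aestronglyMeasurable)
    (integrable_exp_mul hf (r • η))
    ((integrable_exp_mul hi (r • η)).const_mul (-I)).aestronglyMeasurable
    (Filter.Eventually.of_forall fun x r _ => ?_) hi.norm
    (Filter.Eventually.of_forall fun x r _ => ?_)).2
  · have h' := h.const_smul ((2 * π) ^ (-(n : ℝ) / 2) : ℝ)
    refine h'.congr_deriv ?_
    simp only [FT, integral_const_mul, Complex.real_smul]
    ring
  · rw [norm_mul, norm_mul, Complex.norm_exp]
    simp
  · have h0 : HasDerivAt (fun r : ℝ => -I * ((⟪x, r • η⟫ : ℝ) : ℂ)) (-I * ((⟪x, η⟫ : ℝ) : ℂ)) r := by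
      have : HasDerivAt (fun r : ℝ => (⟪x, r • η⟫ : ℝ)) ⟪x, η⟫ r := by
        simpa [inner_smul_right] using (hasDerivAt_id r).mul_const (⟪x, η⟫ : ℝ)
      exact this.ofReal_comp.const_mul (-I)
    refine (h0.cexp.mul_const (f x)).congr_deriv ?_
    ring

/-- The squared length of the gradient of `FT n f`. -/
def gradSq (f : EuclideanSpace ℝ (Fin n) → ℂ) (ξ : EuclideanSpace ℝ (Fin n)) : ℝ :=
  ∑ j, ‖FT n (fun x => ((x j : ℝ) : ℂ) * f x) ξ‖ ^ 2

theorem gradSq_nonneg (f : EuclideanSpace ℝ (Fin n) → ℂ) (ξ : EuclideanSpace ℝ (Fin n)) :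
    0 ≤ gradSq f ξ := Finset.sum_nonneg fun _ _ => by positivity

theorem continuous_gradSq {f : EuclideanSpace ℝ (Fin n) → ℂ} (hf : Integrable f)
    (hf1 : Integrable fun x => (‖x‖ : ℂ) * f x) : Continuous (gradSq f) := by
  unfold gradSq
  exact continuous_finsetSum _ fun j _ => (FT_continuous (integrable_coord_mul hf hf1 j)).norm.pow 2

theorem norm_FT_inner_mul_sq_le {f : EuclideanSpace ℝ (Fin n) → ℂ} (hf : Integrable f)
    (hf1 : Integrable fun x => (‖x‖ : ℂ) * f x) (η ξ : EuclideanSpace ℝ (Fin n)) :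
    ‖FT n (fun x => ((⟪x, η⟫ : ℝ) : ℂ) * f x) ξ‖ ^ 2 ≤ ‖η‖ ^ 2 * gradSq f ξ := by
  have h : FT n (fun x => ((⟪x, η⟫ : ℝ) : ℂ) * f x) ξ
      = ∑ j, ((η j : ℝ) : ℂ) * FT n (fun x => ((x j : ℝ) : ℂ) * f x) ξ := by
    simp_rw [← FT_const_mul]
    rw [← FT_sum _ fun j _ => (integrable_coord_mul hf hf1 j).const_mul _]
    congr 1
    ext x
    simp_rw [← mul_assoc, ← Finset.sum_mul]
    congr 1
    simp [PiLp.inner_apply]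
  rw [h, gradSq, EuclideanSpace.norm_sq_eq]
  calc _ ≤ (∑ j, ‖η j‖ * ‖FT n (fun x => ((x j : ℝ) : ℂ) * f x) ξ‖) ^ 2 := by
        gcongr
        refine (norm_sum_le _ _).trans_eq ?_
        simp
    _ ≤ _ := Finset.sum_mul_sq_le_sq_mul_sq _ _ _

theorem lintegral_gradSq_le {f : EuclideanSpace ℝ (Fin n) → ℂ} (hf : Integrable f)
    (hf1 : Integrable fun x => (‖x‖ : ℂ) * f x) (hf2 : MemLp (fun x => (‖x‖ : ℂ) * f x) 2) :
    ∫⁻ ξ, ENNReal.ofReal (gradSq f ξ) ≤ ∫⁻ x, ‖(‖x‖ : ℂ) * f x‖ₑ ^ 2 := by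
  have hm := hf.aestronglyMeasurable
  have h2 : ∀ j : Fin n, MemLp (fun x => ((x j : ℝ) : ℂ) * f x) 2 := fun j => by
    refine hf2.mono (by fun_prop) ?_
    filter_upwards with x
    rw [norm_mul, norm_mul]
    gcongr
    simpa using PiLp.norm_apply_le x j
  have h3 : ∀ ξ, ENNReal.ofReal (gradSq f ξ)
      = ∑ j, ‖FT n (fun x => ((x j : ℝ) : ℂ) * f x) ξ‖ₑ ^ 2 := fun ξ => by
    rw [gradSq, ENNReal.ofReal_sum_of_nonneg fun _ _ => by positivity]
    simp [ENNReal.ofReal_pow]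
  simp_rw [h3]
  rw [lintegral_finsetSum' _ fun j _ =>
    ((FT_continuous (integrable_coord_mul hf hf1 j)).enorm.measurable.pow_const 2).aemeasurable]
  simp_rw [lintegral_enorm_sq_FT_eq (integrable_coord_mul hf hf1 _) (h2 _)]
  rw [← lintegral_finsetSum' _ fun j _ => (by fun_prop)]
  refine lintegral_mono fun x => le_of_eq ?_
  simp_rw [enorm_mul, mul_pow, ← Finset.sum_mul]
  congr 1
  simp_rw [← ofReal_norm, ← ENNReal.ofReal_pow (norm_nonneg _)]
  rw [← ENNReal.ofReal_sum_of_nonneg fun _ _ => by positivity]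
  congr 1
  simp [EuclideanSpace.norm_sq_eq]

end FTDeriv

/-- The multiplier pairing in physical space equals the pairing in frequency space. -/
theorem integral_mult_mul_conj {n : ℕ} (q : EuclideanSpace ℝ (Fin n) → ℂ)
    (f g : EuclideanSpace ℝ (Fin n) → ℂ) (hq : Integrable fun ξ => q ξ * FT n f ξ)
    (hg : Integrable g) :
    ∫ x, mult n q f x * (starRingEnd ℂ) (g x)
      = ∫ ξ, q ξ * FT n f ξ * (starRingEnd ℂ) (FT n g ξ) := by
  have hg' : Integrable fun x => (starRingEnd ℂ) (g x) := by
    refine hg.mono ?_ (by simp)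
    exact Complex.continuous_conj.comp_aestronglyMeasurable hg.aestronglyMeasurable
  have hconj : ∀ ξ, (starRingEnd ℂ) (FT n g ξ) = ((2 * π) ^ (-(n : ℝ) / 2) : ℝ) •
      ∫ x, Complex.exp (I * ((⟪x, ξ⟫ : ℝ) : ℂ)) * (starRingEnd ℂ) (g x) := fun ξ => by
    rw [FT, Complex.real_smul, map_mul, ← integral_conj, Complex.conj_ofReal, Complex.real_smul]
    congr 2
    ext x
    rw [map_mul, ← Complex.exp_conj]
    simp
  simp_rw [hconj, mult, IFT, Complex.real_smul, mul_assoc, mul_left_comm _ (((2 * π) ^ (-(n : ℝ) / 2) : ℝ) : ℂ)]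
  rw [integral_const_mul, integral_const_mul]
  congr 1
  simp_rw [← integral_const_mul, ← integral_mul_const]
  rw [integral_integral_swap]
  · congr 1
    ext ξ
    congr 1
    ext x
    ring
  · have h := hg'.mul_prod hq
    refine (h.bdd_mul (c := 1)
      (f := fun p : EuclideanSpace ℝ (Fin n) × EuclideanSpace ℝ (Fin n) =>
        Complex.exp (I * ((⟪p.1, p.2⟫ : ℝ) : ℂ))) (by fun_prop)
      (Filter.Eventually.of_forall fun p => ?_)).congr (Filter.Eventually.of_forall fun p => ?_)
    · rw [Complex.norm_exp]
      simp
    · simp only [Function.uncurry]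
      ring

open Set Metric

section Polar

variable {n : ℕ}

theorem integrable_polar {F : Type*} [NormedAddCommGroup F] {G : EuclideanSpace ℝ (Fin n) → F} (hG : Integrable G) :
    Integrable (fun p : sphere (0 : EuclideanSpace ℝ (Fin n)) 1 × Ioi (0:ℝ) =>
        G (p.2.1 • p.1.1))
      ((volume : Measure (EuclideanSpace ℝ (Fin n))).toSphere.prod (.volumeIoiPow (n - 1))) := by
  have h := (volume : Measure (EuclideanSpace ℝ (Fin n))).measurePreserving_homeomorphUnitSphereProd
  rw [finrank_euclideanSpace_fin] at h
  rw [← h.integrable_comp_emb (Homeomorph.measurableEmbedding _)]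
  have h1 : Integrable (G ∘ (Subtype.val : ({0}ᶜ : Set (EuclideanSpace ℝ (Fin n))) → _))
      ((volume : Measure (EuclideanSpace ℝ (Fin n))).comap (↑)) := by
    rw [← integrableOn_iff_comap_subtypeVal (measurableSet_singleton _).compl]
    exact hG.integrableOn
  convert h1 using 1
  ext x
  have hx : ‖x.1‖ ≠ 0 := norm_ne_zero_iff.2 x.2
  simp [homeomorphUnitSphereProd, smul_smul, hx]

variable {F : Type*} [NormedAddCommGroup F] [NormedSpace ℝ F]

theorem integral_volumeIoiPow (k : ℕ) (g : ℝ → F) :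
    ∫ x : Ioi (0 : ℝ), g x ∂(.volumeIoiPow k) = ∫ r in Ioi (0:ℝ), r ^ k • g r := by
  simp only [Measure.volumeIoiPow, ENNReal.ofReal]
  rw [integral_withDensity_eq_integral_smul,
    integral_subtype_comap measurableSet_Ioi fun a ↦ Real.toNNReal (a ^ k) • g a,
    setIntegral_congr_fun measurableSet_Ioi fun x hx ↦ ?_]
  · rw [NNReal.smul_def, Real.coe_toNNReal _ (pow_nonneg hx.out.le _)]
  · exact (measurable_subtype_coe.pow_const _).real_toNNReal

theorem integral_polar {G : EuclideanSpace ℝ (Fin n) → F} (hG : Integrable G) (hn : 1 ≤ n) :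
    Integrable (fun θ : sphere (0 : EuclideanSpace ℝ (Fin n)) 1 =>
        ∫ r in Ioi (0:ℝ), r ^ (n - 1) • G (r • θ.1)) volume.toSphere ∧
    ∫ ξ, G ξ = ∫ θ : sphere (0 : EuclideanSpace ℝ (Fin n)) 1,
      (∫ r in Ioi (0:ℝ), r ^ (n - 1) • G (r • θ.1)) ∂(volume.toSphere) := by
  have hp := integrable_polar hG
  have h := (volume : Measure (EuclideanSpace ℝ (Fin n))).measurePreserving_homeomorphUnitSphereProd
  rw [finrank_euclideanSpace_fin] at h
  have hnt : Nontrivial (EuclideanSpace ℝ (Fin n)) :=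
    Module.nontrivial_of_finrank_pos (R := ℝ) (by rw [finrank_euclideanSpace_fin]; omega)
  have e : ∀ θ : sphere (0 : EuclideanSpace ℝ (Fin n)) 1,
      ∫ r in Ioi (0:ℝ), r ^ (n - 1) • G (r • θ.1)
        = ∫ x : Ioi (0 : ℝ), G (x.1 • θ.1) ∂(.volumeIoiPow (n - 1)) := fun θ =>
    (integral_volumeIoiPow (n - 1) (fun r => G (r • θ.1))).symm
  simp_rw [e]
  refine ⟨hp.integral_prod_left, ?_⟩
  rw [integral_integral hp,
    ← h.integral_comp (Homeomorph.measurableEmbedding _)]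
  have h0 := integral_subtype_comap (μ := volume) (measurableSet_singleton _).compl
    (s := ({0}ᶜ : Set (EuclideanSpace ℝ (Fin n)))) G
  rw [restrict_compl_singleton] at h0
  rw [← h0]
  refine integral_congr_ae (Filter.Eventually.of_forall fun x => ?_)
  have hx : ‖x.1‖ ≠ 0 := norm_ne_zero_iff.2 x.2
  simp [homeomorphUnitSphereProd, smul_smul, hx]

/-- Change of variables `r = b * t ^ (1 / m)` on a ray. -/
theorem integral_Ioi_rpow_change (hn : 1 ≤ n) {m b : ℝ} (hm : 0 < m) (hb : 0 < b) (g : ℝ → F) :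
    ∫ r in Ioi (0:ℝ), r ^ (n - 1) • g r
      = ∫ t in Ioi (0:ℝ), (m⁻¹ * b ^ n * t ^ (n / m - 1)) • g (t ^ (1 / m) * b) := by
  have h1 := integral_comp_mul_right_Ioi' (fun r => r ^ (n - 1) • g r) 0 hb
  rw [zero_mul] at h1
  rw [← h1, ← integral_comp_rpow_Ioi _ (one_div_ne_zero hm.ne'), ← integral_smul]
  refine setIntegral_congr_fun measurableSet_Ioi fun t ht => ?_
  have ht : 0 < t := ht
  simp only [smul_smul]
  congr 1
  rw [mul_pow, ← Real.rpow_natCast (t ^ (1 / m)), ← Real.rpow_mul ht.le, abs_of_pos (by positivity)]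
  have e1 : (n : ℝ) / m - 1 = (1 / m - 1) + (1 / m) * ((n - 1 : ℕ) : ℝ) := by
    rw [Nat.cast_sub hn]
    push_cast
    ring
  have e2 : b ^ n = b ^ (n - 1) * b := by
    rw [← pow_succ, Nat.sub_add_cancel hn]
  rw [e1, Real.rpow_add ht, e2]
  ring

end Polar

section Adapted

variable {n : ℕ} {F : Type*} [NormedAddCommGroup F] [NormedSpace ℝ F]

/-- The shell `1/2 < a ^ m < 3/2`. -/
def shell (a : EuclideanSpace ℝ (Fin n) → ℝ) (m : ℝ) : Set (EuclideanSpace ℝ (Fin n)) :=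
  {ξ | 1 / 2 < a ξ ^ m ∧ a ξ ^ m < 3 / 2}

theorem measurableSet_shell {a : EuclideanSpace ℝ (Fin n) → ℝ} (ha : Continuous a) {m : ℝ}
    (hm : 0 < m) : MeasurableSet (shell a m) := by
  have h : Continuous fun ξ => a ξ ^ m := ha.rpow_const fun _ => Or.inr hm.le
  exact ((isOpen_lt continuous_const h).inter (isOpen_lt h continuous_const)).measurableSet

theorem integral_shell (hn : 1 ≤ n) {m : ℝ} (hm : 0 < m) {a : EuclideanSpace ℝ (Fin n) → ℝ}
    (ha : Continuous a) (ha_hom : ∀ t : ℝ, 0 < t → ∀ ξ, a (t • ξ) = t * a ξ)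
    (ha_pos : ∀ ξ : EuclideanSpace ℝ (Fin n), ξ ≠ 0 → 0 < a ξ)
    {G : EuclideanSpace ℝ (Fin n) → F} (hG : IntegrableOn G (shell a m)) :
    Integrable (fun θ : sphere (0 : EuclideanSpace ℝ (Fin n)) 1 =>
        ∫ t in (1/2:ℝ)..(3/2), (m⁻¹ * (a θ)⁻¹ ^ n * t ^ (n / m - 1)) •
          G ((t ^ (1 / m)) • (a θ)⁻¹ • θ.1)) volume.toSphere ∧
    ∫ ξ in shell a m, G ξ = ∫ θ : sphere (0 : EuclideanSpace ℝ (Fin n)) 1,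
      (∫ t in (1/2:ℝ)..(3/2), (m⁻¹ * (a θ)⁻¹ ^ n * t ^ (n / m - 1)) •
          G ((t ^ (1 / m)) • (a θ)⁻¹ • θ.1)) ∂(volume.toSphere) := by
  have hA := measurableSet_shell ha hm
  have h := integral_polar (hG.integrable_indicator hA) hn
  rw [integral_indicator hA] at h
  have e : ∀ θ : sphere (0 : EuclideanSpace ℝ (Fin n)) 1,
      ∫ r in Ioi (0:ℝ), r ^ (n - 1) • (shell a m).indicator G (r • θ.1)
      = ∫ t in (1/2:ℝ)..(3/2), (m⁻¹ * (a θ)⁻¹ ^ n * t ^ (n / m - 1)) •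
          G ((t ^ (1 / m)) • (a θ)⁻¹ • θ.1) := fun θ => by
    have hθ : 0 < a θ := ha_pos _ (ne_zero_of_mem_unit_sphere θ)
    rw [integral_Ioi_rpow_change hn hm (inv_pos.2 hθ),
      intervalIntegral.integral_of_le (by norm_num), integral_Ioc_eq_integral_Ioo,
      ← integral_indicator measurableSet_Ioi, ← integral_indicator measurableSet_Ioo]
    congr 1
    ext t
    by_cases ht : 0 < t
    · have hat : a ((t ^ (1 / m) * (a θ)⁻¹) • θ.1) ^ m = t := by
        rw [ha_hom _ (by positivity), inv_mul_cancel_right₀ hθ.ne', ← Real.rpow_mul ht.le]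
        field_simp
        simp
      rw [indicator_of_mem (mem_Ioi.2 ht)]
      by_cases ht' : t ∈ Ioo (1/2:ℝ) (3/2)
      · rw [indicator_of_mem ht', indicator_of_mem, smul_smul (t ^ (1 / m))]
        rwa [shell, mem_ofPred_eq, hat]
      · rw [indicator_of_notMem ht', indicator_of_notMem, smul_zero]
        rwa [shell, mem_ofPred_eq, hat]
    · rw [indicator_of_notMem (by simpa using ht), indicator_of_notMem]
      intro h'
      exact ht (lt_trans (by norm_num) h'.1)
  simp_rw [e] at h
  exact h

end Adapted

/-- Product form of the one dimensional limiting absorption estimate, with a weight `w`. -/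
theorem norm_integral_inv_sub_weight_le {z : ℂ} (hz : z.re = 1) (hz' : z.im ≠ 0) {μ ν : ℝ}
    (hμ : 1 ≤ μ) (hν : 1 ≤ ν) {φ φ' ψ ψ' : ℝ → ℂ} {w w' : ℝ → ℝ} {M τ : ℝ} (hτ : 0 < τ)
    (hφ : ∀ t ∈ Icc (1/2:ℝ) (3/2), HasDerivAt φ (φ' t) t)
    (hφ' : ContinuousOn φ' (Icc (1/2:ℝ) (3/2)))
    (hψ : ∀ t ∈ Icc (1/2:ℝ) (3/2), HasDerivAt ψ (ψ' t) t)
    (hψ' : ContinuousOn ψ' (Icc (1/2:ℝ) (3/2)))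
    (hw : ∀ t ∈ Icc (1/2:ℝ) (3/2), HasDerivAt w (w' t) t)
    (hw' : ContinuousOn w' (Icc (1/2:ℝ) (3/2)))
    (hwM : ∀ t ∈ Icc (1/2:ℝ) (3/2), |w t| ≤ M) (hwM' : ∀ t ∈ Icc (1/2:ℝ) (3/2), |w' t| ≤ M) :
    ‖∫ t in (1/2:ℝ)..(3/2), (z - (t:ℂ))⁻¹ * ((w t * φ t) * (starRingEnd ℂ) (ψ t))‖
      ≤ 3 * (4 * π + 20) * (τ * M ^ 2 * energy μ φ φ' + τ⁻¹ * energy ν ψ ψ') := by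
  have cφ : ContinuousOn φ (Icc (1/2:ℝ) (3/2)) := fun t ht => (hφ t ht).continuousAt.continuousWithinAt
  have cψ : ContinuousOn ψ (Icc (1/2:ℝ) (3/2)) := fun t ht => (hψ t ht).continuousAt.continuousWithinAt
  have cw : ContinuousOn w (Icc (1/2:ℝ) (3/2)) := fun t ht => (hw t ht).continuousAt.continuousWithinAt
  have cw0 : ContinuousOn (fun t => (w t : ℂ)) (Icc (1/2:ℝ) (3/2)) :=
    Complex.continuous_ofReal.comp_continuousOn cw
  have cw1 : ContinuousOn (fun t => (w' t : ℂ)) (Icc (1/2:ℝ) (3/2)) :=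
    Complex.continuous_ofReal.comp_continuousOn hw'
  have hμ0 : 0 < μ := by linarith
  have hν0 : 0 < ν := by linarith
  set c : ℝ := √τ
  have hc : 0 < c := Real.sqrt_pos.2 hτ
  have hc2 : c ^ 2 = τ := Real.sq_sqrt hτ.le
  have hu : ∀ t ∈ Icc (1/2:ℝ) (3/2), HasDerivAt (fun t => (c:ℂ) * (w t * φ t))
      ((c:ℂ) * (w' t * φ t + w t * φ' t)) t := fun t ht =>
    (((hw t ht).ofReal_comp).mul (hφ t ht)).const_mul _
  have hv : ∀ t ∈ Icc (1/2:ℝ) (3/2), HasDerivAt (fun t => ((c⁻¹:ℝ):ℂ) * ψ t)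
      (((c⁻¹:ℝ):ℂ) * ψ' t) t := fun t ht => (hψ t ht).const_mul _
  have key := norm_integral_inv_sub_mul_le hz hz' hμ hν hu
    (continuousOn_const.mul ((cw1.mul cφ).add (cw0.mul hφ'))) hv (continuousOn_const.mul hψ')
  have e1 : ∀ t : ℝ, (z - (t:ℂ))⁻¹ * ((c:ℂ) * (w t * φ t) * (starRingEnd ℂ) (((c⁻¹:ℝ):ℂ) * ψ t))
      = (z - (t:ℂ))⁻¹ * ((w t * φ t) * (starRingEnd ℂ) (ψ t)) := fun t => by
    rw [map_mul, Complex.conj_ofReal]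
    have : (c:ℂ) * ((c⁻¹:ℝ):ℂ) = 1 := by
      rw [← Complex.ofReal_mul, mul_inv_cancel₀ hc.ne', Complex.ofReal_one]
    linear_combination (z - (t:ℂ))⁻¹ * ((w t * φ t) * (starRingEnd ℂ) (ψ t)) * this
  simp_rw [e1] at key
  have e2 : energy ν (fun t => ((c⁻¹:ℝ):ℂ) * ψ t) (fun t => ((c⁻¹:ℝ):ℂ) * ψ' t)
      = τ⁻¹ * energy ν ψ ψ' := by
    rw [energy, energy, ← intervalIntegral.integral_const_mul]
    congr 1
    ext t
    rw [norm_mul, norm_mul, Complex.norm_real, Real.norm_of_nonneg (by positivity), ← hc2]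
    field_simp
  have e3 : energy μ (fun t => (c:ℂ) * (w t * φ t)) (fun t => (c:ℂ) * (w' t * φ t + w t * φ' t))
      ≤ 3 * (τ * M ^ 2 * energy μ φ φ') := by
    rw [energy, energy, ← intervalIntegral.integral_const_mul, ← intervalIntegral.integral_const_mul]
    refine intervalIntegral.integral_mono_on (by norm_num) ?_ ?_ fun t ht => ?_
    · refine ContinuousOn.intervalIntegrable ?_
      rw [uIcc_of_le (by norm_num)]
      exact (continuousOn_const.mul ((continuousOn_const.mul (cw0.mul cφ)).norm.pow 2)).add
        (continuousOn_const.mul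
          ((continuousOn_const.mul ((cw1.mul cφ).add (cw0.mul hφ'))).norm.pow 2))
    · refine ContinuousOn.intervalIntegrable ?_
      rw [uIcc_of_le (by norm_num)]
      exact continuousOn_const.mul (continuousOn_const.mul
        ((continuousOn_const.mul (cφ.norm.pow 2)).add (continuousOn_const.mul (hφ'.norm.pow 2))))
    · have h1 : ‖(c:ℂ) * (w t * φ t)‖ ^ 2 ≤ τ * (M ^ 2 * ‖φ t‖ ^ 2) := by
        rw [norm_mul, norm_mul, mul_pow, mul_pow, Complex.norm_real, Complex.norm_real,
          Real.norm_of_nonneg hc.le, hc2, Real.norm_eq_abs]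
        gcongr
        exact hwM t ht
      have h2 : ‖(c:ℂ) * (w' t * φ t + w t * φ' t)‖ ^ 2
          ≤ τ * (2 * M ^ 2 * (‖φ t‖ ^ 2 + ‖φ' t‖ ^ 2)) := by
        rw [norm_mul, mul_pow, Complex.norm_real, Real.norm_of_nonneg hc.le, hc2]
        gcongr
        have h3 : ‖(w' t * φ t + w t * φ' t : ℂ)‖ ≤ M * ‖φ t‖ + M * ‖φ' t‖ := by
          refine (norm_add_le _ _).trans ?_
          rw [norm_mul, norm_mul, Complex.norm_real, Complex.norm_real, Real.norm_eq_abs,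
            Real.norm_eq_abs]
          gcongr
          · exact hwM' t ht
          · exact hwM t ht
        calc _ ≤ (M * ‖φ t‖ + M * ‖φ' t‖) ^ 2 := by gcongr
          _ ≤ _ := by nlinarith [sq_nonneg (M * ‖φ t‖ - M * ‖φ' t‖)]
      have hμi : μ⁻¹ ≤ μ := (inv_le_one_of_one_le₀ hμ).trans hμ
      have hP : 0 ≤ τ * M ^ 2 * ‖φ t‖ ^ 2 := by positivity
      have hP' : 0 ≤ τ * M ^ 2 * (μ⁻¹ * ‖φ' t‖ ^ 2) := by positivity
      calc _ ≤ μ * (τ * (M ^ 2 * ‖φ t‖ ^ 2))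
            + μ⁻¹ * (τ * (2 * M ^ 2 * (‖φ t‖ ^ 2 + ‖φ' t‖ ^ 2))) := by gcongr
        _ ≤ _ := by nlinarith [mul_le_mul_of_nonneg_right hμi hP]
  have hE : 0 ≤ energy ν ψ ψ' := energy_nonneg (by linarith) ψ ψ'
  rw [e2] at key
  refine key.trans ?_
  calc _ ≤ (4 * π + 20) * (3 * (τ * M ^ 2 * energy μ φ φ') + 3 * (τ⁻¹ * energy ν ψ ψ')) := by
        have : 0 ≤ τ⁻¹ * energy ν ψ ψ' := by positivity
        exact mul_le_mul_of_nonneg_left (by linarith) (by positivity)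
    _ = _ := by ring

/-- Bounds for the radial weight produced by the change of variables. -/
theorem exists_deriv_weight_bound {m β κ σ : ℝ} (hm : 1 < m) (hβ : 0 ≤ β) (hκ : 0 ≤ κ)
    (hσ : 0 ≤ σ) :
    ∃ w' : ℝ → ℝ, (∀ t ∈ Icc (1/2:ℝ) (3/2),
        HasDerivAt (fun t => κ * t ^ β * √(1 + (σ * t ^ (1 / m)) ^ 2) ^ (m - 1)) (w' t) t) ∧
      ContinuousOn w' (Icc (1/2:ℝ) (3/2)) ∧
      (∀ t ∈ Icc (1/2:ℝ) (3/2), |κ * t ^ β * √(1 + (σ * t ^ (1 / m)) ^ 2) ^ (m - 1)|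
        ≤ κ * (3/2) ^ β * (2 * β + 2) * √(1 + (3 / 2 * σ) ^ 2) ^ (m - 1)) ∧
      (∀ t ∈ Icc (1/2:ℝ) (3/2), |w' t|
        ≤ κ * (3/2) ^ β * (2 * β + 2) * √(1 + (3 / 2 * σ) ^ 2) ^ (m - 1)) := by
  have hm0 : 0 < m := by linarith
  set X : ℝ → ℝ := fun t => 1 + (σ * t ^ (1 / m)) ^ 2
  have hX : ∀ t, 0 < X t := fun t => by positivity
  have hs : ∀ x : ℝ, 0 ≤ x → √x ^ (m - 1) = x ^ ((m - 1) / 2) := fun x hx => by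
    rw [Real.sqrt_eq_rpow, ← Real.rpow_mul hx]
    ring_nf
  have hXle : ∀ t ∈ Icc (1/2:ℝ) (3/2), X t ≤ 1 + (3 / 2 * σ) ^ 2 := fun t ht => by
    have h0 : (0:ℝ) ≤ t := by linarith [ht.1]
    have h1 : t ^ (1 / m) ≤ 3 / 2 := by
      calc t ^ (1 / m) ≤ (3/2:ℝ) ^ (1 / m) := by
            gcongr
            exact ht.2
        _ ≤ (3/2:ℝ) ^ (1:ℝ) := by
            apply Real.rpow_le_rpow_of_exponent_le (by norm_num)
            rw [div_le_one hm0]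
            exact hm.le
        _ = _ := by simp
    simp only [X]
    have h2 : σ * t ^ (1 / m) ≤ 3 / 2 * σ := by nlinarith
    gcongr
  have hXp : ∀ t ∈ Icc (1/2:ℝ) (3/2),
      X t ^ ((m - 1) / 2) ≤ (1 + (3 / 2 * σ) ^ 2) ^ ((m - 1) / 2) := fun t ht =>
    Real.rpow_le_rpow (hX t).le (hXle t ht) (by linarith)
  have htβ : ∀ t ∈ Icc (1/2:ℝ) (3/2), t ^ β ≤ (3/2:ℝ) ^ β := fun t ht =>
    Real.rpow_le_rpow (by linarith [ht.1]) ht.2 hβ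
  refine ⟨fun t => κ * (β * t ^ (β - 1)) * X t ^ ((m - 1) / 2) + κ * t ^ β *
    ((2 * (σ * t ^ (1 / m)) * (σ * (1 / m * t ^ (1 / m - 1)))) * ((m - 1) / 2) *
      X t ^ ((m - 1) / 2 - 1)), fun t ht => ?_, ?_, fun t ht => ?_, fun t ht => ?_⟩
  · have ht0 : t ≠ 0 := by linarith [ht.1]
    have hfun : (fun t => κ * t ^ β * √(1 + (σ * t ^ (1 / m)) ^ 2) ^ (m - 1))
        = fun t => κ * t ^ β * X t ^ ((m - 1) / 2) := funext fun t => by rw [hs _ (hX t).le]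
    rw [hfun]
    have d1 : HasDerivAt (fun t => κ * t ^ β) (κ * (β * t ^ (β - 1))) t :=
      (Real.hasDerivAt_rpow_const (Or.inl ht0)).const_mul _
    have d2 : HasDerivAt X (2 * (σ * t ^ (1 / m)) * (σ * (1 / m * t ^ (1 / m - 1)))) t := by
      have := (((Real.hasDerivAt_rpow_const (p := 1 / m) (Or.inl ht0)).const_mul σ).pow 2).const_add 1
      refine this.congr_deriv ?_
      simp
    exact d1.mul (d2.rpow_const (Or.inl (hX t).ne'))
  · have c : ∀ p : ℝ, ContinuousOn (fun t : ℝ => t ^ p) (Icc (1/2:ℝ) (3/2)) := fun p t ht =>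
      (Real.continuousAt_rpow_const t p (Or.inl (by linarith [ht.1]))).continuousWithinAt
    have cX : ContinuousOn X (Icc (1/2:ℝ) (3/2)) :=
      continuousOn_const.add ((continuousOn_const.mul (c _)).pow 2)
    have cXp : ∀ p : ℝ, ContinuousOn (fun t : ℝ => X t ^ p) (Icc (1/2:ℝ) (3/2)) := fun p =>
      cX.rpow_const fun t _ => Or.inl (hX t).ne'
    have := c (β - 1)
    have := c β
    have := c (1 / m)
    have := c (1 / m - 1)
    have := cXp ((m - 1) / 2)
    have := cXp ((m - 1) / 2 - 1)
    fun_prop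
  · have ht0 : 0 ≤ t := by linarith [ht.1]
    rw [hs _ (hX t).le, hs _ (by positivity), abs_of_nonneg (by have := hX t; positivity)]
    calc κ * t ^ β * X t ^ ((m - 1) / 2)
        ≤ κ * (3/2) ^ β * (1 + (3 / 2 * σ) ^ 2) ^ ((m - 1) / 2) := by
          have := hX t
          exact mul_le_mul (mul_le_mul_of_nonneg_left (htβ t ht) hκ) (hXp t ht) (by positivity)
            (by positivity)
      _ ≤ κ * (3/2) ^ β * (2 * β + 2) * (1 + (3 / 2 * σ) ^ 2) ^ ((m - 1) / 2) := by
          refine mul_le_mul_of_nonneg_right ?_ (by positivity)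
          exact le_mul_of_one_le_right (by positivity) (by linarith)
  · have ht0 : 0 < t := by linarith [ht.1]
    have hti : t⁻¹ ≤ 2 := by
      rw [inv_le_comm₀ ht0 (by norm_num)]
      simpa using ht.1
    have hXt := hX t
    rw [hs _ (by positivity)]
    have hm1 : 0 < m - 1 := by linarith
    rw [abs_of_nonneg (by positivity)]
    dsimp only
    rw [Real.rpow_sub_one ht0.ne', Real.rpow_sub_one ht0.ne',
      Real.rpow_sub_one hXt.ne']
    have hq : (σ * t ^ (1 / m)) ^ 2 / X t ≤ 1 := by
      rw [div_le_one hXt]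
      simp only [X]
      linarith
    have hmm : (m - 1) / m ≤ 1 := by
      rw [div_le_one hm0]
      linarith
    calc _ = κ * t ^ β * X t ^ ((m - 1) / 2) * t⁻¹ *
          (β + (m - 1) / m * ((σ * t ^ (1 / m)) ^ 2 / X t)) := by
          field_simp
      _ ≤ κ * (3/2) ^ β * (1 + (3 / 2 * σ) ^ 2) ^ ((m - 1) / 2) * 2 * (β + 1 * 1) := by
          have h1 : κ * t ^ β * X t ^ ((m - 1) / 2)
              ≤ κ * (3/2) ^ β * (1 + (3 / 2 * σ) ^ 2) ^ ((m - 1) / 2) :=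
            mul_le_mul (mul_le_mul_of_nonneg_left (htβ t ht) hκ) (hXp t ht) (by positivity)
              (by positivity)
          gcongr
      _ = _ := by ring

/-- A continuous symbol, positive away from the origin and homogeneous of degree one. -/
structure IsHomSymbol {n : ℕ} (a : EuclideanSpace ℝ (Fin n) → ℝ) : Prop where
  cont : Continuous a
  hom : ∀ t : ℝ, 0 < t → ∀ ξ, a (t • ξ) = t * a ξ
  pos : ∀ ξ : EuclideanSpace ℝ (Fin n), ξ ≠ 0 → 0 < a ξ

namespace IsHomSymbol

variable {n : ℕ} {a : EuclideanSpace ℝ (Fin n) → ℝ}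

theorem map_zero (ha : IsHomSymbol a) : a 0 = 0 := by
  have := ha.hom 2 (by norm_num) 0
  rw [smul_zero] at this
  linarith

theorem nonneg (ha : IsHomSymbol a) (ξ : EuclideanSpace ℝ (Fin n)) : 0 ≤ a ξ := by
  by_cases h : ξ = 0
  · rw [h, ha.map_zero]
  · exact (ha.pos ξ h).le

theorem exists_bounds (ha : IsHomSymbol a) (hn : 1 ≤ n) :
    ∃ c C : ℝ, 0 < c ∧ 0 < C ∧ ∀ ξ, c * ‖ξ‖ ≤ a ξ ∧ a ξ ≤ C * ‖ξ‖ := by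
  have hnt : Nontrivial (EuclideanSpace ℝ (Fin n)) :=
    Module.nontrivial_of_finrank_pos (R := ℝ) (by rw [finrank_euclideanSpace_fin]; omega)
  have hne : (sphere (0 : EuclideanSpace ℝ (Fin n)) 1).Nonempty :=
    NormedSpace.sphere_nonempty.2 zero_le_one
  have hc : IsCompact (sphere (0 : EuclideanSpace ℝ (Fin n)) 1) := isCompact_sphere _ _
  obtain ⟨x, hx, hmin⟩ := hc.exists_isMinOn hne ha.cont.continuousOn
  obtain ⟨y, hy, hmax⟩ := hc.exists_isMaxOn hne ha.cont.continuousOn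
  refine ⟨a x, a y, ha.pos x (ne_zero_of_mem_unit_sphere ⟨x, hx⟩),
    ha.pos y (ne_zero_of_mem_unit_sphere ⟨y, hy⟩), fun ξ => ?_⟩
  by_cases h : ξ = 0
  · simp [h, ha.map_zero]
  · have hξ : 0 < ‖ξ‖ := norm_pos_iff.2 h
    have hu : ‖ξ‖⁻¹ • ξ ∈ sphere (0 : EuclideanSpace ℝ (Fin n)) 1 := by
      simp [norm_smul, hξ.ne']
    have e : a ξ = a (‖ξ‖⁻¹ • ξ) * ‖ξ‖ := by
      rw [ha.hom _ (inv_pos.2 hξ)]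
      field_simp
    rw [e]
    exact ⟨mul_le_mul_of_nonneg_right (hmin hu) hξ.le, mul_le_mul_of_nonneg_right (hmax hu) hξ.le⟩

theorem exists_shell_subset (ha : IsHomSymbol a) (hn : 1 ≤ n) {m : ℝ} (hm : 1 < m) :
    ∃ R, 0 < R ∧ shell a m ⊆ closedBall 0 R := by
  obtain ⟨c, C, hc, -, h⟩ := ha.exists_bounds hn
  refine ⟨3 / 2 / c, by positivity, fun ξ hξ => ?_⟩
  rw [mem_closedBall_zero_iff, le_div_iff₀ hc, mul_comm]
  refine (h ξ).1.trans ?_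
  by_contra! h1
  have : a ξ ^ (1:ℝ) ≤ a ξ ^ m := Real.rpow_le_rpow_of_exponent_le (by linarith) hm.le
  rw [Real.rpow_one] at this
  linarith [hξ.2]

theorem integrableOn_shell (ha : IsHomSymbol a) (hn : 1 ≤ n) {m : ℝ} (hm : 1 < m)
    {F : Type*} [NormedAddCommGroup F] {G : EuclideanSpace ℝ (Fin n) → F} (hG : Continuous G) :
    IntegrableOn G (shell a m) := by
  obtain ⟨R, -, hR⟩ := ha.exists_shell_subset hn hm
  exact (hG.continuousOn.integrableOn_compact (isCompact_closedBall 0 R)).mono_set hR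

end IsHomSymbol

section Ray

variable {n : ℕ}

theorem exists_hasDerivAt_FT_ray {m : ℝ} (hm : 1 < m) {f : EuclideanSpace ℝ (Fin n) → ℂ}
    (hf : Integrable f) (hf1 : Integrable fun x => (‖x‖ : ℂ) * f x)
    (η : EuclideanSpace ℝ (Fin n)) :
    ∃ φ' : ℝ → ℂ, (∀ t ∈ Icc (1/2:ℝ) (3/2),
        HasDerivAt (fun t : ℝ => FT n f (t ^ (1 / m) • η)) (φ' t) t) ∧
      ContinuousOn φ' (Icc (1/2:ℝ) (3/2)) ∧
      ∀ t ∈ Icc (1/2:ℝ) (3/2), ‖φ' t‖ ^ 2 ≤ 4 * ‖η‖ ^ 2 * gradSq f (t ^ (1 / m) • η) := by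
  have hm0 : 0 < m := by linarith
  have hc := FT_continuous (integrable_inner_mul hf hf1 η)
  have c : ∀ p : ℝ, ContinuousOn (fun t : ℝ => t ^ p) (Icc (1/2:ℝ) (3/2)) := fun p t ht =>
    (Real.continuousAt_rpow_const t p (Or.inl (by linarith [ht.1]))).continuousWithinAt
  refine ⟨fun t => (1 / m * t ^ (1 / m - 1)) •
    (-I * FT n (fun x => ((⟪x, η⟫ : ℝ) : ℂ) * f x) (t ^ (1 / m) • η)), fun t ht => ?_, ?_,
    fun t ht => ?_⟩
  · exact (hasDerivAt_FT_smul hf hf1 η _).scomp t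
      (Real.hasDerivAt_rpow_const (Or.inl (by linarith [ht.1])))
  · exact (continuousOn_const.mul (c _)).smul
      (continuousOn_const.mul (hc.comp_continuousOn ((c _).smul continuousOn_const)))
  · have ht0 : 0 < t := by linarith [ht.1]
    have h1 : t ^ (1 / m - 1) ≤ 2 := by
      have hm1 : 1 / m ≤ 1 := by
        rw [div_le_one hm0]
        exact hm.le
      have hm2 : 0 < 1 / m := by positivity
      calc t ^ (1 / m - 1) ≤ (1/2:ℝ) ^ (1 / m - 1) :=
            Real.rpow_le_rpow_of_nonpos (by norm_num) ht.1 (by linarith)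
        _ ≤ (1/2:ℝ) ^ (-1:ℝ) :=
            Real.rpow_le_rpow_of_exponent_ge (by norm_num) (by norm_num) (by linarith)
        _ = 2 := by
            rw [Real.rpow_neg_one]
            norm_num
    have h2 : 1 / m * t ^ (1 / m - 1) ≤ 2 := by
      have hm1 : 1 / m ≤ 1 := by
        rw [div_le_one hm0]
        exact hm.le
      calc _ ≤ 1 * (2:ℝ) := by gcongr
        _ = 2 := one_mul _
    rw [norm_smul, Real.norm_of_nonneg (by positivity), mul_pow, norm_mul (-I), norm_neg,
      Complex.norm_I, one_mul, mul_assoc 4]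
    have h3 := norm_FT_inner_mul_sq_le hf hf1 η (t ^ (1 / m) • η)
    calc _ ≤ 2 ^ 2 * (‖η‖ ^ 2 * gradSq f (t ^ (1 / m) • η)) := by gcongr
      _ = _ := by norm_num

end Ray

section ShellEnergy

variable {n : ℕ}

/-- Density of the energy of the rescaled Fourier transform `FT n f (s • ·)`. -/
def energyDensity (f : EuclideanSpace ℝ (Fin n) → ℂ) (s μ : ℝ) (ξ : EuclideanSpace ℝ (Fin n)) : ℝ :=
  μ * ‖FT n f (s • ξ)‖ ^ 2 + μ⁻¹ * (s ^ 2 * gradSq f (s • ξ))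

/-- Energy of the rescaled Fourier transform `FT n f (s • ·)` in the shell. -/
def shellEnergy (a : EuclideanSpace ℝ (Fin n) → ℝ) (m : ℝ) (f : EuclideanSpace ℝ (Fin n) → ℂ)
    (s μ : ℝ) : ℝ := ∫ ξ in shell a m, energyDensity f s μ ξ

theorem energyDensity_nonneg (f : EuclideanSpace ℝ (Fin n) → ℂ) {s μ : ℝ} (hμ : 0 < μ)
    (ξ : EuclideanSpace ℝ (Fin n)) : 0 ≤ energyDensity f s μ ξ := by
  have := gradSq_nonneg f (s • ξ)
  unfold energyDensity
  positivity

theorem continuous_energyDensity {f : EuclideanSpace ℝ (Fin n) → ℂ} (hf : Integrable f)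
    (hf1 : Integrable fun x => (‖x‖ : ℂ) * f x) (s μ : ℝ) : Continuous (energyDensity f s μ) := by
  have := FT_continuous hf
  have := continuous_gradSq hf hf1
  unfold energyDensity
  fun_prop

theorem shellEnergy_nonneg (a : EuclideanSpace ℝ (Fin n) → ℝ) (m : ℝ)
    (f : EuclideanSpace ℝ (Fin n) → ℂ) {s μ : ℝ} (hμ : 0 < μ) : 0 ≤ shellEnergy a m f s μ :=
  integral_nonneg fun ξ => energyDensity_nonneg f hμ ξ

/-- The energy of `FT n f` along a ray is controlled by the integral of the energy density against
the radial part of the volume form. -/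
theorem energy_ray_le {m : ℝ} {f : EuclideanSpace ℝ (Fin n) → ℂ}
    (hf : Integrable f) (hf1 : Integrable fun x => (‖x‖ : ℂ) * f x)
    {ω : EuclideanSpace ℝ (Fin n)} {R d s μ κ β : ℝ} (hω : ‖ω‖ ≤ R) (hd : 0 < d) (hμ : 1 ≤ μ)
    (hs : 0 < s) (hκ : ∀ t ∈ Icc (1/2:ℝ) (3/2), d ≤ κ * t ^ β)
    {φ' : ℝ → ℂ} (hφ' : ContinuousOn φ' (Icc (1/2:ℝ) (3/2)))
    (hφ'le : ∀ t ∈ Icc (1/2:ℝ) (3/2),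
      ‖φ' t‖ ^ 2 ≤ 4 * ‖s • ω‖ ^ 2 * gradSq f (t ^ (1 / m) • s • ω)) :
    energy μ (fun t : ℝ => FT n f (t ^ (1 / m) • s • ω)) φ' ≤ (1 + 4 * R ^ 2) / d *
      ∫ t in (1/2:ℝ)..(3/2), (κ * t ^ β) • energyDensity f s μ (t ^ (1 / m) • ω) := by
  have hμ0 : 0 < μ := by linarith
  have c : ∀ p : ℝ, ContinuousOn (fun t : ℝ => t ^ p) (Icc (1/2:ℝ) (3/2)) := fun p t ht =>
    (Real.continuousAt_rpow_const t p (Or.inl (by linarith [ht.1]))).continuousWithinAt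
  rw [energy, ← intervalIntegral.integral_const_mul]
  refine intervalIntegral.integral_mono_on (by norm_num) ?_ ?_ fun t ht => ?_
  · refine ContinuousOn.intervalIntegrable ?_
    rw [uIcc_of_le (by norm_num)]
    exact (continuousOn_const.mul (((FT_continuous hf).comp_continuousOn
      ((c _).smul continuousOn_const)).norm.pow 2)).add (continuousOn_const.mul (hφ'.norm.pow 2))
  · refine ContinuousOn.intervalIntegrable ?_
    rw [uIcc_of_le (by norm_num)]
    exact continuousOn_const.mul ((continuousOn_const.mul (c _)).smul
      ((continuous_energyDensity hf hf1 s μ).comp_continuousOn ((c _).smul continuousOn_const)))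
  · have h1 := hφ'le t ht
    have hg := gradSq_nonneg f (t ^ (1 / m) • s • ω)
    have hR : 0 ≤ R := (norm_nonneg _).trans hω
    have hη : ‖s • ω‖ ^ 2 ≤ R ^ 2 * s ^ 2 := by
      rw [norm_smul, Real.norm_of_nonneg hs.le, mul_pow, mul_comm]
      gcongr
    have h2 : ‖φ' t‖ ^ 2 ≤ 4 * (R ^ 2 * s ^ 2) * gradSq f (t ^ (1 / m) • s • ω) :=
      h1.trans (by gcongr)
    have hcomm : s • t ^ (1 / m) • ω = t ^ (1 / m) • s • ω := smul_comm _ _ _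
    have hQ := energyDensity_nonneg f (s := s) hμ0 (t ^ (1 / m) • ω)
    calc _ ≤ μ * ‖FT n f (t ^ (1 / m) • s • ω)‖ ^ 2
          + μ⁻¹ * (4 * (R ^ 2 * s ^ 2) * gradSq f (t ^ (1 / m) • s • ω)) := by gcongr
      _ ≤ (1 + 4 * R ^ 2) * energyDensity f s μ (t ^ (1 / m) • ω) := by
          rw [energyDensity, hcomm]
          have p1 : 0 ≤ μ * ‖FT n f (t ^ (1 / m) • s • ω)‖ ^ 2 * (4 * R ^ 2) := by positivity
          have p2 : 0 ≤ μ⁻¹ * (s ^ 2 * gradSq f (t ^ (1 / m) • s • ω)) := by positivity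
          nlinarith
      _ = (1 + 4 * R ^ 2) / d * (d * energyDensity f s μ (t ^ (1 / m) • ω)) := by
          field_simp
      _ ≤ _ := by
          rw [smul_eq_mul]
          gcongr
          exact hκ t ht

end ShellEnergy

theorem sqrt_one_add_mul_sq_rpow_le {m k s : ℝ} (hm : 1 < m) (hk : 0 ≤ k) :
    √(1 + (k * s) ^ 2) ^ (m - 1) ≤ (1 + k) ^ (m - 1) * √(1 + s ^ 2) ^ (m - 1) := by
  rw [← Real.mul_rpow (by positivity) (by positivity)]
  refine Real.rpow_le_rpow (by positivity) ?_ (by linarith)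
  rw [← Real.sqrt_sq (by positivity : 0 ≤ 1 + k), ← Real.sqrt_mul (by positivity)]
  refine Real.sqrt_le_sqrt ?_
  nlinarith [mul_nonneg hk (sq_nonneg s), sq_nonneg k]

/-- Limiting absorption estimate in the shell, uniform up to the real axis. -/
theorem norm_integral_shell_le {n : ℕ} (hn : 1 ≤ n) {m : ℝ} (hm : 1 < m) (hmn : m < n)
    {a : EuclideanSpace ℝ (Fin n) → ℝ} (ha : IsHomSymbol a) :
    ∃ C > 0, ∀ z : ℂ, z.re = 1 → z.im ≠ 0 → ∀ s μ ν : ℝ, 0 < s → 1 ≤ μ → 1 ≤ ν →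
      ∀ f g : EuclideanSpace ℝ (Fin n) → ℂ, Integrable f → Integrable (fun x => (‖x‖ : ℂ) * f x) →
        Integrable g → Integrable (fun x => (‖x‖ : ℂ) * g x) →
      ‖∫ ξ in shell a m, (z - ((a ξ ^ m : ℝ) : ℂ))⁻¹ * ((((√(1 + ‖s • ξ‖ ^ 2) ^ (m - 1) : ℝ) : ℂ) *
          FT n f (s • ξ)) * (starRingEnd ℂ) (FT n g (s • ξ)))‖
        ≤ C * √(1 + s ^ 2) ^ (m - 1) * √(shellEnergy a m f s μ) * √(shellEnergy a m g s ν) := by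
  obtain ⟨c, C₁, hc, hC₁, hb⟩ := ha.exists_bounds hn
  have hm0 : 0 < m := by linarith
  set β : ℝ := n / m - 1 with hβdef
  have hβ : 0 ≤ β := by
    rw [hβdef, sub_nonneg, one_le_div hm0]
    exact hmn.le
  set W : ℝ := m⁻¹ * c⁻¹ ^ n * (3/2) ^ β * (2 * β + 2) * (1 + 3 / 2 * c⁻¹) ^ (m - 1) with hW
  have hW0 : 0 < W := by positivity
  set d : ℝ := m⁻¹ * C₁⁻¹ ^ n * (1/2) ^ β with hd
  have hd0 : 0 < d := by positivity
  set K : ℝ := (1 + 4 * c⁻¹ ^ 2) / d with hK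
  have hK0 : 0 < K := by positivity
  set A : ℝ := 3 * (4 * π + 20) * K with hA
  have hA0 : 0 < A := by positivity
  refine ⟨2 * A * W, by positivity, fun z hz hz' s μ ν hs hμ hν f g hf hf1 hg hg1 => ?_⟩
  have hμ0 : 0 < μ := by linarith
  have hν0 : 0 < ν := by linarith
  set L : ℝ := √(1 + s ^ 2) ^ (m - 1) with hL
  have hL0 : 0 < L := by positivity
  set G : EuclideanSpace ℝ (Fin n) → ℂ := fun ξ => (z - ((a ξ ^ m : ℝ) : ℂ))⁻¹ *
    ((((√(1 + ‖s • ξ‖ ^ 2) ^ (m - 1) : ℝ) : ℂ) * FT n f (s • ξ)) *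
      (starRingEnd ℂ) (FT n g (s • ξ))) with hG
  have hGc : Continuous G := by
    have h1 := FT_continuous hf
    have h2 := FT_continuous hg
    have h3 : Continuous fun ξ => (z - ((a ξ ^ m : ℝ) : ℂ))⁻¹ := by
      refine Continuous.inv₀ (continuous_const.sub (Complex.continuous_ofReal.comp
        (ha.cont.rpow_const fun _ => Or.inr hm0.le))) fun ξ h => hz' ?_
      have := congrArg Complex.im h
      simpa using this
    have h4 : Continuous fun ξ : EuclideanSpace ℝ (Fin n) =>
        ((√(1 + ‖s • ξ‖ ^ 2) ^ (m - 1) : ℝ) : ℂ) :=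
      Complex.continuous_ofReal.comp (Continuous.rpow_const (by fun_prop)
        fun _ => Or.inr (by linarith))
    exact h3.mul ((h4.mul (h1.comp (by fun_prop))).mul
      (Complex.continuous_conj.comp (h2.comp (by fun_prop))))
  have hIG := integral_shell hn hm0 ha.cont ha.hom ha.pos (ha.integrableOn_shell hn hm hGc)
  have hIf := integral_shell hn hm0 ha.cont ha.hom ha.pos
    (ha.integrableOn_shell hn hm (continuous_energyDensity hf hf1 s μ))
  have hIg := integral_shell hn hm0 ha.cont ha.hom ha.pos
    (ha.integrableOn_shell hn hm (continuous_energyDensity hg hg1 s ν))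
  have key : ∀ τ : ℝ, 0 < τ → ‖∫ ξ in shell a m, G ξ‖
      ≤ τ * (A * (W * L) ^ 2 * shellEnergy a m f s μ) + τ⁻¹ * (A * shellEnergy a m g s ν) := by
    intro τ hτ
    rw [hIG.2, shellEnergy, shellEnergy, hIf.2, hIg.2]
    simp_rw [← mul_assoc]
    rw [← integral_const_mul, ← integral_const_mul,
      ← integral_add (hIf.1.const_mul _) (hIg.1.const_mul _)]
    refine (norm_integral_le_integral_norm _).trans (integral_mono_of_nonneg
      (Filter.Eventually.of_forall fun _ => norm_nonneg _)
      ((hIf.1.const_mul _).add (hIg.1.const_mul _)) (Filter.Eventually.of_forall fun θ => ?_))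
    dsimp only
    have hθn : ‖θ.1‖ = 1 := by simp
    have hθ0 : 0 < a θ := ha.pos _ (ne_zero_of_mem_unit_sphere θ)
    have hθ1 : c ≤ a θ := by simpa [hθn] using (hb θ).1
    have hθ2 : a θ ≤ C₁ := by simpa [hθn] using (hb θ).2
    have hbc : (a θ)⁻¹ ≤ c⁻¹ := inv_anti₀ hc hθ1
    have hbC : C₁⁻¹ ≤ (a θ)⁻¹ := inv_anti₀ hθ0 hθ2
    set ω : EuclideanSpace ℝ (Fin n) := (a θ)⁻¹ • θ.1 with hω
    have hωn : ‖ω‖ = (a θ)⁻¹ := by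
      rw [hω, norm_smul, hθn, mul_one, Real.norm_of_nonneg (by positivity)]
    set κ : ℝ := m⁻¹ * (a θ)⁻¹ ^ n with hκ
    have hκ0 : 0 ≤ κ := by positivity
    have hκd : ∀ t ∈ Icc (1/2:ℝ) (3/2), d ≤ κ * t ^ β := fun t ht => by
      have := ht.1
      rw [hd, hκ]
      gcongr
    obtain ⟨φ', hφ, hφc, hφb⟩ := exists_hasDerivAt_FT_ray hm hf hf1 (s • ω)
    obtain ⟨ψ', hψ, hψc, hψb⟩ := exists_hasDerivAt_FT_ray hm hg hg1 (s • ω)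
    obtain ⟨w', hw, hwc, hwb, hwb'⟩ := exists_deriv_weight_bound (σ := s * (a θ)⁻¹) hm hβ hκ0
      (by positivity)
    have hM : κ * (3/2) ^ β * (2 * β + 2) * √(1 + (3 / 2 * (s * (a θ)⁻¹)) ^ 2) ^ (m - 1)
        ≤ W * L := by
      have h1 : √(1 + (3 / 2 * (s * (a θ)⁻¹)) ^ 2) ^ (m - 1)
          ≤ (1 + 3 / 2 * c⁻¹) ^ (m - 1) * √(1 + s ^ 2) ^ (m - 1) := by
        refine le_trans ?_ (sqrt_one_add_mul_sq_rpow_le (k := 3 / 2 * c⁻¹) hm (by positivity))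
        refine Real.rpow_le_rpow (by positivity) (Real.sqrt_le_sqrt ?_) (by linarith)
        have : 3 / 2 * (s * (a θ)⁻¹) ≤ 3 / 2 * c⁻¹ * s := by nlinarith
        gcongr
      have h2 : κ ≤ m⁻¹ * c⁻¹ ^ n := by
        rw [hκ]
        gcongr
      calc _ ≤ m⁻¹ * c⁻¹ ^ n * (3/2) ^ β * (2 * β + 2) *
            ((1 + 3 / 2 * c⁻¹) ^ (m - 1) * √(1 + s ^ 2) ^ (m - 1)) := by
            gcongr
        _ = W * L := by
            rw [hW]
            ring
    have ray := norm_integral_inv_sub_weight_le hz hz' hμ hν hτ hφ hφc hψ hψc hw hwc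
      (fun t ht => (hwb t ht).trans hM) (fun t ht => (hwb' t ht).trans hM)
    have ef := energy_ray_le hf hf1 (ω := ω) (R := c⁻¹) (hωn.trans_le hbc) hd0 hμ hs hκd hφc hφb
    have eg := energy_ray_le hg hg1 (ω := ω) (R := c⁻¹) (hωn.trans_le hbc) hd0 hν hs hκd hψc hψb
    have hint : ∫ t in (1/2:ℝ)..(3/2), (κ * t ^ β) • G (t ^ (1 / m) • ω)
        = ∫ t in (1/2:ℝ)..(3/2), (z - (t:ℂ))⁻¹ *
          ((((κ * t ^ β * √(1 + (s * (a θ)⁻¹ * t ^ (1 / m)) ^ 2) ^ (m - 1) : ℝ) : ℂ) *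
            FT n f (t ^ (1 / m) • s • ω)) * (starRingEnd ℂ) (FT n g (t ^ (1 / m) • s • ω))) := by
      refine intervalIntegral.integral_congr fun t ht => ?_
      rw [uIcc_of_le (by norm_num)] at ht
      have ht0 : 0 < t := by linarith [ht.1]
      have hat : a (t ^ (1 / m) • ω) ^ m = t := by
        rw [hω, smul_smul, ha.hom _ (by positivity), inv_mul_cancel_right₀ hθ0.ne',
          ← Real.rpow_mul ht0.le]
        field_simp
        simp
      have hnorm : ‖s • t ^ (1 / m) • ω‖ = s * (a θ)⁻¹ * t ^ (1 / m) := by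
        rw [norm_smul, norm_smul, hωn, Real.norm_of_nonneg hs.le,
          Real.norm_of_nonneg (by positivity)]
        ring
      simp only [hG]
      rw [hat, hnorm, smul_comm s, Complex.real_smul]
      push_cast
      ring
    rw [hint]
    refine ray.trans ?_
    calc _ ≤ 3 * (4 * π + 20) * (τ * (W * L) ^ 2 * (K *
          ∫ t in (1/2:ℝ)..(3/2), (κ * t ^ β) • energyDensity f s μ (t ^ (1 / m) • ω)) +
          τ⁻¹ * (K *
          ∫ t in (1/2:ℝ)..(3/2), (κ * t ^ β) • energyDensity g s ν (t ^ (1 / m) • ω))) := by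
          gcongr
      _ = _ := by
          rw [hA]
          ring
  have hEf := shellEnergy_nonneg a m f (s := s) hμ0
  have hEg := shellEnergy_nonneg a m g (s := s) hν0
  have h2 := sq_le_mul_of_forall_le (x := ‖∫ ξ in shell a m, G ξ‖ / 2) (by positivity)
    (A := A * (W * L) ^ 2 * shellEnergy a m f s μ) (B := A * shellEnergy a m g s ν)
    (by positivity) (by positivity) (fun τ hτ => by linarith [key τ hτ])
  have h3 : ‖∫ ξ in shell a m, G ξ‖ ^ 2
      ≤ (2 * A * W * L * √(shellEnergy a m f s μ) * √(shellEnergy a m g s ν)) ^ 2 := by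
    rw [mul_pow, mul_pow, Real.sq_sqrt hEf, Real.sq_sqrt hEg]
    linarith
  exact (pow_le_pow_iff_left₀ (norm_nonneg _) (by positivity) two_ne_zero).1 h3

open scoped ENNReal

section Ball

variable {n : ℕ}

theorem lintegral_mul_sq_le {α : Type*} [MeasurableSpace α] {μ : Measure α} {f g : α → ℝ≥0∞}
    (hf : AEMeasurable f μ) (hg : AEMeasurable g μ) :
    (∫⁻ x, f x * g x ∂μ) ^ 2 ≤ (∫⁻ x, f x ^ 2 ∂μ) * ∫⁻ x, g x ^ 2 ∂μ := by
  have h := ENNReal.lintegral_mul_le_Lp_mul_Lq μ Real.HolderConjugate.two_two hf hg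
  have h2 : ∀ x : ℝ≥0∞, (x ^ (1 / 2 : ℝ)) ^ 2 = x := fun x => by
    rw [← ENNReal.rpow_natCast, ← ENNReal.rpow_mul]
    norm_num
  simp only [ENNReal.rpow_two] at h
  calc _ ≤ ((∫⁻ x, f x ^ 2 ∂μ) ^ (1 / 2 : ℝ) * (∫⁻ x, g x ^ 2 ∂μ) ^ (1 / 2 : ℝ)) ^ 2 := by
        gcongr
        exact h
    _ = _ := by rw [mul_pow, h2, h2]

theorem exists_lintegral_closedBall_norm_rpow_le (hn : 1 ≤ n) {b : ℝ} (hb : b < n) :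
    ∃ C > 0, ∀ r, 0 < r → ∫⁻ x in closedBall (0 : EuclideanSpace ℝ (Fin n)) r,
      ENNReal.ofReal (‖x‖ ^ (-b)) ≤ ENNReal.ofReal (C * r ^ (n - b)) := by
  have hi : IntegrableOn (fun x : EuclideanSpace ℝ (Fin n) => ‖x‖ ^ (-b)) (closedBall 0 1) := by
    refine (integrableOn_ball_of_norm_le_rpow (C := 1) (α := b) (r := 2) ?_ ?_ ?_ ?_).mono_set
      (closedBall_subset_ball (by norm_num))
    · rwa [finrank_euclideanSpace_fin]
    · rwa [finrank_euclideanSpace_fin]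
    · refine ae_of_all _ fun x => ?_
      rw [one_mul, Real.norm_of_nonneg (by positivity)]
    · exact (measurable_norm.pow_const _).aestronglyMeasurable
  set I := ∫ x in closedBall (0 : EuclideanSpace ℝ (Fin n)) 1, ‖x‖ ^ (-b) with hI
  have hI0 : 0 ≤ I := integral_nonneg fun x => by positivity
  have hI1 : ∫⁻ x in closedBall (0 : EuclideanSpace ℝ (Fin n)) 1, ENNReal.ofReal (‖x‖ ^ (-b))
      = ENNReal.ofReal I :=
    (ofReal_integral_eq_lintegral_ofReal hi (ae_of_all _ fun x => by positivity)).symm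
  refine ⟨I + 1, by positivity, fun r hr => ?_⟩
  have h1 := lintegral_comp_smul (n := n) ((closedBall 0 1).indicator
    fun x => ENNReal.ofReal (‖x‖ ^ (-b))) (inv_pos.2 hr)
  rw [lintegral_indicator isClosed_closedBall.measurableSet, hI1] at h1
  have h2 : ∀ x : EuclideanSpace ℝ (Fin n),
      (closedBall 0 1).indicator (fun x => ENNReal.ofReal (‖x‖ ^ (-b))) (r⁻¹ • x)
      = ENNReal.ofReal (r ^ b) *
        (closedBall 0 r).indicator (fun x => ENNReal.ofReal (‖x‖ ^ (-b))) x := by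
    intro x
    have hm : r⁻¹ • x ∈ closedBall (0 : EuclideanSpace ℝ (Fin n)) 1 ↔
        x ∈ closedBall (0 : EuclideanSpace ℝ (Fin n)) r := by
      rw [mem_closedBall_zero_iff, mem_closedBall_zero_iff, norm_smul,
        Real.norm_of_nonneg (by positivity), inv_mul_le_iff₀ hr, mul_one]
    by_cases hx : x ∈ closedBall (0 : EuclideanSpace ℝ (Fin n)) r
    · rw [indicator_of_mem hx, indicator_of_mem (hm.2 hx), ← ENNReal.ofReal_mul (by positivity),
        norm_smul, Real.norm_of_nonneg (by positivity), Real.mul_rpow (by positivity) (by positivity),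
        Real.inv_rpow hr.le, Real.rpow_neg hr.le, inv_inv]
    · rw [indicator_of_notMem hx, indicator_of_notMem (fun h => hx (hm.1 h)), mul_zero]
  simp_rw [h2] at h1
  rw [lintegral_const_mul' _ _ ENNReal.ofReal_ne_top,
    lintegral_indicator isClosed_closedBall.measurableSet] at h1
  have h3 : ENNReal.ofReal (r ^ b) ≠ 0 := (ENNReal.ofReal_pos.2 (by positivity)).ne'
  refine (ENNReal.mul_le_mul_iff_right h3 ENNReal.ofReal_ne_top).1 ?_
  rw [h1, ← ENNReal.ofReal_mul (by positivity), ← ENNReal.ofReal_mul (by positivity)]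
  refine ENNReal.ofReal_le_ofReal ?_
  have h4 : r ^ b * r ^ (n - b) = r ^ n := by
    rw [← Real.rpow_add hr, add_sub_cancel, Real.rpow_natCast]
  rw [mul_left_comm, h4, inv_pow, inv_inv, mul_comm]
  gcongr
  linarith

theorem exists_lintegral_closedBall_sq_le (hn : 1 ≤ n) {b : ℝ} (hb : b < n) :
    ∃ C > 0, ∀ r, 0 < r → ∀ f : EuclideanSpace ℝ (Fin n) → ℂ, AEStronglyMeasurable f →
      (∫⁻ x in closedBall 0 r, ‖f x‖ₑ) ^ 2 ≤ ENNReal.ofReal (C * r ^ (n - b)) *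
        ∫⁻ x in closedBall 0 r, ENNReal.ofReal (‖x‖ ^ b) * ‖f x‖ₑ ^ 2 := by
  obtain ⟨C, hC, h⟩ := exists_lintegral_closedBall_norm_rpow_le hn hb
  refine ⟨C, hC, fun r hr f hf => ?_⟩
  have hnt : Nontrivial (EuclideanSpace ℝ (Fin n)) :=
    Module.nontrivial_of_finrank_pos (R := ℝ) (by rw [finrank_euclideanSpace_fin]; omega)
  have e : ∫⁻ x in closedBall 0 r, ‖f x‖ₑ = ∫⁻ x in closedBall 0 r,
      ENNReal.ofReal (‖x‖ ^ (-b / 2)) * (ENNReal.ofReal (‖x‖ ^ (b / 2)) * ‖f x‖ₑ) := by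
    refine lintegral_congr_ae (ae_restrict_of_ae ?_)
    filter_upwards [compl_mem_ae_iff.2 (measure_singleton (0 : EuclideanSpace ℝ (Fin n)))] with x hx
    have hx0 : 0 < ‖x‖ := norm_pos_iff.2 hx
    rw [← mul_assoc, ← ENNReal.ofReal_mul (by positivity), ← Real.rpow_add hx0]
    ring_nf
    simp
  have m1 : ∀ c : ℝ, Measurable fun x : EuclideanSpace ℝ (Fin n) => ENNReal.ofReal (‖x‖ ^ c) :=
    fun c => (measurable_norm.pow_const c).ennreal_ofReal
  have sq : ∀ (c : ℝ) (x : EuclideanSpace ℝ (Fin n)),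
      ENNReal.ofReal (‖x‖ ^ (c / 2)) ^ 2 = ENNReal.ofReal (‖x‖ ^ c) := fun c x => by
    rw [← ENNReal.ofReal_pow (by positivity), ← Real.rpow_natCast, ← Real.rpow_mul (norm_nonneg _)]
    norm_num
  rw [e]
  refine (lintegral_mul_sq_le (m1 _).aemeasurable
    ((m1 _).aemeasurable.mul hf.enorm.restrict)).trans ?_
  simp only [Pi.mul_apply, mul_pow, sq]
  gcongr
  exact h r hr

end Ball

section EnergyBounds

variable {n : ℕ}

theorem norm_norm_mul_le_of_support {h : EuclideanSpace ℝ (Fin n) → ℂ} {X : ℝ}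
    (hX : ∀ x, X < ‖x‖ → h x = 0) (x : EuclideanSpace ℝ (Fin n)) :
    ‖(‖x‖ : ℂ) * h x‖ ≤ X * ‖h x‖ := by
  by_cases hx : X < ‖x‖
  · simp [hX x hx]
  · rw [norm_mul, Complex.norm_real, norm_norm]
    gcongr
    linarith

theorem integrable_norm_mul_of_support {h : EuclideanSpace ℝ (Fin n) → ℂ} {X : ℝ}
    (hi : Integrable h) (hX : ∀ x, X < ‖x‖ → h x = 0) :
    Integrable fun x => (‖x‖ : ℂ) * h x :=
  (hi.norm.const_mul X).mono' ((by fun_prop : Continuous fun x : EuclideanSpace ℝ (Fin n) =>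
    (‖x‖ : ℂ)).aestronglyMeasurable.mul hi.aestronglyMeasurable)
    (ae_of_all _ (norm_norm_mul_le_of_support hX))

theorem memLp_norm_mul_of_support {h : EuclideanSpace ℝ (Fin n) → ℂ} {X : ℝ}
    (h2 : MemLp h 2) (hX : ∀ x, X < ‖x‖ → h x = 0) :
    MemLp (fun x => (‖x‖ : ℂ) * h x) 2 :=
  (h2.norm.const_mul X).mono' ((by fun_prop : Continuous fun x : EuclideanSpace ℝ (Fin n) =>
    (‖x‖ : ℂ)).aestronglyMeasurable.mul h2.aestronglyMeasurable)
    (ae_of_all _ (norm_norm_mul_le_of_support hX))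

theorem shellEnergy_le_of_lintegral_le (a : EuclideanSpace ℝ (Fin n) → ℝ) (m : ℝ)
    {h : EuclideanSpace ℝ (Fin n) → ℂ} {s μ Q : ℝ} (hμ : 0 < μ) (hi : Integrable h)
    (hi1 : Integrable fun x => (‖x‖ : ℂ) * h x) (hQ : 0 ≤ Q)
    (hle : ∫⁻ ξ in shell a m, ENNReal.ofReal (energyDensity h s μ ξ) ≤ ENNReal.ofReal Q) :
    shellEnergy a m h s μ ≤ Q := by
  unfold shellEnergy
  rw [integral_eq_lintegral_of_nonneg_ae (ae_of_all _ fun ξ => energyDensity_nonneg h hμ ξ)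
    (continuous_energyDensity hi hi1 s μ).aestronglyMeasurable]
  exact ENNReal.toReal_le_of_le_ofReal hQ hle

/-- Energy bound for functions supported in a large ball. -/
theorem shellEnergy_le_of_support (a : EuclideanSpace ℝ (Fin n) → ℝ) (m : ℝ)
    {h : EuclideanSpace ℝ (Fin n) → ℂ} {s X Q : ℝ} (hs : 0 < s) (hX0 : 0 < X)
    (hi : Integrable h) (h2 : MemLp h 2)
    (hX : ∀ x, X < ‖x‖ → h x = 0) (hQ : 0 ≤ Q) (hle : ∫⁻ x, ‖h x‖ₑ ^ 2 ≤ ENNReal.ofReal Q) :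
    shellEnergy a m h s (s * X) ≤ 2 * (s * X) * (s ^ n)⁻¹ * Q := by
  have hi1 := integrable_norm_mul_of_support hi hX
  have h21 := memLp_norm_mul_of_support h2 hX
  have hμ : 0 < s * X := by positivity
  refine shellEnergy_le_of_lintegral_le a m hμ hi hi1 (by positivity) ?_
  refine (setLIntegral_le_lintegral _ _).trans ?_
  have cF := FT_continuous hi
  have cG := continuous_gradSq hi hi1
  have e : ∀ ξ, ENNReal.ofReal (energyDensity h s (s * X) ξ)
      = ENNReal.ofReal (s * X) * ‖FT n h (s • ξ)‖ₑ ^ 2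
        + ENNReal.ofReal ((s * X)⁻¹ * s ^ 2) * ENNReal.ofReal (gradSq h (s • ξ)) := by
    intro ξ
    have := gradSq_nonneg h (s • ξ)
    rw [energyDensity, ENNReal.ofReal_add (by positivity) (by positivity), ← mul_assoc,
      ENNReal.ofReal_mul (p := s * X) hμ.le,
      ENNReal.ofReal_mul (p := (s * X)⁻¹ * s ^ 2) (by positivity), ENNReal.ofReal_pow (norm_nonneg _), ofReal_norm]
  have hg : ∫⁻ x, ‖(‖x‖ : ℂ) * h x‖ₑ ^ 2 ≤ ENNReal.ofReal (X ^ 2) * ∫⁻ x, ‖h x‖ₑ ^ 2 := by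
    rw [← lintegral_const_mul' _ _ ENNReal.ofReal_ne_top]
    refine lintegral_mono fun x => ?_
    rw [← ofReal_norm, ← ofReal_norm, ← ENNReal.ofReal_pow (norm_nonneg _),
      ← ENNReal.ofReal_pow (norm_nonneg _), ← ENNReal.ofReal_mul (by positivity), ← mul_pow]
    exact ENNReal.ofReal_le_ofReal (pow_le_pow_left₀ (norm_nonneg _)
      (norm_norm_mul_le_of_support hX x) 2)
  have hmeas : Measurable fun ξ : EuclideanSpace ℝ (Fin n) =>
      ENNReal.ofReal (s * X) * ‖FT n h (s • ξ)‖ₑ ^ 2 :=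
    ((cF.comp (continuous_const_smul s)).enorm.measurable.pow_const 2).const_mul _
  simp_rw [e]
  rw [lintegral_add_left hmeas, lintegral_const_mul' _ _ ENNReal.ofReal_ne_top,
    lintegral_const_mul' _ _ ENNReal.ofReal_ne_top,
    lintegral_comp_smul (fun ξ => ‖FT n h ξ‖ₑ ^ 2) hs,
    lintegral_comp_smul (fun ξ => ENNReal.ofReal (gradSq h ξ)) hs,
    lintegral_enorm_sq_FT_eq hi h2]
  calc _ ≤ ENNReal.ofReal (s * X) * (ENNReal.ofReal (s ^ n)⁻¹ * ENNReal.ofReal Q) +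
        ENNReal.ofReal ((s * X)⁻¹ * s ^ 2) * (ENNReal.ofReal (s ^ n)⁻¹ *
          (ENNReal.ofReal (X ^ 2) * ENNReal.ofReal Q)) := by
        gcongr
        refine (lintegral_gradSq_le hi hi1 h21).trans (hg.trans ?_)
        gcongr
    _ = ENNReal.ofReal (2 * (s * X) * (s ^ n)⁻¹ * Q) := by
        rw [← ENNReal.ofReal_mul (by positivity), ← ENNReal.ofReal_mul (by positivity),
          ← ENNReal.ofReal_mul (by positivity), ← ENNReal.ofReal_mul (by positivity),
          ← ENNReal.ofReal_mul (by positivity), ← ENNReal.ofReal_add (by positivity) (by positivity)]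
        congr 1
        field_simp
        ring

/-- Energy bound for functions supported in a small ball. -/
theorem exists_shellEnergy_le_of_support {a : EuclideanSpace ℝ (Fin n) → ℝ} {m : ℝ} (hn : 1 ≤ n)
    (hm : 1 < m) (ha : IsHomSymbol a) :
    ∃ C > 0, ∀ (h : EuclideanSpace ℝ (Fin n) → ℂ) (s : ℝ), 0 < s → Integrable h →
      (∀ x, s⁻¹ < ‖x‖ → h x = 0) → shellEnergy a m h s 1 ≤ C * (∫ x, ‖h x‖) ^ 2 := by
  obtain ⟨R, hR, hsub⟩ := ha.exists_shell_subset hn hm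
  have hfin : volume (shell a m) ≠ ⊤ :=
    ((measure_mono hsub).trans_lt measure_closedBall_lt_top).ne
  refine ⟨(1 + n) * (volume.real (shell a m) + 1), by positivity, fun h s hs hi hX => ?_⟩
  have hi1 := integrable_norm_mul_of_support hi hX
  set P := ∫ x, ‖h x‖ with hP
  have hP0 : 0 ≤ P := integral_nonneg fun _ => norm_nonneg _
  have hd : ∀ ξ, energyDensity h s 1 ξ ≤ (1 + n) * P ^ 2 := by
    intro ξ
    have h1 : ‖FT n h (s • ξ)‖ ≤ P := norm_FT_le h _
    have h3 : ∀ j : Fin n, ‖FT n (fun x => ((x j : ℝ) : ℂ) * h x) (s • ξ)‖ ≤ s⁻¹ * P := by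
      intro j
      refine (norm_FT_le _ _).trans ?_
      rw [hP, ← integral_const_mul]
      refine integral_mono (integrable_coord_mul hi hi1 j).norm (hi.norm.const_mul _) fun x => ?_
      refine le_trans ?_ (norm_norm_mul_le_of_support hX x)
      rw [norm_mul, norm_mul, Complex.norm_real, Complex.norm_real, norm_norm]
      gcongr
      exact PiLp.norm_apply_le x j
    have h4 : gradSq h (s • ξ) ≤ n * (s⁻¹ * P) ^ 2 := by
      unfold gradSq
      calc _ ≤ ∑ _j : Fin n, (s⁻¹ * P) ^ 2 :=
            Finset.sum_le_sum fun j _ => pow_le_pow_left₀ (norm_nonneg _) (h3 j) 2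
        _ = _ := by simp
    unfold energyDensity
    calc _ ≤ 1 * P ^ 2 + 1⁻¹ * (s ^ 2 * (n * (s⁻¹ * P) ^ 2)) := by gcongr
      _ = _ := by field_simp
  refine shellEnergy_le_of_lintegral_le a m one_pos hi hi1 (by positivity) ?_
  calc _ ≤ ∫⁻ ξ in shell a m, ENNReal.ofReal ((1 + n) * P ^ 2) :=
        lintegral_mono fun ξ => ENNReal.ofReal_le_ofReal (hd ξ)
    _ = ENNReal.ofReal ((1 + n) * P ^ 2) * volume (shell a m) := by simp
    _ = ENNReal.ofReal ((1 + n) * P ^ 2) * ENNReal.ofReal (volume.real (shell a m)) := by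
        rw [ofReal_measureReal hfin]
    _ ≤ _ := by
        rw [← ENNReal.ofReal_mul (by positivity)]
        refine ENNReal.ofReal_le_ofReal ?_
        have : 0 ≤ (1 + n) * P ^ 2 := by positivity
        linarith

end EnergyBounds

section Dyadic

variable {n : ℕ}

/-- The square of the norm `‖⟨x⟩^(m/2) f‖` in `L²`. -/
def weightedSq (m : ℝ) (f : EuclideanSpace ℝ (Fin n) → ℂ) : ℝ≥0∞ :=
  ∫⁻ x, ENNReal.ofReal (√(1 + ‖x‖ ^ 2) ^ m) * ‖f x‖ₑ ^ 2

theorem one_le_sqrt_one_add_sq (r : ℝ) : 1 ≤ √(1 + r ^ 2) :=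
  Real.one_le_sqrt.2 (by nlinarith [sq_nonneg r])

theorem le_sqrt_one_add_sq (r : ℝ) : r ≤ √(1 + r ^ 2) :=
  Real.le_sqrt_of_sq_le (by linarith)

theorem weightedSq_indicator_le (m : ℝ) (f : EuclideanSpace ℝ (Fin n) → ℂ)
    (A : Set (EuclideanSpace ℝ (Fin n))) : weightedSq m (A.indicator f) ≤ weightedSq m f := by
  refine lintegral_mono fun x => ?_
  gcongr
  exact enorm_indicator_le_enorm_self _ _

theorem shellEnergy_le_weightedSq (a : EuclideanSpace ℝ (Fin n) → ℝ) {m : ℝ} (hm : 1 < m)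
    {h : EuclideanSpace ℝ (Fin n) → ℂ} {s X N : ℝ} (hs : 0 < s) (hX0 : 0 < X)
    (hi : Integrable h) (h2 : MemLp h 2) (hX : ∀ x, X < ‖x‖ → h x = 0)
    (hX' : ∀ x, h x ≠ 0 → X / 2 ≤ √(1 + ‖x‖ ^ 2))
    (hN : weightedSq m h ≤ ENNReal.ofReal (N ^ 2)) :
    shellEnergy a m h s (s * X) ≤ 2 * 2 ^ m * ((s ^ n)⁻¹ * s) * (X ^ ((1 - m) / 2) * N) ^ 2 := by
  have hX2 : 0 < (X / 2) ^ m := by positivity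
  have h1 : ∫⁻ x, ‖h x‖ₑ ^ 2 ≤ ENNReal.ofReal (((X / 2) ^ m)⁻¹ * N ^ 2) := by
    rw [ENNReal.ofReal_mul (by positivity), ENNReal.ofReal_inv_of_pos hX2,
      ← ENNReal.mul_le_iff_le_inv (ENNReal.ofReal_pos.2 hX2).ne' ENNReal.ofReal_ne_top,
      ← lintegral_const_mul' _ _ ENNReal.ofReal_ne_top]
    refine le_trans (lintegral_mono fun x => ?_) hN
    by_cases hx : h x = 0
    · simp [hx]
    · gcongr
      exact hX' x hx
  refine (shellEnergy_le_of_support a m hs hX0 hi h2 hX (by positivity) h1).trans (le_of_eq ?_)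
  have e : (X ^ ((1 - m) / 2)) ^ 2 = X * (X ^ m)⁻¹ := by
    rw [← Real.rpow_natCast, ← Real.rpow_mul hX0.le, ← Real.rpow_neg hX0.le]
    nth_rewrite 2 [← Real.rpow_one X]
    rw [← Real.rpow_add hX0]
    congr 1
    push_cast
    ring
  rw [mul_pow, e, Real.div_rpow hX0.le (by norm_num)]
  field_simp

theorem exists_shellEnergy_le_weightedSq {a : EuclideanSpace ℝ (Fin n) → ℝ} {m : ℝ} (hn : 1 ≤ n)
    (hm : 1 < m) (hmn : m < n) (ha : IsHomSymbol a) :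
    ∃ C > 0, ∀ (h : EuclideanSpace ℝ (Fin n) → ℂ) (s N : ℝ), 0 < s → Integrable h →
      (∀ x, s⁻¹ < ‖x‖ → h x = 0) → weightedSq m h ≤ ENNReal.ofReal (N ^ 2) →
      shellEnergy a m h s 1 ≤ C * ((s ^ n)⁻¹ * s) * (s⁻¹ ^ ((1 - m) / 2) * N) ^ 2 := by
  obtain ⟨C, hC, hE⟩ := exists_shellEnergy_le_of_support hn hm ha
  obtain ⟨D, hD, hB⟩ := exists_lintegral_closedBall_sq_le hn hmn
  refine ⟨C * D, by positivity, fun h s N hs hi hX hN => (hE h s hs hi hX).trans ?_⟩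
  have h1 := hB s⁻¹ (by positivity) h hi.aestronglyMeasurable
  have h2 : ∫⁻ x in closedBall 0 s⁻¹, ENNReal.ofReal (‖x‖ ^ m) * ‖h x‖ₑ ^ 2
      ≤ ENNReal.ofReal (N ^ 2) := by
    refine (setLIntegral_le_lintegral _ _).trans (le_trans (lintegral_mono fun x => ?_) hN)
    gcongr
    exact le_sqrt_one_add_sq _
  have h3 : ∫⁻ x in closedBall 0 s⁻¹, ‖h x‖ₑ = ∫⁻ x, ‖h x‖ₑ := by
    refine setLIntegral_eq_of_support_subset fun x hx => ?_
    rw [mem_closedBall_zero_iff]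
    by_contra! hlt
    exact hx (by simp [hX x hlt])
  rw [h3, ← ofReal_integral_norm_eq_lintegral_enorm hi, ← ENNReal.ofReal_pow
    (integral_nonneg fun _ => norm_nonneg _)] at h1
  replace h1 := h1.trans (mul_le_mul_right h2 _)
  rw [← ENNReal.ofReal_mul (by positivity), ENNReal.ofReal_le_ofReal_iff (by positivity)] at h1
  have e : s⁻¹ ^ (n - m) = (s ^ n)⁻¹ * s * (s⁻¹ ^ ((1 - m) / 2)) ^ 2 := by
    rw [← Real.rpow_natCast (_ ^ _), ← Real.rpow_mul (by positivity), ← inv_pow,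
      ← Real.rpow_natCast s⁻¹]
    nth_rewrite 3 [← inv_inv s]
    rw [← Real.rpow_neg_one s⁻¹, ← Real.rpow_add (by positivity), ← Real.rpow_add (by positivity)]
    congr 1
    push_cast
    ring
  calc _ ≤ C * (D * s⁻¹ ^ (n - m) * N ^ 2) := by gcongr
    _ = _ := by
      rw [e]
      ring

/-- The dyadic annuli `{X * 2 ^ (k - 1) < ‖x‖ ≤ X * 2 ^ k}`, and the ball of radius `X`
for `k = 0`. -/
def dyadicAnnulus (n : ℕ) (X : ℝ) : ℕ → Set (EuclideanSpace ℝ (Fin n))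
  | 0 => closedBall 0 X
  | k + 1 => closedBall 0 (X * 2 ^ (k + 1)) \ closedBall 0 (X * 2 ^ k)

theorem measurableSet_dyadicAnnulus (X : ℝ) (k : ℕ) : MeasurableSet (dyadicAnnulus n X k) := by
  cases k with
  | zero => exact isClosed_closedBall.measurableSet
  | succ k => exact isClosed_closedBall.measurableSet.diff isClosed_closedBall.measurableSet

theorem dyadicAnnulus_subset (X : ℝ) (k : ℕ) : dyadicAnnulus n X k ⊆ closedBall 0 (X * 2 ^ k) := by
  cases k with
  | zero => simp [dyadicAnnulus]
  | succ k => exact sdiff_subset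

theorem sum_indicator_dyadicAnnulus {X : ℝ} (hX : 0 < X) (f : EuclideanSpace ℝ (Fin n) → ℂ) (K : ℕ)
    (x : EuclideanSpace ℝ (Fin n)) :
    ∑ k ∈ Finset.range (K + 1), (dyadicAnnulus n X k).indicator f x
      = (closedBall 0 (X * 2 ^ K)).indicator f x := by
  induction K with
  | zero => simp [dyadicAnnulus]
  | succ K ih =>
    rw [Finset.sum_range_succ, ih, dyadicAnnulus, indicator_sdiff, Pi.sub_apply]
    · ring
    · exact closedBall_subset_closedBall (by gcongr <;> norm_num)

/-- Energy bound for the dyadic pieces of `f`. -/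
theorem exists_shellEnergy_dyadic_le {a : EuclideanSpace ℝ (Fin n) → ℝ} {m : ℝ} (hn : 1 ≤ n)
    (hm : 1 < m) (hmn : m < n) (ha : IsHomSymbol a) :
    ∃ C > 0, ∀ (f : EuclideanSpace ℝ (Fin n) → ℂ) (s N : ℝ), 0 < s → 0 ≤ N → Integrable f →
      MemLp f 2 → weightedSq m f ≤ ENNReal.ofReal (N ^ 2) → ∀ k : ℕ, ∃ μ, 1 ≤ μ ∧
      √(shellEnergy a m ((dyadicAnnulus n (min s 1)⁻¹ k).indicator f) s μ) ≤
        C * √((s ^ n)⁻¹ * s) * (min s 1) ^ ((m - 1) / 2) * N * (2 ^ ((1 - m) / 2)) ^ k := by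
  obtain ⟨C, hC, hE⟩ := exists_shellEnergy_le_weightedSq hn hm hmn ha
  refine ⟨√(C + 2 * 2 ^ m), by positivity, fun f s N hs hN0 hi h2 hN k => ?_⟩
  have hρ : 0 < min s 1 := lt_min hs one_pos
  set X := (min s 1)⁻¹ * 2 ^ k with hX
  set h := (dyadicAnnulus n (min s 1)⁻¹ k).indicator f with hh
  have hX0 : 0 < X := by positivity
  have hhi : Integrable h := hi.indicator (measurableSet_dyadicAnnulus _ _)
  have hh2 : MemLp h 2 := h2.indicator (measurableSet_dyadicAnnulus _ _)
  have hhN : weightedSq m h ≤ ENNReal.ofReal (N ^ 2) := (weightedSq_indicator_le _ _ _).trans hN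
  have hsupp : ∀ x, X < ‖x‖ → h x = 0 := fun x hx => indicator_of_notMem (fun hmem => by
    have := mem_closedBall_zero_iff.1 (dyadicAnnulus_subset _ _ hmem)
    linarith) _
  have key : ∃ μ, 1 ≤ μ ∧ shellEnergy a m h s μ ≤
      (C + 2 * 2 ^ m) * ((s ^ n)⁻¹ * s) * (X ^ ((1 - m) / 2) * N) ^ 2 := by
    by_cases hc : k = 0 ∧ s < 1
    · obtain ⟨rfl, hs1⟩ := hc
      have hXs : X = s⁻¹ := by simp [hX, min_eq_left hs1.le]
      rw [hXs] at hsupp ⊢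
      refine ⟨1, le_rfl, (hE h s N hs hhi hsupp hhN).trans ?_⟩
      gcongr
      linarith [show (0:ℝ) < 2 ^ m by positivity]
    · refine ⟨s * X, ?_, (shellEnergy_le_weightedSq a hm hs hX0 hhi hh2 hsupp ?_ hhN).trans ?_⟩
      · rw [hX, ← mul_assoc]
        have h1 : 1 ≤ s * (min s 1)⁻¹ := by
          rw [← div_eq_mul_inv, one_le_div hρ]
          exact min_le_left _ _
        have h3 : (1:ℝ) ≤ 2 ^ k := one_le_pow₀ (by norm_num)
        nlinarith
      · intro x hx
        have hmem : x ∈ dyadicAnnulus n (min s 1)⁻¹ k := by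
          by_contra h'
          exact hx (indicator_of_notMem h' _)
        cases k with
        | zero =>
          have hs1 : 1 ≤ s := by
            by_contra! h'
            exact hc ⟨rfl, h'⟩
          have : X = 1 := by simp [hX, min_eq_right hs1]
          rw [this]
          linarith [one_le_sqrt_one_add_sq ‖x‖]
        | succ k =>
          have h3 := hmem.2
          rw [mem_closedBall_zero_iff, not_le] at h3
          have : X / 2 = (min s 1)⁻¹ * 2 ^ k := by
            rw [hX]
            ring
          rw [this]
          exact h3.le.trans (le_sqrt_one_add_sq _)
      · gcongr
        linarith
  obtain ⟨μ, hμ, hle⟩ := key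
  refine ⟨μ, hμ, (Real.sqrt_le_sqrt hle).trans (le_of_eq ?_)⟩
  have e : X ^ ((1 - m) / 2) = (min s 1) ^ ((m - 1) / 2) * (2 ^ ((1 - m) / 2)) ^ k := by
    rw [hX, Real.mul_rpow (by positivity) (by positivity), Real.inv_rpow hρ.le, ← Real.rpow_neg hρ.le,
      ← Real.rpow_natCast, ← Real.rpow_natCast, ← Real.rpow_mul (by norm_num),
      ← Real.rpow_mul (by norm_num)]
    ring_nf
  rw [Real.sqrt_mul (by positivity), Real.sqrt_mul (by positivity), Real.sqrt_sq (by positivity), e]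
  ring

end Dyadic

open Set Metric Filter

open scoped ENNReal Topology

section DyadicSum

variable {n : ℕ}

theorem tendsto_FT_indicator_closedBall {X : ℝ} (hX : 0 < X) {f : EuclideanSpace ℝ (Fin n) → ℂ}
    (hf : Integrable f) (ξ : EuclideanSpace ℝ (Fin n)) :
    Tendsto (fun K : ℕ => FT n ((closedBall 0 (X * 2 ^ K)).indicator f) ξ) atTop
      (𝓝 (FT n f ξ)) := by
  unfold FT
  refine Tendsto.const_smul ?_ _
  refine tendsto_integral_of_dominated_convergence (fun x => ‖f x‖) (fun K => ?_) hf.norm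
    (fun K => ae_of_all _ fun x => ?_) (ae_of_all _ fun x => ?_)
  · exact (integrable_exp_mul (hf.indicator isClosed_closedBall.measurableSet) ξ).aestronglyMeasurable
  · rw [norm_mul, show -I * ((⟪x, ξ⟫ : ℝ) : ℂ) = ((-⟪x, ξ⟫ : ℝ) : ℂ) * I by push_cast; ring,
      Complex.norm_exp_ofReal_mul_I, one_mul]
    exact norm_indicator_le_norm_self _ _
  · refine tendsto_const_nhds.congr' ?_
    have ht : Tendsto (fun K : ℕ => X * 2 ^ K) atTop atTop :=
      (tendsto_pow_atTop_atTop_of_one_lt one_lt_two).const_mul_atTop hX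
    filter_upwards [ht.eventually_ge_atTop ‖x‖] with K hK
    rw [indicator_of_mem (mem_closedBall_zero_iff.2 hK)]

theorem sum_sqrt_le_of_geometric {m B : ℝ} (hm : 1 < m) (hB : 0 ≤ B) {e : ℕ → ℝ}
    (he : ∀ k, e k ≤ B * (2 ^ ((1 - m) / 2)) ^ k) (K : ℕ) :
    ∑ k ∈ Finset.range K, e k ≤ B * (1 - 2 ^ ((1 - m) / 2))⁻¹ := by
  have h1 : (2:ℝ) ^ ((1 - m) / 2) < 1 :=
    Real.rpow_lt_one_of_one_lt_of_neg one_lt_two (by linarith)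
  calc _ ≤ ∑ k ∈ Finset.range K, B * (2 ^ ((1 - m) / 2)) ^ k := Finset.sum_le_sum fun k _ => he k
    _ = B * ∑ k ∈ Finset.range K, (2 ^ ((1 - m) / 2)) ^ k := by rw [Finset.mul_sum]
    _ ≤ _ := by
      gcongr
      rw [← tsum_geometric_of_lt_one (by positivity) h1]
      exact (summable_geometric_of_lt_one (by positivity) h1).sum_le_tsum _
        fun _ _ => by positivity

theorem min_one_mul_sqrt_le {s : ℝ} (hs : 0 < s) : min s 1 * √(1 + s ^ 2) ≤ √2 * s := by
  rw [← Real.sqrt_sq hs.le, ← Real.sqrt_mul (by norm_num), Real.sqrt_sq hs.le]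
  refine Real.le_sqrt_of_sq_le ?_
  rw [mul_pow, Real.sq_sqrt (by positivity)]
  rcases le_total s 1 with h | h
  · rw [min_eq_left h]
    have : s ^ 2 ≤ 1 := by nlinarith
    nlinarith [sq_nonneg s]
  · rw [min_eq_right h]
    nlinarith

/-- Bound for the resolvent form over the shell where the symbol is close to the real part of the
spectral parameter, after rescaling the latter to one. -/
theorem exists_norm_integral_shell_le {a : EuclideanSpace ℝ (Fin n) → ℝ} {m : ℝ} (hn : 1 ≤ n)
    (hm : 1 < m) (hmn : m < n) (ha : IsHomSymbol a) :
    ∃ C > 0, ∀ z : ℂ, z.re = 1 → z.im ≠ 0 → ∀ s N M : ℝ, 0 < s → 0 ≤ N → 0 ≤ M →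
      ∀ f g : EuclideanSpace ℝ (Fin n) → ℂ, Integrable f → MemLp f 2 → Integrable g → MemLp g 2 →
      weightedSq m f ≤ ENNReal.ofReal (N ^ 2) → weightedSq m g ≤ ENNReal.ofReal (M ^ 2) →
      ‖∫ ξ in shell a m, (z - ((a ξ ^ m : ℝ) : ℂ))⁻¹ *
          ((((√(1 + ‖s • ξ‖ ^ 2) ^ (m - 1) : ℝ) : ℂ) * FT n f (s • ξ)) *
            (starRingEnd ℂ) (FT n g (s • ξ)))‖ ≤ C * (s ^ m * (s ^ n)⁻¹) * N * M := by
  obtain ⟨C, hC, hB⟩ := norm_integral_shell_le hn hm hmn ha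
  obtain ⟨D, hD, hE⟩ := exists_shellEnergy_dyadic_le hn hm hmn ha
  have hgeo : 0 < (1 - (2:ℝ) ^ ((1 - m) / 2))⁻¹ := inv_pos.2 (sub_pos.2
    (Real.rpow_lt_one_of_one_lt_of_neg one_lt_two (by linarith)))
  set S := (1 - (2:ℝ) ^ ((1 - m) / 2))⁻¹ with hS
  refine ⟨C * D ^ 2 * S ^ 2 * √2 ^ (m - 1), by positivity,
    fun z hz hz' s N M hs hN0 hM0 f g hf hf2 hg hg2 hN hM => ?_⟩
  have hρ : 0 < min s 1 := lt_min hs one_pos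
  have hX : 0 < (min s 1)⁻¹ := by positivity
  choose μ hμ hEf using hE f s N hs hN0 hf hf2 hN
  choose ν hν hEg using hE g s M hs hM0 hg hg2 hM
  set ker : EuclideanSpace ℝ (Fin n) → ℂ := fun ξ =>
    (z - ((a ξ ^ m : ℝ) : ℂ))⁻¹ * ((√(1 + ‖s • ξ‖ ^ 2) ^ (m - 1) : ℝ) : ℂ) with hker
  have hkc : Continuous ker := by
    have hac : Continuous fun ξ => a ξ ^ m :=
      ha.cont.rpow_const fun ξ => Or.inr (by linarith)
    have hw : Continuous fun ξ : EuclideanSpace ℝ (Fin n) => √(1 + ‖s • ξ‖ ^ 2) ^ (m - 1) :=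
      Continuous.rpow_const (by fun_prop) fun ξ => Or.inr (by linarith)
    refine Continuous.mul (Continuous.inv₀ (by fun_prop) fun ξ h => hz' ?_) (by fun_prop)
    have := congrArg Complex.im h
    simpa using this
  set form : (EuclideanSpace ℝ (Fin n) → ℂ) → (EuclideanSpace ℝ (Fin n) → ℂ) →
      EuclideanSpace ℝ (Fin n) → ℂ := fun u v ξ =>
    ker ξ * (FT n u (s • ξ) * (starRingEnd ℂ) (FT n v (s • ξ))) with hform
  have hfc : ∀ {u v : EuclideanSpace ℝ (Fin n) → ℂ}, Integrable u → Integrable v →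
      Continuous (form u v) := fun {u v} hu hv => by
    have h1 := (FT_continuous hu).comp (continuous_const_smul s)
    have h2 := (FT_continuous hv).comp (continuous_const_smul s)
    exact hkc.mul (h1.mul (Complex.continuous_conj.comp h2))
  have hform' : ∀ u v ξ, (z - ((a ξ ^ m : ℝ) : ℂ))⁻¹ *
      ((((√(1 + ‖s • ξ‖ ^ 2) ^ (m - 1) : ℝ) : ℂ) * FT n u (s • ξ)) *
        (starRingEnd ℂ) (FT n v (s • ξ))) = form u v ξ := fun u v ξ => by
    simp only [hform, hker]
    ring
  simp only [hform']
  set fp : ℕ → EuclideanSpace ℝ (Fin n) → ℂ := fun k =>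
    (dyadicAnnulus n (min s 1)⁻¹ k).indicator f with hfp
  set gp : ℕ → EuclideanSpace ℝ (Fin n) → ℂ := fun k =>
    (dyadicAnnulus n (min s 1)⁻¹ k).indicator g with hgp
  have hfpi : ∀ k, Integrable (fp k) := fun k => hf.indicator (measurableSet_dyadicAnnulus _ _)
  have hgpi : ∀ k, Integrable (gp k) := fun k => hg.indicator (measurableSet_dyadicAnnulus _ _)
  have hsupp : ∀ (u : EuclideanSpace ℝ (Fin n) → ℂ) (k : ℕ) (x : EuclideanSpace ℝ (Fin n)),
      (min s 1)⁻¹ * 2 ^ k < ‖x‖ → (dyadicAnnulus n (min s 1)⁻¹ k).indicator u x = 0 :=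
    fun u k x hx => indicator_of_notMem (fun hmem => by
      have := mem_closedBall_zero_iff.1 (dyadicAnnulus_subset _ _ hmem)
      linarith) _
  have hpiece : ∀ k l, ‖∫ ξ in shell a m, form (fp k) (gp l) ξ‖ ≤ C * √(1 + s ^ 2) ^ (m - 1) *
      √(shellEnergy a m (fp k) s (μ k)) * √(shellEnergy a m (gp l) s (ν l)) := fun k l =>
    by
    have := hB z hz hz' s (μ k) (ν l) hs (hμ k) (hν l) (fp k) (gp l) (hfpi k)
      (integrable_norm_mul_of_support (hfpi k) (hsupp f k)) (hgpi l)
      (integrable_norm_mul_of_support (hgpi l) (hsupp g l))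
    refine le_trans (le_of_eq ?_) this
    congr 1
    refine integral_congr_ae (ae_of_all _ fun ξ => ?_)
    simp only [hform, hker]
    ring
  have hFT : ∀ (u : EuclideanSpace ℝ (Fin n) → ℂ), Integrable u → ∀ (K : ℕ) ξ,
      FT n ((closedBall 0 ((min s 1)⁻¹ * 2 ^ K)).indicator u) ξ = ∑ k ∈ Finset.range (K + 1),
        FT n ((dyadicAnnulus n (min s 1)⁻¹ k).indicator u) ξ := fun u hu K ξ => by
    rw [← FT_sum _ fun k _ => hu.indicator (measurableSet_dyadicAnnulus _ _)]
    congr 1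
    ext x
    exact (sum_indicator_dyadicAnnulus hX u K x).symm
  have hscale : √((s ^ n)⁻¹ * s) ^ 2 * ((min s 1) ^ ((m - 1) / 2)) ^ 2 * √(1 + s ^ 2) ^ (m - 1)
      ≤ √2 ^ (m - 1) * (s ^ m * (s ^ n)⁻¹) := by
    rw [Real.sq_sqrt (by positivity), ← Real.rpow_natCast (_ ^ _), ← Real.rpow_mul hρ.le,
      show (m - 1) / 2 * ((2:ℕ):ℝ) = m - 1 by push_cast; ring, mul_assoc,
      ← Real.mul_rpow hρ.le (by positivity)]
    calc _ ≤ (s ^ n)⁻¹ * s * (√2 * s) ^ (m - 1) := by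
          refine mul_le_mul_of_nonneg_left ?_ (by positivity)
          exact Real.rpow_le_rpow (by positivity) (min_one_mul_sqrt_le hs) (by linarith)
      _ = _ := by
          rw [Real.mul_rpow (by positivity) hs.le, Real.rpow_sub hs, Real.rpow_one]
          field_simp
  have htrunc : ∀ K : ℕ, ‖∫ ξ in shell a m,
      form ((closedBall 0 ((min s 1)⁻¹ * 2 ^ K)).indicator f)
        ((closedBall 0 ((min s 1)⁻¹ * 2 ^ K)).indicator g) ξ‖
      ≤ C * D ^ 2 * S ^ 2 * √2 ^ (m - 1) * (s ^ m * (s ^ n)⁻¹) * N * M := by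
    intro K
    have hexp : ∀ ξ, form ((closedBall 0 ((min s 1)⁻¹ * 2 ^ K)).indicator f)
        ((closedBall 0 ((min s 1)⁻¹ * 2 ^ K)).indicator g) ξ
        = ∑ k ∈ Finset.range (K + 1), ∑ l ∈ Finset.range (K + 1), form (fp k) (gp l) ξ := by
      intro ξ
      simp only [hform]
      rw [hFT f hf, hFT g hg, map_sum, Finset.sum_mul_sum, Finset.mul_sum]
      simp_rw [Finset.mul_sum]
      rfl
    have hint : ∀ k l, Integrable (form (fp k) (gp l)) (volume.restrict (shell a m)) := fun k l =>
      ha.integrableOn_shell hn hm (hfc (hfpi k) (hgpi l))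
    simp_rw [hexp]
    rw [integral_finsetSum _ fun k _ => integrable_finsetSum _ fun l _ => hint k l]
    simp_rw [integral_finsetSum _ fun l _ => hint _ l]
    have hsf := sum_sqrt_le_of_geometric hm (by positivity) hEf (K + 1)
    have hsg := sum_sqrt_le_of_geometric hm (by positivity) hEg (K + 1)
    rw [← hS] at hsf hsg
    calc _ ≤ ∑ k ∈ Finset.range (K + 1), ∑ l ∈ Finset.range (K + 1), C * √(1 + s ^ 2) ^ (m - 1) *
          √(shellEnergy a m (fp k) s (μ k)) * √(shellEnergy a m (gp l) s (ν l)) :=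
          (norm_sum_le _ _).trans (Finset.sum_le_sum fun k _ => (norm_sum_le _ _).trans
            (Finset.sum_le_sum fun l _ => hpiece k l))
      _ = C * √(1 + s ^ 2) ^ (m - 1) * ((∑ k ∈ Finset.range (K + 1),
          √(shellEnergy a m (fp k) s (μ k))) * ∑ l ∈ Finset.range (K + 1),
          √(shellEnergy a m (gp l) s (ν l))) := by
          rw [Finset.sum_mul_sum, Finset.mul_sum]
          simp_rw [Finset.mul_sum, mul_assoc]
      _ ≤ C * √(1 + s ^ 2) ^ (m - 1) * ((D * √((s ^ n)⁻¹ * s) * (min s 1) ^ ((m - 1) / 2) * N * S) *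
          (D * √((s ^ n)⁻¹ * s) * (min s 1) ^ ((m - 1) / 2) * M * S)) := by
          gcongr
      _ = C * D ^ 2 * S ^ 2 * (√((s ^ n)⁻¹ * s) ^ 2 * ((min s 1) ^ ((m - 1) / 2)) ^ 2 *
          √(1 + s ^ 2) ^ (m - 1)) * N * M := by ring
      _ ≤ C * D ^ 2 * S ^ 2 * (√2 ^ (m - 1) * (s ^ m * (s ^ n)⁻¹)) * N * M := by
          gcongr ?_ * N * M
          exact mul_le_mul_of_nonneg_left hscale (by positivity)
      _ = _ := by ring
  refine le_of_tendsto (x := atTop) (Tendsto.norm ?_) (Eventually.of_forall htrunc)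
  refine tendsto_integral_of_dominated_convergence
    (fun ξ => ‖ker ξ‖ * ((∫ x, ‖f x‖) * ∫ x, ‖g x‖)) (fun K => ?_)
    (ha.integrableOn_shell hn hm (hkc.norm.mul continuous_const))
    (fun K => ae_of_all _ fun ξ => ?_) (ae_of_all _ fun ξ => ?_)
  · exact (hfc (hf.indicator isClosed_closedBall.measurableSet)
      (hg.indicator isClosed_closedBall.measurableSet)).aestronglyMeasurable
  · simp only [hform]
    rw [norm_mul (ker ξ), norm_mul (FT n _ _), RCLike.norm_conj]
    have h1 : ∀ u : EuclideanSpace ℝ (Fin n) → ℂ, Integrable u →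
        ‖FT n ((closedBall 0 ((min s 1)⁻¹ * 2 ^ K)).indicator u) (s • ξ)‖ ≤ ∫ x, ‖u x‖ :=
      fun u hu => (norm_FT_le _ _).trans (integral_mono
        (hu.indicator isClosed_closedBall.measurableSet).norm hu.norm fun x =>
          norm_indicator_le_norm_self _ _)
    exact mul_le_mul_of_nonneg_left (mul_le_mul (h1 f hf) (h1 g hg) (norm_nonneg _)
      (integral_nonneg fun _ => norm_nonneg _)) (norm_nonneg _)
  · exact ((tendsto_FT_indicator_closedBall hX hf _).mul
      ((Complex.continuous_conj.tendsto _).comp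
        (tendsto_FT_indicator_closedBall hX hg _))).const_mul _

end DyadicSum

section Hardy

variable {n : ℕ}

theorem lintegral_Ioi_rpow {m c : ℝ} (hm : 0 < m) (hc : 0 < c) :
    ∫⁻ t in Ioi c, ENNReal.ofReal (t ^ (-m - 1)) = ENNReal.ofReal (m⁻¹ * c ^ (-m)) := by
  have h1 : -m - 1 < -1 := by linarith
  rw [← ofReal_integral_eq_lintegral_ofReal (integrableOn_Ioi_rpow_of_lt h1 hc)
    ((ae_restrict_mem measurableSet_Ioi).mono fun t ht => by
      have : 0 < t := hc.trans ht
      positivity), integral_Ioi_rpow_of_lt h1 hc]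
  congr 1
  rw [show -m - 1 + 1 = -m by ring]
  field_simp

theorem lintegral_Ioc_rpow {d c : ℝ} (hd : 0 < d) (hc : 0 < c) :
    ∫⁻ t in Ioc 0 c, ENNReal.ofReal (t ^ (d - 1)) = ENNReal.ofReal (d⁻¹ * c ^ d) := by
  have h1 : -1 < d - 1 := by linarith
  have hi := intervalIntegral.intervalIntegrable_rpow' (a := 0) (b := c) h1
  rw [intervalIntegrable_iff_integrableOn_Ioc_of_le hc.le] at hi
  rw [← ofReal_integral_eq_lintegral_ofReal hi
    ((ae_restrict_mem measurableSet_Ioc).mono fun t ht => by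
      have : 0 < t := ht.1
      positivity), ← intervalIntegral.integral_of_le hc.le, integral_rpow (Or.inl h1)]
  congr 1
  rw [sub_add_cancel, Real.zero_rpow hd.ne']
  field_simp
  ring

theorem mul_setLIntegral_eq_lintegral_indicator {α β : Type*} [MeasurableSpace α]
    [MeasurableSpace β] {μ : Measure β} (w : α → ℝ≥0∞) {u : β → ℝ≥0∞} (hu : Measurable u)
    {S : Set (α × β)} (hS : MeasurableSet S) (t : α) :
    w t * ∫⁻ x in {x | (t, x) ∈ S}, u x ∂μ
      = ∫⁻ x, S.indicator (fun p => w p.1 * u p.2) (t, x) ∂μ := by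
  have hs : MeasurableSet {x | (t, x) ∈ S} := measurable_prodMk_left hS
  rw [← lintegral_const_mul _ hu, ← lintegral_indicator hs]
  rfl

theorem measurable_mul_setLIntegral {w : ℝ → ℝ≥0∞} (hw : Measurable w)
    {u : EuclideanSpace ℝ (Fin n) → ℝ≥0∞} (hu : Measurable u)
    {S : Set (ℝ × EuclideanSpace ℝ (Fin n))} (hS : MeasurableSet S) :
    Measurable fun t => w t * ∫⁻ x in {x | (t, x) ∈ S}, u x := by
  simp_rw [mul_setLIntegral_eq_lintegral_indicator w hu hS]
  exact Measurable.lintegral_prod_right' (((hw.comp measurable_fst).mul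
    (hu.comp measurable_snd)).indicator hS)

theorem lintegral_mul_setLIntegral_swap {w : ℝ → ℝ≥0∞} (hw : Measurable w)
    {u : EuclideanSpace ℝ (Fin n) → ℝ≥0∞} (hu : Measurable u)
    {S : Set (ℝ × EuclideanSpace ℝ (Fin n))} (hS : MeasurableSet S) :
    ∫⁻ t, w t * ∫⁻ x in {x | (t, x) ∈ S}, u x = ∫⁻ x, u x * ∫⁻ t in {t | (t, x) ∈ S}, w t := by
  have h2 : ∀ x, u x * ∫⁻ t in {t | (t, x) ∈ S}, w t
      = ∫⁻ t, S.indicator (fun p => w p.1 * u p.2) (t, x) := fun x => by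
    have hs : MeasurableSet {t | (t, x) ∈ S} := measurable_prodMk_right hS
    rw [← lintegral_const_mul _ hw, ← lintegral_indicator hs]
    refine lintegral_congr fun t => ?_
    by_cases h : (t, x) ∈ S
    · rw [indicator_of_mem h, indicator_of_mem (s := {t | (t, x) ∈ S}) h, mul_comm]
    · rw [indicator_of_notMem h, indicator_of_notMem (s := {t | (t, x) ∈ S}) h]
  simp_rw [mul_setLIntegral_eq_lintegral_indicator w hu hS, h2]
  exact lintegral_lintegral_swap (Measurable.aemeasurable (((hw.comp measurable_fst).mul
    (hu.comp measurable_snd)).indicator hS))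

theorem enorm_add_sq_le (u v : ℂ) : ‖u + v‖ₑ ^ 2 ≤ 2 * ‖u‖ₑ ^ 2 + 2 * ‖v‖ₑ ^ 2 := by
  simp only [← ofReal_norm, ← ENNReal.ofReal_pow (norm_nonneg _)]
  rw [show (2:ℝ≥0∞) = ENNReal.ofReal 2 by simp, ← ENNReal.ofReal_mul (by positivity),
    ← ENNReal.ofReal_mul (by positivity), ← ENNReal.ofReal_add (by positivity) (by positivity)]
  refine ENNReal.ofReal_le_ofReal ?_
  nlinarith [norm_add_le u v, norm_nonneg (u + v), norm_nonneg u, norm_nonneg v,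
    sq_nonneg (‖u‖ - ‖v‖)]

/-- Low frequency bound for the Fourier transform. -/
theorem exists_setLIntegral_FT_sq_le (hn : 1 ≤ n) {b : ℝ} (hb : b < n) :
    ∃ C > 0, ∀ f : EuclideanSpace ℝ (Fin n) → ℂ, Integrable f → MemLp f 2 → ∀ t, 0 < t →
      ∫⁻ ξ in ball 0 t, ‖FT n f ξ‖ₑ ^ 2 ≤
        ENNReal.ofReal (C * t ^ b) *
          (∫⁻ x in closedBall 0 t⁻¹, ENNReal.ofReal (‖x‖ ^ b) * ‖f x‖ₑ ^ 2) +
        2 * ∫⁻ x in (closedBall 0 t⁻¹)ᶜ, ‖f x‖ₑ ^ 2 := by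
  obtain ⟨D, hD, hB⟩ := exists_lintegral_closedBall_sq_le hn hb
  set V := volume.real (ball (0 : EuclideanSpace ℝ (Fin n)) 1) with hV
  refine ⟨2 * (V + 1) * D, by positivity, fun f hf hf2 t ht => ?_⟩
  have hms : MeasurableSet (closedBall (0 : EuclideanSpace ℝ (Fin n)) t⁻¹) :=
    isClosed_closedBall.measurableSet
  set f₁ := (closedBall 0 t⁻¹).indicator f with hf₁
  set f₂ := (closedBall 0 t⁻¹)ᶜ.indicator f with hf₂
  have hi₁ : Integrable f₁ := hf.indicator hms
  have hi₂ : Integrable f₂ := hf.indicator hms.compl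
  have hadd : ∀ ξ, FT n f ξ = FT n f₁ ξ + FT n f₂ ξ := fun ξ => by
    have h0 := FT_sum (n := n) (Finset.univ : Finset (Fin 2)) (f := ![f₁, f₂]) (by
      intro i _
      fin_cases i
      · exact hi₁
      · exact hi₂) ξ
    simp only [Fin.sum_univ_two, Matrix.cons_val_zero, Matrix.cons_val_one] at h0
    rw [← h0]
    congr 1
    ext x
    exact (congrFun (indicator_self_add_compl (closedBall 0 t⁻¹) f) x).symm
  have hsq : ∀ ξ, ‖FT n f ξ‖ₑ ^ 2 ≤ 2 * ‖FT n f₁ ξ‖ₑ ^ 2 + 2 * ‖FT n f₂ ξ‖ₑ ^ 2 := fun ξ => by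
    rw [hadd]
    exact enorm_add_sq_le _ _
  have hvol : volume (ball (0 : EuclideanSpace ℝ (Fin n)) t) = ENNReal.ofReal (t ^ n * V) := by
    rw [Measure.addHaar_ball_of_pos _ _ ht, finrank_euclideanSpace_fin, ENNReal.ofReal_mul (by positivity),
      hV, ofReal_measureReal measure_ball_lt_top.ne]
  have hc₁ := FT_continuous hi₁
  have hm₁ : Measurable fun ξ => 2 * ‖FT n f₁ ξ‖ₑ ^ 2 :=
    (hc₁.enorm.measurable.pow_const 2).const_mul _
  have h1 : ∫⁻ ξ in ball 0 t, 2 * ‖FT n f₁ ξ‖ₑ ^ 2 ≤ ENNReal.ofReal (2 * (V + 1) * D * t ^ b) *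
      (∫⁻ x in closedBall 0 t⁻¹, ENNReal.ofReal (‖x‖ ^ b) * ‖f x‖ₑ ^ 2) := by
    have e : ∫⁻ x, ‖f₁ x‖ₑ = ∫⁻ x in closedBall 0 t⁻¹, ‖f x‖ₑ := by
      rw [← lintegral_indicator hms]
      refine lintegral_congr fun x => ?_
      rw [hf₁, enorm_indicator_eq_indicator_enorm]
    calc _ ≤ ∫⁻ ξ in ball (0 : EuclideanSpace ℝ (Fin n)) t,
          2 * (∫⁻ x in closedBall 0 t⁻¹, ‖f x‖ₑ) ^ 2 := by
          refine lintegral_mono fun ξ => ?_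
          gcongr
          rw [← e]
          exact enorm_FT_le f₁ ξ
      _ = 2 * (∫⁻ x in closedBall 0 t⁻¹, ‖f x‖ₑ) ^ 2 * ENNReal.ofReal (t ^ n * V) := by
          rw [setLIntegral_const, hvol]
      _ ≤ 2 * (ENNReal.ofReal (D * t⁻¹ ^ (n - b)) *
          ∫⁻ x in closedBall 0 t⁻¹, ENNReal.ofReal (‖x‖ ^ b) * ‖f x‖ₑ ^ 2) *
          ENNReal.ofReal (t ^ n * (V + 1)) := by
          gcongr
          · exact hB t⁻¹ (by positivity) f hf.aestronglyMeasurable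
          · linarith
      _ = _ := by
          rw [mul_right_comm, mul_assoc, mul_right_comm, mul_left_comm, ← mul_assoc, ← mul_assoc]
          congr 1
          rw [show (2:ℝ≥0∞) = ENNReal.ofReal 2 by simp, ← ENNReal.ofReal_mul (by positivity),
            ← ENNReal.ofReal_mul (by positivity)]
          congr 1
          have : t ^ b = t ^ n * t⁻¹ ^ (n - b) := by
            rw [Real.inv_rpow ht.le, ← Real.rpow_neg ht.le, ← Real.rpow_natCast, ← Real.rpow_add ht]
            congr 1
            ring
          rw [this]
          ring
  have h2 : ∫⁻ ξ in ball 0 t, 2 * ‖FT n f₂ ξ‖ₑ ^ 2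
      ≤ 2 * ∫⁻ x in (closedBall 0 t⁻¹)ᶜ, ‖f x‖ₑ ^ 2 := by
    rw [lintegral_const_mul' _ _ ENNReal.ofNat_ne_top]
    refine mul_le_mul_right ?_ _
    refine (setLIntegral_le_lintegral _ _).trans (le_of_eq ?_)
    rw [lintegral_enorm_sq_FT_eq hi₂ (hf2.indicator hms.compl), ← lintegral_indicator hms.compl]
    refine lintegral_congr fun x => ?_
    rw [hf₂]
    by_cases hx : x ∈ (closedBall (0 : EuclideanSpace ℝ (Fin n)) t⁻¹)ᶜ
    · rw [indicator_of_mem hx, indicator_of_mem hx]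
    · rw [indicator_of_notMem hx, indicator_of_notMem hx]
      simp
  calc _ ≤ ∫⁻ ξ in ball 0 t, (2 * ‖FT n f₁ ξ‖ₑ ^ 2 + 2 * ‖FT n f₂ ξ‖ₑ ^ 2) :=
        lintegral_mono hsq
    _ = (∫⁻ ξ in ball 0 t, 2 * ‖FT n f₁ ξ‖ₑ ^ 2) + ∫⁻ ξ in ball 0 t, 2 * ‖FT n f₂ ξ‖ₑ ^ 2 :=
        lintegral_add_left hm₁ _
    _ ≤ _ := add_le_add h1 h2

/-- The Hardy inequality for the Fourier transform. -/
theorem exists_lintegral_norm_rpow_neg_mul_FT_le (hn : 1 ≤ n) {m : ℝ} (hm : 0 < m) (hmn : m < n) :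
    ∃ C > 0, ∀ f : EuclideanSpace ℝ (Fin n) → ℂ, Measurable f → Integrable f → MemLp f 2 →
      ∫⁻ ξ, ENNReal.ofReal (‖ξ‖ ^ (-m)) * ‖FT n f ξ‖ₑ ^ 2 ≤
        ENNReal.ofReal C * ∫⁻ x, ENNReal.ofReal (‖x‖ ^ m) * ‖f x‖ₑ ^ 2 := by
  obtain ⟨b, hmb, hbn⟩ := exists_between hmn
  obtain ⟨D, hD, hL⟩ := exists_setLIntegral_FT_sq_le hn hbn
  have hnt : Nontrivial (EuclideanSpace ℝ (Fin n)) :=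
    Module.nontrivial_of_finrank_pos (R := ℝ) (by rw [finrank_euclideanSpace_fin]; omega)
  have hne : ∀ᵐ x : EuclideanSpace ℝ (Fin n), 0 < ‖x‖ := by
    filter_upwards [compl_mem_ae_iff.2 (measure_singleton (0 : EuclideanSpace ℝ (Fin n)))] with x hx
    exact norm_pos_iff.2 hx
  have hdm : 0 < b - m := by linarith
  refine ⟨m * (D * (b - m)⁻¹ + 2 * m⁻¹), by positivity, fun f hfm hf hf2 => ?_⟩
  have hF : Measurable fun ξ => ‖FT n f ξ‖ₑ ^ 2 :=
    (FT_continuous hf).enorm.measurable.pow_const 2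
  have hu : Measurable fun x => ‖f x‖ₑ ^ 2 := hfm.enorm.pow_const 2
  have hwm : ∀ c : ℝ, Measurable fun t : ℝ => ENNReal.ofReal (t ^ c) := fun c =>
    (measurable_id.pow_const c).ennreal_ofReal
  have hnm : ∀ c : ℝ, Measurable fun x : EuclideanSpace ℝ (Fin n) => ENNReal.ofReal (‖x‖ ^ c) :=
    fun c => (measurable_norm.pow_const c).ennreal_ofReal
  set S₁ : Set (ℝ × EuclideanSpace ℝ (Fin n)) := {p | ‖p.2‖ < p.1} with hS₁
  set S₂ : Set (ℝ × EuclideanSpace ℝ (Fin n)) := {p | 0 < p.1 ∧ ‖p.2‖ * p.1 ≤ 1} with hS₂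
  set S₃ : Set (ℝ × EuclideanSpace ℝ (Fin n)) := {p | 0 < p.1 ∧ 1 < ‖p.2‖ * p.1} with hS₃
  have hM₁ : MeasurableSet S₁ := measurableSet_lt (by fun_prop) (by fun_prop)
  have hM₂ : MeasurableSet S₂ := by
    have h : MeasurableSet {p : ℝ × EuclideanSpace ℝ (Fin n) | ‖p.2‖ * p.1 ≤ 1} :=
      measurableSet_le (by fun_prop) (by fun_prop)
    exact (measurableSet_lt measurable_const measurable_fst).inter h
  have hM₃ : MeasurableSet S₃ := by
    have h : MeasurableSet {p : ℝ × EuclideanSpace ℝ (Fin n) | 1 < ‖p.2‖ * p.1} :=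
      measurableSet_lt (by fun_prop) (by fun_prop)
    exact (measurableSet_lt measurable_const measurable_fst).inter h
  have e₁ : ∫⁻ ξ, ENNReal.ofReal (‖ξ‖ ^ (-m)) * ‖FT n f ξ‖ₑ ^ 2 = ENNReal.ofReal m *
      ∫⁻ t, ENNReal.ofReal (t ^ (-m - 1)) * ∫⁻ ξ in {ξ | (t, ξ) ∈ S₁}, ‖FT n f ξ‖ₑ ^ 2 := by
    rw [lintegral_mul_setLIntegral_swap (hwm _) hF hM₁,
      ← lintegral_const_mul' _ _ ENNReal.ofReal_ne_top]
    refine lintegral_congr_ae ?_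
    filter_upwards [hne] with ξ hξ
    rw [show {t | (t, ξ) ∈ S₁} = Ioi ‖ξ‖ from rfl, lintegral_Ioi_rpow hm hξ, mul_left_comm,
      ← ENNReal.ofReal_mul hm.le, mul_inv_cancel_left₀ hm.ne', mul_comm]
  have hbu : Measurable fun x => ENNReal.ofReal (‖x‖ ^ b) * ‖f x‖ₑ ^ 2 := (hnm b).mul hu
  have e₂ : ∫⁻ t, ENNReal.ofReal (t ^ (b - m - 1)) *
      ∫⁻ x in {x | (t, x) ∈ S₂}, ENNReal.ofReal (‖x‖ ^ b) * ‖f x‖ₑ ^ 2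
      = ENNReal.ofReal (b - m)⁻¹ * ∫⁻ x, ENNReal.ofReal (‖x‖ ^ m) * ‖f x‖ₑ ^ 2 := by
    rw [lintegral_mul_setLIntegral_swap (hwm _) hbu hM₂,
      ← lintegral_const_mul' _ _ ENNReal.ofReal_ne_top]
    refine lintegral_congr_ae ?_
    filter_upwards [hne] with x hx
    have hset : {t | (t, x) ∈ S₂} = Ioc 0 ‖x‖⁻¹ := by
      ext t
      simp only [hS₂, mem_ofPred_eq, mem_Ioc]
      refine and_congr_right fun _ => ?_
      rw [← one_div, le_div_iff₀ hx, mul_comm]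
    rw [hset, lintegral_Ioc_rpow hdm (by positivity), mul_right_comm,
      ← ENNReal.ofReal_mul (by positivity), ← mul_assoc (ENNReal.ofReal _) (ENNReal.ofReal _),
      ← ENNReal.ofReal_mul (by positivity)]
    congr 2
    rw [mul_left_comm, Real.inv_rpow hx.le, ← Real.rpow_neg hx.le, ← Real.rpow_add hx]
    ring_nf
  have e₃ : ∫⁻ t, ENNReal.ofReal (t ^ (-m - 1)) * ∫⁻ x in {x | (t, x) ∈ S₃}, ‖f x‖ₑ ^ 2
      = ENNReal.ofReal m⁻¹ * ∫⁻ x, ENNReal.ofReal (‖x‖ ^ m) * ‖f x‖ₑ ^ 2 := by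
    rw [lintegral_mul_setLIntegral_swap (hwm _) hu hM₃,
      ← lintegral_const_mul' _ _ ENNReal.ofReal_ne_top]
    refine lintegral_congr_ae ?_
    filter_upwards [hne] with x hx
    have hset : {t | (t, x) ∈ S₃} = Ioi ‖x‖⁻¹ := by
      ext t
      simp only [hS₃, mem_ofPred_eq, mem_Ioi]
      rw [inv_lt_iff_one_lt_mul₀ hx, mul_comm]
      refine and_iff_right_of_imp fun h => ?_
      by_contra! h'
      nlinarith
    rw [hset, lintegral_Ioi_rpow hm (by positivity), ← mul_assoc,
      ← ENNReal.ofReal_mul (by positivity), mul_comm]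
    congr 2
    rw [Real.inv_rpow hx.le, Real.rpow_neg hx.le, inv_inv]
  have hpt : ∀ t, ENNReal.ofReal (t ^ (-m - 1)) * ∫⁻ ξ in {ξ | (t, ξ) ∈ S₁}, ‖FT n f ξ‖ₑ ^ 2
      ≤ ENNReal.ofReal D * (ENNReal.ofReal (t ^ (b - m - 1)) *
        ∫⁻ x in {x | (t, x) ∈ S₂}, ENNReal.ofReal (‖x‖ ^ b) * ‖f x‖ₑ ^ 2) +
        2 * (ENNReal.ofReal (t ^ (-m - 1)) * ∫⁻ x in {x | (t, x) ∈ S₃}, ‖f x‖ₑ ^ 2) := by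
    intro t
    rcases le_or_gt t 0 with ht | ht
    · have : {ξ | (t, ξ) ∈ S₁} = ∅ := eq_empty_of_forall_notMem fun ξ (hξ : ‖ξ‖ < t) => by
        linarith [norm_nonneg ξ]
      simp [this]
    · have s₁ : {ξ | (t, ξ) ∈ S₁} = ball 0 t := by
        ext ξ
        simp [hS₁]
      have s₂ : {x | (t, x) ∈ S₂} = closedBall 0 t⁻¹ := by
        ext x
        simp only [hS₂, mem_ofPred_eq, ht, true_and, mem_closedBall_zero_iff]
        rw [← one_div, le_div_iff₀ ht]
      have s₃ : {x | (t, x) ∈ S₃} = (closedBall 0 t⁻¹)ᶜ := by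
        ext x
        simp only [hS₃, mem_ofPred_eq, ht, true_and, mem_compl_iff, mem_closedBall_zero_iff, not_le]
        rw [← one_div, div_lt_iff₀ ht]
      rw [s₁, s₂, s₃]
      refine (mul_le_mul_right (hL f hf hf2 t ht) _).trans (le_of_eq ?_)
      rw [mul_add]
      congr 1
      · rw [← mul_assoc, ← mul_assoc, ← ENNReal.ofReal_mul (by positivity),
          ← ENNReal.ofReal_mul hD.le, mul_left_comm, ← Real.rpow_add ht]
        ring_nf
      · rw [mul_left_comm]
  rw [e₁]
  calc _ ≤ ENNReal.ofReal m * (ENNReal.ofReal D * (ENNReal.ofReal (b - m)⁻¹ *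
        ∫⁻ x, ENNReal.ofReal (‖x‖ ^ m) * ‖f x‖ₑ ^ 2) + 2 * (ENNReal.ofReal m⁻¹ *
        ∫⁻ x, ENNReal.ofReal (‖x‖ ^ m) * ‖f x‖ₑ ^ 2)) := by
        gcongr
        refine (lintegral_mono hpt).trans (le_of_eq ?_)
        rw [← e₂, ← e₃, lintegral_add_right _ ((measurable_mul_setLIntegral (hwm _) hu hM₃).const_mul 2),
          lintegral_const_mul' _ _ ENNReal.ofReal_ne_top,
          lintegral_const_mul' _ _ ENNReal.ofNat_ne_top]
    _ = _ := by
        rw [← mul_assoc, ← mul_assoc, ← add_mul, ← mul_assoc]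
        congr 1
        rw [show (2:ℝ≥0∞) = ENNReal.ofReal 2 by simp, ← ENNReal.ofReal_mul (by positivity),
          ← ENNReal.ofReal_mul (by positivity), ← ENNReal.ofReal_add (by positivity) (by positivity),
          ← ENNReal.ofReal_mul (by positivity)]

end Hardy

open scoped ENNReal Topology FourierTransform Pointwise

section Nonsingular

variable {n : ℕ}

theorem exists_lintegral_one_add_rpow_neg_mul_FT_le (hn : 1 ≤ n) {m : ℝ} (hm : 0 < m)
    (hmn : m < n) :
    ∃ C > 0, ∀ f : EuclideanSpace ℝ (Fin n) → ℂ, Measurable f → Integrable f → MemLp f 2 →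
      ∫⁻ ξ, ENNReal.ofReal (1 + ‖ξ‖ ^ (-m)) * ‖FT n f ξ‖ₑ ^ 2 ≤
        ENNReal.ofReal C * weightedSq m f := by
  obtain ⟨C, hC, hH⟩ := exists_lintegral_norm_rpow_neg_mul_FT_le hn hm hmn
  refine ⟨1 + C, by positivity, fun f hfm hf hf2 => ?_⟩
  have hF : Measurable fun ξ => ‖FT n f ξ‖ₑ ^ 2 :=
    (FT_continuous hf).enorm.measurable.pow_const 2
  have hsplit : ∀ ξ : EuclideanSpace ℝ (Fin n),
      ENNReal.ofReal (1 + ‖ξ‖ ^ (-m)) * ‖FT n f ξ‖ₑ ^ 2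
        = ‖FT n f ξ‖ₑ ^ 2 + ENNReal.ofReal (‖ξ‖ ^ (-m)) * ‖FT n f ξ‖ₑ ^ 2 := fun ξ => by
    rw [ENNReal.ofReal_add zero_le_one (by positivity), add_mul, ENNReal.ofReal_one, one_mul]
  simp_rw [hsplit]
  rw [lintegral_add_left hF, lintegral_enorm_sq_FT_eq hf hf2,
    ENNReal.ofReal_add zero_le_one hC.le, add_mul, ENNReal.ofReal_one, one_mul]
  refine add_le_add (lintegral_mono fun x => ?_) ((hH f hfm hf hf2).trans
    (mul_le_mul_right (lintegral_mono fun x => ?_) _))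
  · refine le_mul_of_one_le_left' (ENNReal.one_le_ofReal.2 ?_)
    exact Real.one_le_rpow (one_le_sqrt_one_add_sq _) hm.le
  · gcongr
    exact le_sqrt_one_add_sq _

/-- A multiplier dominated by `1 + ‖ξ‖^(-m)` is bounded between the weighted spaces. -/
theorem exists_norm_setIntegral_mul_FT_mul_conj_le (hn : 1 ≤ n) {m : ℝ} (hm : 0 < m)
    (hmn : m < n) :
    ∃ C > 0, ∀ (S : Set (EuclideanSpace ℝ (Fin n))) (q : EuclideanSpace ℝ (Fin n) → ℂ) (K : ℝ),
      MeasurableSet S → 0 ≤ K → (∀ ξ ∈ S, ξ ≠ 0 → ‖q ξ‖ ≤ K * (1 + ‖ξ‖ ^ (-m))) →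
      ∀ N M : ℝ, 0 ≤ N → 0 ≤ M → ∀ f g : EuclideanSpace ℝ (Fin n) → ℂ,
      Measurable f → Integrable f → MemLp f 2 → Measurable g → Integrable g → MemLp g 2 →
      weightedSq m f ≤ ENNReal.ofReal (N ^ 2) → weightedSq m g ≤ ENNReal.ofReal (M ^ 2) →
      ‖∫ ξ in S, q ξ * FT n f ξ * (starRingEnd ℂ) (FT n g ξ)‖ ≤ C * K * N * M := by
  obtain ⟨C, hC, hH⟩ := exists_lintegral_one_add_rpow_neg_mul_FT_le hn hm hmn
  have hnt : Nontrivial (EuclideanSpace ℝ (Fin n)) :=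
    Module.nontrivial_of_finrank_pos (R := ℝ) (by rw [finrank_euclideanSpace_fin]; omega)
  refine ⟨C, hC, fun S q K hS hK hq N M hN hM f g hfm hf hf2 hgm hg hg2 hNf hMg => ?_⟩
  set w : EuclideanSpace ℝ (Fin n) → ℝ := fun ξ => √(1 + ‖ξ‖ ^ (-m)) with hw
  have hwm : Measurable fun ξ => ENNReal.ofReal (w ξ) :=
    (((measurable_norm.pow_const (-m)).const_add 1).sqrt).ennreal_ofReal
  have hsq : ∀ (h : EuclideanSpace ℝ (Fin n) → ℂ) (ξ : EuclideanSpace ℝ (Fin n)),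
      (ENNReal.ofReal (w ξ) * ‖FT n h ξ‖ₑ) ^ 2
        = ENNReal.ofReal (1 + ‖ξ‖ ^ (-m)) * ‖FT n h ξ‖ₑ ^ 2 := fun h ξ => by
    rw [mul_pow, ← ENNReal.ofReal_pow (Real.sqrt_nonneg _), Real.sq_sqrt (by positivity)]
  have hCS : ∫⁻ ξ, (ENNReal.ofReal (w ξ) * ‖FT n f ξ‖ₑ) * (ENNReal.ofReal (w ξ) * ‖FT n g ξ‖ₑ)
      ≤ ENNReal.ofReal (C * N * M) := by
    refine (ENNReal.pow_le_pow_left_iff two_ne_zero).1 ?_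
    have hmeas : ∀ h : EuclideanSpace ℝ (Fin n) → ℂ, Integrable h →
        AEMeasurable fun ξ => ENNReal.ofReal (w ξ) * ‖FT n h ξ‖ₑ := fun h hh =>
      (hwm.mul (FT_continuous hh).enorm.measurable).aemeasurable
    refine (lintegral_mul_sq_le (hmeas f hf) (hmeas g hg)).trans ?_
    simp_rw [hsq]
    calc _ ≤ (ENNReal.ofReal C * ENNReal.ofReal (N ^ 2)) *
          (ENNReal.ofReal C * ENNReal.ofReal (M ^ 2)) :=
          mul_le_mul' ((hH f hfm hf hf2).trans (mul_le_mul_right hNf _))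
            ((hH g hgm hg hg2).trans (mul_le_mul_right hMg _))
      _ = _ := by
          rw [← ENNReal.ofReal_mul hC.le, ← ENNReal.ofReal_mul hC.le,
            ← ENNReal.ofReal_mul (by positivity), ← ENNReal.ofReal_pow (by positivity)]
          congr 1
          ring
  have hfin : ‖∫ ξ in S, q ξ * FT n f ξ * (starRingEnd ℂ) (FT n g ξ)‖ₑ
      ≤ ENNReal.ofReal (C * K * N * M) := by
    calc _ ≤ ∫⁻ ξ in S, ‖q ξ * FT n f ξ * (starRingEnd ℂ) (FT n g ξ)‖ₑ :=
          enorm_integral_le_lintegral_enorm _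
      _ ≤ ∫⁻ ξ in S, ENNReal.ofReal K * ((ENNReal.ofReal (w ξ) * ‖FT n f ξ‖ₑ) *
            (ENNReal.ofReal (w ξ) * ‖FT n g ξ‖ₑ)) := by
          refine lintegral_mono_ae ?_
          have hne : ∀ᵐ ξ ∂volume.restrict S, ξ ≠ 0 := ae_restrict_of_ae
            (compl_mem_ae_iff.2 (measure_singleton (0 : EuclideanSpace ℝ (Fin n))))
          filter_upwards [hne, ae_restrict_mem hS] with ξ h0 hξ
          rw [enorm_mul, enorm_mul, RCLike.enorm_conj]
          have : ‖q ξ‖ₑ ≤ ENNReal.ofReal K * (ENNReal.ofReal (w ξ) * ENNReal.ofReal (w ξ)) := by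
            rw [← ENNReal.ofReal_mul (Real.sqrt_nonneg _), Real.mul_self_sqrt (by positivity),
              ← ENNReal.ofReal_mul hK, ← ofReal_norm]
            exact ENNReal.ofReal_le_ofReal (hq ξ hξ h0)
          calc _ ≤ ENNReal.ofReal K * (ENNReal.ofReal (w ξ) * ENNReal.ofReal (w ξ)) *
                ‖FT n f ξ‖ₑ * ‖FT n g ξ‖ₑ := by gcongr
            _ = _ := by ring
      _ ≤ ∫⁻ ξ, ENNReal.ofReal K * ((ENNReal.ofReal (w ξ) * ‖FT n f ξ‖ₑ) *
            (ENNReal.ofReal (w ξ) * ‖FT n g ξ‖ₑ)) := setLIntegral_le_lintegral _ _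
      _ ≤ ENNReal.ofReal K * ENNReal.ofReal (C * N * M) := by
          rw [lintegral_const_mul' _ _ ENNReal.ofReal_ne_top]
          gcongr
      _ = _ := by
          rw [← ENNReal.ofReal_mul hK]
          congr 1
          ring
  rw [← ofReal_norm] at hfin
  exact (ENNReal.ofReal_le_ofReal_iff (by positivity)).1 hfin

theorem sqrt_one_add_sq_rpow_le {m r : ℝ} (hm : 0 < m) (hr : 0 ≤ r) :
    √(1 + r ^ 2) ^ (m - 1) ≤ 2 ^ m * (1 + r ^ m) := by
  have h1 := one_le_sqrt_one_add_sq r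
  refine (Real.rpow_le_rpow_of_exponent_le h1 (by linarith : m - 1 ≤ m)).trans ?_
  have h2 : √(1 + r ^ 2) ≤ 1 + r := by
    rw [Real.sqrt_le_left (by positivity)]
    nlinarith
  rcases le_total r 1 with h | h
  · calc _ ≤ (2 : ℝ) ^ m := by gcongr; linarith
      _ ≤ _ := le_mul_of_one_le_right (by positivity) (by linarith [Real.rpow_nonneg hr m])
  · calc _ ≤ (2 * r) ^ m := by gcongr; linarith
      _ = 2 ^ m * r ^ m := Real.mul_rpow zero_le_two hr
      _ ≤ _ := by gcongr; linarith

/-- Away from the characteristic set the symbol is dominated by `1 + ‖ξ‖^(-m)`. -/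
theorem IsHomSymbol.exists_norm_symbol_le (hn : 1 ≤ n) {a : EuclideanSpace ℝ (Fin n) → ℝ}
    (ha : IsHomSymbol a) {m : ℝ} (hm : 0 < m) :
    ∃ K > 0, ∀ (ζ : ℂ) (ξ : EuclideanSpace ℝ (Fin n)), ξ ≠ 0 → a ξ ^ m ≤ 3 * |ζ.re - a ξ ^ m| →
      ‖((√(1 + ‖ξ‖ ^ 2) ^ (m - 1) : ℝ) : ℂ) * (ζ - ((a ξ ^ m : ℝ) : ℂ))⁻¹‖
        ≤ K * (1 + ‖ξ‖ ^ (-m)) := by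
  obtain ⟨c, C, hc, -, hbd⟩ := ha.exists_bounds hn
  refine ⟨2 ^ m * (3 * (c ^ m)⁻¹), by positivity, fun ζ ξ h0 hζ => ?_⟩
  have hξ : 0 < ‖ξ‖ := norm_pos_iff.2 h0
  have hre : |ζ.re - a ξ ^ m| ≤ ‖ζ - ((a ξ ^ m : ℝ) : ℂ)‖ := by
    simpa using Complex.abs_re_le_norm (ζ - ((a ξ ^ m : ℝ) : ℂ))
  have hA : c ^ m * ‖ξ‖ ^ m ≤ a ξ ^ m := by
    rw [← Real.mul_rpow hc.le hξ.le]
    gcongr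
    exact (hbd ξ).1
  have hinv : ‖ζ - ((a ξ ^ m : ℝ) : ℂ)‖⁻¹ ≤ 3 * (c ^ m)⁻¹ * ‖ξ‖ ^ (-m) := by
    rw [Real.rpow_neg hξ.le, mul_assoc, ← mul_inv, ← inv_inv (3 : ℝ), ← mul_inv]
    refine inv_anti₀ (by positivity) ?_
    linarith
  rw [norm_mul, norm_inv, Complex.norm_real, Real.norm_of_nonneg (by positivity)]
  calc _ ≤ 2 ^ m * (1 + ‖ξ‖ ^ m) * (3 * (c ^ m)⁻¹ * ‖ξ‖ ^ (-m)) := by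
        gcongr
        exact sqrt_one_add_sq_rpow_le hm hξ.le
    _ = _ := by
        rw [Real.rpow_neg hξ.le]
        field_simp
        ring

end Nonsingular

section Schwartz

variable {n : ℕ}

theorem sqrt_one_add_sq_rpow_eq (r s : ℝ) : √(1 + r ^ 2) ^ s = (1 + r ^ 2) ^ (s / 2) := by
  rw [Real.sqrt_eq_rpow, ← Real.rpow_mul (by positivity)]
  congr 1
  ring

theorem weightedSq_eq_eLpNorm_sq (m : ℝ) (f : EuclideanSpace ℝ (Fin n) → ℂ) :
    weightedSq m f
      = eLpNorm (fun x => ((√(1 + ‖x‖ ^ 2) ^ (m / 2) : ℝ) : ℂ) * f x) 2 volume ^ 2 := by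
  rw [eLpNorm_two_sq]
  refine lintegral_congr fun x => ?_
  rw [enorm_mul, mul_pow]
  congr 1
  rw [← ofReal_norm, Complex.norm_real, Real.norm_of_nonneg (by positivity),
    ← ENNReal.ofReal_pow (by positivity), pow_two (_ ^ (m / 2)),
    ← Real.rpow_add (by positivity), add_halves]

theorem exists_schwartzMap_eq_weight_mul (s : ℝ) (f : SchwartzMap (EuclideanSpace ℝ (Fin n)) ℂ) :
    ∃ h : SchwartzMap (EuclideanSpace ℝ (Fin n)) ℂ,
      ∀ x, h x = ((√(1 + ‖x‖ ^ 2) ^ s : ℝ) : ℂ) * f x := by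
  refine ⟨SchwartzMap.smulLeftCLM ℂ
    (fun x : EuclideanSpace ℝ (Fin n) => (1 + ‖x‖ ^ 2) ^ (s / 2)) f, fun x => ?_⟩
  rw [SchwartzMap.smulLeftCLM_apply_apply
    (Function.hasTemperateGrowth_one_add_norm_sq_rpow _ (s / 2)), sqrt_one_add_sq_rpow_eq,
    Complex.real_smul]

theorem weightedSq_schwartz (m : ℝ) (f : SchwartzMap (EuclideanSpace ℝ (Fin n)) ℂ) :
    weightedSq m f = ENNReal.ofReal
      ((eLpNorm (fun x => ((√(1 + ‖x‖ ^ 2) ^ (m / 2) : ℝ) : ℂ) * f x) 2 volume).toReal ^ 2) := by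
  obtain ⟨h, hh⟩ := exists_schwartzMap_eq_weight_mul (m / 2) f
  have hfin := (h.memLp 2).eLpNorm_ne_top
  rw [show (h : EuclideanSpace ℝ (Fin n) → ℂ) = _ from funext hh] at hfin
  rw [weightedSq_eq_eLpNorm_sq, ENNReal.ofReal_pow ENNReal.toReal_nonneg,
    ENNReal.ofReal_toReal hfin]

theorem integrable_resolvent_symbol_mul_FT {a : EuclideanSpace ℝ (Fin n) → ℝ} (ha : Continuous a)
    {m : ℝ} (hm : 1 ≤ m) {ζ : ℂ} (hζ : ζ.im ≠ 0)
    (f : SchwartzMap (EuclideanSpace ℝ (Fin n)) ℂ) :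
    Integrable fun ξ => ((√(1 + ‖ξ‖ ^ 2) ^ (m - 1) : ℝ) : ℂ) * (ζ - ((a ξ ^ m : ℝ) : ℂ))⁻¹ *
      FT n (fun y => f y) ξ := by
  obtain ⟨h, hh⟩ := exists_schwartzMap_eq_weight_mul (m - 1) (𝓕 f)
  have hpi : (1 : ℝ) ≤ 2 * π := by linarith [Real.pi_gt_three]
  have him : ∀ ξ, |ζ.im| ≤ ‖ζ - ((a ξ ^ m : ℝ) : ℂ)‖ := fun ξ => by
    simpa using Complex.abs_im_le_norm (ζ - ((a ξ ^ m : ℝ) : ℂ))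
  have hz : ∀ ξ, ζ - ((a ξ ^ m : ℝ) : ℂ) ≠ 0 := fun ξ h0 => by
    have := him ξ
    rw [h0, norm_zero] at this
    exact hζ (abs_nonpos_iff.1 this)
  have hcont : Continuous fun ξ => ((√(1 + ‖ξ‖ ^ 2) ^ (m - 1) : ℝ) : ℂ) *
      (ζ - ((a ξ ^ m : ℝ) : ℂ))⁻¹ * FT n (fun y => f y) ξ := by
    refine ((Complex.continuous_ofReal.comp (Continuous.rpow_const (by fun_prop) fun x =>
      Or.inr (by linarith))).mul (Continuous.inv₀ (continuous_const.sub
      (Complex.continuous_ofReal.comp (ha.rpow_const fun x => Or.inr (by linarith)))) hz)).mul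
      (FT_continuous f.integrable)
  have hint : Integrable fun ξ : EuclideanSpace ℝ (Fin n) => h ((2 * π)⁻¹ • ξ) :=
    h.integrable.comp_smul (by positivity)
  refine (hint.norm.const_mul ((2 * π) ^ (m - 1) * |ζ.im|⁻¹ * (2 * π) ^ (-(n : ℝ) / 2))).mono'
    hcont.aestronglyMeasurable (ae_of_all _ fun ξ => ?_)
  have hscale : √(1 + ‖ξ‖ ^ 2) ≤ 2 * π * √(1 + ‖(2 * π)⁻¹ • ξ‖ ^ 2) := by
    rw [← Real.sqrt_sq (by positivity : (0:ℝ) ≤ 2 * π), ← Real.sqrt_mul (by positivity),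
      Real.sqrt_sq (by positivity)]
    refine Real.sqrt_le_sqrt ?_
    rw [norm_smul, Real.norm_of_nonneg (by positivity), mul_add,
      ← mul_pow (2 * π) (_ * _), mul_inv_cancel_left₀ (by positivity)]
    nlinarith
  rw [hh, norm_mul, norm_mul, norm_mul, norm_inv, FT_eq_fourier, norm_smul, Complex.norm_real,
    Complex.norm_real, Real.norm_of_nonneg (by positivity), Real.norm_of_nonneg (by positivity),
    Real.norm_of_nonneg (by positivity), SchwartzMap.fourier_coe]
  calc _ ≤ (2 * π * √(1 + ‖(2 * π)⁻¹ • ξ‖ ^ 2)) ^ (m - 1) * |ζ.im|⁻¹ *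
        ((2 * π) ^ (-(n : ℝ) / 2) * ‖𝓕 (f : EuclideanSpace ℝ (Fin n) → ℂ) ((2 * π)⁻¹ • ξ)‖) := by
        gcongr
        · exact him ξ
    _ = _ := by
        rw [Real.mul_rpow (by positivity) (by positivity)]
        ring

end Schwartz

section Assembly

variable {n : ℕ}

/-- The contribution of the frequencies near the characteristic set `p(ξ) = Re ζ`. -/
theorem exists_norm_integral_smul_shell_le {a : EuclideanSpace ℝ (Fin n) → ℝ} {m : ℝ} (hn : 1 ≤ n)
    (hm : 1 < m) (hmn : m < n) (ha : IsHomSymbol a) :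
    ∃ C > 0, ∀ ζ : ℂ, ζ.im ≠ 0 → ∀ s N M : ℝ, 0 < s → ζ.re = s ^ m → 0 ≤ N → 0 ≤ M →
      ∀ f g : EuclideanSpace ℝ (Fin n) → ℂ, Integrable f → MemLp f 2 → Integrable g → MemLp g 2 →
      weightedSq m f ≤ ENNReal.ofReal (N ^ 2) → weightedSq m g ≤ ENNReal.ofReal (M ^ 2) →
      ‖∫ ξ in s • shell a m, ((√(1 + ‖ξ‖ ^ 2) ^ (m - 1) : ℝ) : ℂ) *
          (ζ - ((a ξ ^ m : ℝ) : ℂ))⁻¹ * FT n f ξ * (starRingEnd ℂ) (FT n g ξ)‖ ≤ C * N * M := by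
  obtain ⟨C, hC, hB⟩ := exists_norm_integral_shell_le hn hm hmn ha
  refine ⟨C, hC, fun ζ hζ s N M hs hre hN hM f g hf hf2 hg hg2 hNf hMg => ?_⟩
  have hsm : 0 < s ^ m := by positivity
  have hsn : 0 < s ^ n := by positivity
  set z : ℂ := ((s ^ m)⁻¹ : ℝ) * ζ with hz
  have hzre : z.re = 1 := by
    rw [hz, Complex.re_ofReal_mul, hre, inv_mul_cancel₀ hsm.ne']
  have hzim : z.im ≠ 0 := by
    rw [hz, Complex.im_ofReal_mul]
    exact mul_ne_zero (by positivity) hζ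
  have key := hB z hzre hzim s N M hs hN hM f g hf hf2 hg hg2 hNf hMg
  have hcv := Measure.setIntegral_comp_smul_of_pos volume (fun ξ : EuclideanSpace ℝ (Fin n) =>
    ((√(1 + ‖ξ‖ ^ 2) ^ (m - 1) : ℝ) : ℂ) * (ζ - ((a ξ ^ m : ℝ) : ℂ))⁻¹ * FT n f ξ *
      (starRingEnd ℂ) (FT n g ξ)) (shell a m) hs
  have hpt : ∀ ξ, ((√(1 + ‖s • ξ‖ ^ 2) ^ (m - 1) : ℝ) : ℂ) *
      (ζ - ((a (s • ξ) ^ m : ℝ) : ℂ))⁻¹ * FT n f (s • ξ) * (starRingEnd ℂ) (FT n g (s • ξ))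
      = (((s ^ m)⁻¹ : ℝ) : ℂ) * ((z - ((a ξ ^ m : ℝ) : ℂ))⁻¹ *
        ((((√(1 + ‖s • ξ‖ ^ 2) ^ (m - 1) : ℝ) : ℂ) * FT n f (s • ξ)) *
            (starRingEnd ℂ) (FT n g (s • ξ)))) := fun ξ => by
    have e : ζ - ((a (s • ξ) ^ m : ℝ) : ℂ) = ((s ^ m : ℝ) : ℂ) * (z - ((a ξ ^ m : ℝ) : ℂ)) := by
      have h0 : ((s ^ m : ℝ) : ℂ) ≠ 0 := Complex.ofReal_ne_zero.2 hsm.ne'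
      rw [ha.hom s hs, Real.mul_rpow hs.le (ha.nonneg ξ), hz, mul_sub, Complex.ofReal_inv,
        mul_inv_cancel_left₀ h0, Complex.ofReal_mul]
    rw [e, mul_inv, Complex.ofReal_inv]
    ring
  simp_rw [hpt] at hcv
  rw [integral_const_mul, finrank_euclideanSpace_fin] at hcv
  have hnorm := congrArg norm hcv
  rw [norm_mul, norm_smul, Complex.norm_real, Real.norm_of_nonneg (by positivity),
    Real.norm_of_nonneg (by positivity)] at hnorm
  rw [inv_mul_eq_div, inv_mul_eq_div, div_eq_div_iff hsm.ne' hsn.ne'] at hnorm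
  refine le_of_mul_le_mul_right ?_ hsm
  rw [← hnorm]
  refine (mul_le_mul_of_nonneg_right key hsn.le).trans (le_of_eq ?_)
  field_simp

/-- Off the dilated shell the symbol does not exceed three times its distance to `Re ζ`. -/
theorem IsHomSymbol.rpow_le_of_notMem_smul_shell {a : EuclideanSpace ℝ (Fin n) → ℝ}
    (ha : IsHomSymbol a) {m s : ℝ} (hs : 0 < s) {ξ : EuclideanSpace ℝ (Fin n)}
    (hξ : ξ ∉ s • shell a m) : a ξ ^ m ≤ 3 * |s ^ m - a ξ ^ m| := by
  have hsm : 0 < s ^ m := by positivity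
  have e : a ξ ^ m = s ^ m * a (s⁻¹ • ξ) ^ m := by
    rw [← Real.mul_rpow hs.le (ha.nonneg _), ← ha.hom s hs, smul_inv_smul₀ hs.ne']
  have h0 : 0 ≤ a (s⁻¹ • ξ) ^ m := Real.rpow_nonneg (ha.nonneg _) m
  rw [mem_smul_set_iff_inv_smul_mem₀ hs.ne'] at hξ
  have h : a (s⁻¹ • ξ) ^ m ≤ 1 / 2 ∨ 3 / 2 ≤ a (s⁻¹ • ξ) ^ m := by
    by_contra! h
    exact hξ h
  rw [e, ← mul_one_sub, abs_mul, abs_of_pos hsm, mul_left_comm]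
  refine mul_le_mul_of_nonneg_left ?_ hsm.le
  rcases h with h | h
  · linarith [le_abs_self (1 - a (s⁻¹ • ξ) ^ m)]
  · linarith [neg_abs_le (1 - a (s⁻¹ • ξ) ^ m)]

end Assembly

theorem resolvent_type_II (n : ℕ) (hn : 2 ≤ n) (m : ℝ) (hm1 : 1 < m) (hmn : m < n)
    (a : EuclideanSpace ℝ (Fin n) → ℝ)
    (ha_cont : Continuous a)
    (ha_smooth : ContDiffOn ℝ (⊤ : ℕ∞) a {(0 : EuclideanSpace ℝ (Fin n))}ᶜ)
    (ha_hom : ∀ t : ℝ, 0 < t → ∀ ξ, a (t • ξ) = t * a ξ)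
    (ha_pos : ∀ ξ : EuclideanSpace ℝ (Fin n), ξ ≠ 0 → 0 < a ξ) :
    ∃ C > 0, ∀ ζ : ℂ, ζ.im ≠ 0 → ∀ f g : SchwartzMap (EuclideanSpace ℝ (Fin n)) ℂ,
      ‖∫ x : EuclideanSpace ℝ (Fin n),
          mult n (fun ξ => ((Real.sqrt (1 + ‖ξ‖ ^ 2) ^ (m - 1) : ℝ) : ℂ) *
              (ζ - ((a ξ ^ m : ℝ) : ℂ))⁻¹)
            (fun y => f y) x * (starRingEnd ℂ) (g x)‖
        ≤ C * (eLpNorm (fun x => ((Real.sqrt (1 + ‖x‖ ^ 2) ^ (m / 2) : ℝ) : ℂ) * f x) 2 volume).toReal *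
            (eLpNorm (fun x => ((Real.sqrt (1 + ‖x‖ ^ 2) ^ (m / 2) : ℝ) : ℂ) * g x) 2 volume).toReal := by
  have hn1 : 1 ≤ n := by omega
  have hm0 : 0 < m := by linarith
  have ha : IsHomSymbol a := ⟨ha_cont, ha_hom, ha_pos⟩
  obtain ⟨C₁, hC₁, hsing⟩ := exists_norm_integral_smul_shell_le hn1 hm1 hmn ha
  obtain ⟨C₂, hC₂, hreg⟩ := exists_norm_setIntegral_mul_FT_mul_conj_le hn1 hm0 hmn
  obtain ⟨K, hK, hsymb⟩ := ha.exists_norm_symbol_le hn1 hm0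
  refine ⟨C₁ + C₂ * K, by positivity, fun ζ hζ f g => ?_⟩
  set N := (eLpNorm (fun x => ((√(1 + ‖x‖ ^ 2) ^ (m / 2) : ℝ) : ℂ) * f x) 2 volume).toReal with hN
  set M := (eLpNorm (fun x => ((√(1 + ‖x‖ ^ 2) ^ (m / 2) : ℝ) : ℂ) * g x) 2 volume).toReal with hM
  have hN0 : 0 ≤ N := ENNReal.toReal_nonneg
  have hM0 : 0 ≤ M := ENNReal.toReal_nonneg
  have hNf : weightedSq m (fun y => f y) ≤ ENNReal.ofReal (N ^ 2) := (weightedSq_schwartz m f).le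
  have hMg : weightedSq m (fun y => g y) ≤ ENNReal.ofReal (M ^ 2) := (weightedSq_schwartz m g).le
  have hqf := integrable_resolvent_symbol_mul_FT ha_cont hm1.le hζ f
  rw [integral_mult_mul_conj _ _ (fun y => g y) hqf g.integrable]
  have hregS := fun (S : Set (EuclideanSpace ℝ (Fin n))) (hS : MeasurableSet S)
      (h : ∀ ξ ∈ S, a ξ ^ m ≤ 3 * |ζ.re - a ξ ^ m|) =>
    hreg S (fun ξ => ((√(1 + ‖ξ‖ ^ 2) ^ (m - 1) : ℝ) : ℂ) * (ζ - ((a ξ ^ m : ℝ) : ℂ))⁻¹) K hS hK.le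
      (fun ξ hξ h0 => hsymb ζ ξ h0 (h ξ hξ)) N M hN0 hM0 (fun y => f y) (fun y => g y)
      f.continuous.measurable f.integrable (f.memLp 2) g.continuous.measurable g.integrable
      (g.memLp 2) hNf hMg
  rcases le_or_gt ζ.re 0 with hre | hre
  · have h := hregS univ MeasurableSet.univ fun ξ _ => by
      have h0 : 0 ≤ a ξ ^ m := Real.rpow_nonneg (ha.nonneg ξ) m
      linarith [neg_abs_le (ζ.re - a ξ ^ m)]
    rw [setIntegral_univ] at h
    refine h.trans ?_
    gcongr
    linarith
  · have hs : 0 < ζ.re ^ m⁻¹ := by positivity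
    have hsm : ζ.re = (ζ.re ^ m⁻¹) ^ m := by rw [Real.rpow_inv_rpow hre.le hm0.ne']
    set s := ζ.re ^ m⁻¹ with hsdef
    have hmS : MeasurableSet (s • shell a m) :=
      (measurableSet_shell ha_cont hm0).const_smul₀ s
    have h1 := hsing ζ hζ s N M hs hsm hN0 hM0 (fun y => f y) (fun y => g y)
      f.integrable (f.memLp 2) g.integrable (g.memLp 2) hNf hMg
    have h2 := hregS (s • shell a m)ᶜ hmS.compl fun ξ hξ => by
      have h := ha.rpow_le_of_notMem_smul_shell hs hξ
      rwa [← hsm] at h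
    have hint := hqf.mul_bdd (c := ∫ x, ‖g x‖) (g := fun ξ => (starRingEnd ℂ) (FT n (fun y => g y) ξ))
      (Complex.continuous_conj.comp (FT_continuous g.integrable)).aestronglyMeasurable
      (ae_of_all _ fun ξ => by
        rw [RCLike.norm_conj]
        exact norm_FT_le _ ξ)
    rw [← integral_add_compl hmS hint]
    refine (norm_add_le _ _).trans ((add_le_add h1 h2).trans (le_of_eq ?_))
    ring
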